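/- arXiv:2103.12008 — 2 statements merged into one kernel-verified Lean document; each statement's English description precedes it below -/
import Mathlib

section
/- Let (S,𝔪) be an unramified regular local ring of mixed characteristic p ≥ 3. Assume S[ω] and S[μ] are integrally closed (i.e. f,g ∉ S^{p∧p²}), h₁ ≠ 0, h₂ ≠ 0, that fg^i ∈ S^{p∧p²} for some 1 ≤ i ≤ p−1, and that the ideal (p,f,g) of S has grade three. Set P := (p, ω−h₁, μ−h₂)A and I := pA + (ωμ^i − h₁h₂^i)·P^{p−2}. Then M := (A :_K I·P) is an R-module (i.e. R·M ⊆ M) and depth_S(M) = dim S; hence M is a birational maximal Cohen-Macaulay module over R. -/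
set_option synthInstance.maxHeartbeats 1000000
set_option maxHeartbeats 1600000

/-- A height one prime ideal of a commutative ring. -/
def IsHeightOnePrime {S : Type*} [CommRing S] (P : Ideal S) : Prop :=
  ∃ hP : P.IsPrime, Order.height (⟨P, hP⟩ : PrimeSpectrum S) = 1

/-- `c ∈ S` is square free if `P S_P = c S_P` for every height one prime `P` containing `c`. -/
def PaperSquarefree {S : Type*} [CommRing S] (c : S) : Prop :=
  ∀ (P : Ideal S) (hP : P.IsPrime), Order.height (⟨P, hP⟩ : PrimeSpectrum S) = 1 → c ∈ P →
    haveI := hP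
    Ideal.map (algebraMap S (Localization.AtPrime P)) P =
      Ideal.span {algebraMap S (Localization.AtPrime P) c}

/-- Two elements satisfy `𝒜₁` if no height one prime contains both of them. -/
def SatisfiesA1 {S : Type*} [CommRing S] (f g : S) : Prop :=
  ∀ P : Ideal S, IsHeightOnePrime P → ¬(f ∈ P ∧ g ∈ P)

/-- The depth of a module over a local ring: the supremum of the lengths of
regular sequences on `M` contained in the maximal ideal. -/
noncomputable def modDepth (S : Type*) [CommRing S] [IsLocalRing S]
    (M : Type*) [AddCommGroup M] [Module S M] : ℕ∞ :=
  sSup {n : ℕ∞ | ∃ rs : List S, (rs.length : ℕ∞) = n ∧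
    (∀ r ∈ rs, r ∈ IsLocalRing.maximalIdeal S) ∧ RingTheory.Sequence.IsRegular M rs}

/-- A commutative ring is Cohen-Macaulay if each of its localizations at a prime
has depth equal to its Krull dimension. -/
def IsCMRing (R : Type*) [CommRing R] : Prop :=
  ∀ (Q : Ideal R) (hQ : Q.IsPrime),
    haveI := hQ
    (modDepth (Localization.AtPrime Q) (Localization.AtPrime Q) : WithBot ℕ∞) =
      ringKrullDim (Localization.AtPrime Q)

/-- The `n`-th symbolic power of a prime ideal `P`, i.e. `Pⁿ A_P ∩ A`. -/
noncomputable def symbPow {A : Type*} [CommRing A] (P : Ideal A) (hP : P.IsPrime) (n : ℕ) :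
    Ideal A :=
  haveI := hP
  Ideal.comap (algebraMap A (Localization.AtPrime P))
    (Ideal.map (algebraMap A (Localization.AtPrime P)) (P ^ n))

/-- `ω`, as an element of the subalgebra `A = S[ω,μ]`. -/
noncomputable def omegaA {S : Type*} [CommRing S] {K : Type*} [Field K] [Algebra S K]
    (ω μ : K) : Algebra.adjoin S ({ω, μ} : Set K) :=
  ⟨ω, Algebra.subset_adjoin (Set.mem_insert _ _)⟩

/-- `μ`, as an element of the subalgebra `A = S[ω,μ]`. -/
noncomputable def muA {S : Type*} [CommRing S] {K : Type*} [Field K] [Algebra S K]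
    (ω μ : K) : Algebra.adjoin S ({ω, μ} : Set K) :=
  ⟨μ, Algebra.subset_adjoin (Set.mem_insert_of_mem _ rfl)⟩

/-- The ideal `P = (p, ω−h₁, μ−h₂)` of `A = S[ω,μ]`. -/
noncomputable def Pid {S : Type*} [CommRing S] {K : Type*} [Field K] [Algebra S K]
    (p : ℕ) (ω μ : K) (h₁ h₂ : S) : Ideal (Algebra.adjoin S ({ω, μ} : Set K)) :=
  Ideal.span {(p : Algebra.adjoin S ({ω, μ} : Set K)),
    omegaA ω μ - algebraMap S _ h₁, muA ω μ - algebraMap S _ h₂}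

/-- The colon module `(A :_K N) = {x ∈ K : x·N ⊆ A}`, as an `S`-submodule of `K`. -/
noncomputable def colonSubmodule (S : Type*) [CommRing S] (K : Type*) [Field K] [Algebra S K]
    (A : Subalgebra S K) (N : Set K) : Submodule S K where
  carrier := {x : K | ∀ z ∈ N, x * z ∈ A}
  add_mem' := fun hx hy z hz => by
    simpa [add_mul] using add_mem (hx z hz) (hy z hz)
  zero_mem' := fun z hz => by simpa using A.zero_mem
  smul_mem' := fun c x hx z hz => by
    rw [Algebra.smul_def, mul_assoc]
    exact mul_mem (A.algebraMap_mem c) (hx z hz)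

/-- `M` admits a free resolution `0 → Sⁿ → Sᵐ → M → 0`; for a finitely generated
module over a Noetherian local ring this says exactly `pd_S(M) ≤ 1`. -/
def HasFreeResLengthLE1 (S : Type*) [CommRing S] (M : Type*) [AddCommGroup M] [Module S M] :
    Prop :=
  ∃ (n m : ℕ) (φ : (Fin n → S) →ₗ[S] (Fin m → S)) (ψ : (Fin m → S) →ₗ[S] M),
    Function.Injective φ ∧ Function.Surjective ψ ∧ LinearMap.range φ = LinearMap.ker ψ

/-- The ideal `Q` contains an `S`-regular sequence of length three, i.e. `Q` has grade
(at least) three. -/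
def ContainsRegSeq3 (S : Type*) [CommRing S] (Q : Ideal S) : Prop :=
  ∃ rs : List S, rs.length = 3 ∧ (∀ r ∈ rs, r ∈ Q) ∧ RingTheory.Sequence.IsRegular S rs

/-!
Put `X = ω - h₁`, `Y = μ - h₂`, `v = ωμ ^ i - h₁h₂ ^ i` and `J = I * P = (p, v P ^ (p - 2)) P`. The
grade hypothesis and `fg ^ i ∈ S^{p∧p²}` force `a ≡ -i d h₁ ^ p` and `b ≡ d h₂ ^ p` modulo `p`, for
one and the same `d`.

*Depth.* `A` is `S`-free on the monomials `X ^ j * Y ^ k` with `j, k < p`, and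
`(A :_K J) = p⁻² (p²A : J)`. Since `v ≡ h₂ ^ (i - 1) * (h₂ X + i h₁ Y)` modulo `(X, Y) ^ 2`,
counting orders shows that `(p²A : J)` is spanned by the `p²` elements `p² X ^ j * Y ^ k` or
`p X ^ j * Y ^ k`, according to whether `j + k` is less than `p - 1` or not, except that the socle
monomial gives `X ^ (p - 1) * Y ^ (p - 1) + p D`. The congruences on `a` and
`b` are what makes a correction `D` of order `p - 2` exist. Hence `(A :_K J)` is `S`-free.

*Stability under `R`.* The different of `W ^ p - f` gives `f p R ⊆ A`, likewise `g p R ⊆ A`, and so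
`p R ⊆ A`, because `f` is regular modulo `g`. Since `A` is `S`-free, it therefore suffices to work
over the discrete valuation ring `V = S_(p)`. There `p` is `Y ^ p` up to a unit, `J` is spanned by
the monomials `v ^ j * Y ^ k` of degree at least `p` other than `Y ^ p`, and
`V[Y, v / Y, v ^ (p - 1) / Y ^ p]` is integrally closed and maps this span to itself.
-/

section RegularLocalRing

open IsLocalRing RingTheory.Sequence
open scoped Pointwise

universe u

variable {R : Type u} [CommRing R]

section

variable [IsLocalRing R]

lemma maximalIdeal_quotient_eq_map (I : Ideal R) [IsLocalRing (R ⧸ I)] :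
    maximalIdeal (R ⧸ I) = (maximalIdeal R).map (Ideal.Quotient.mk I) := by
  have hmax := Ideal.comap_isMaximal_of_surjective (Ideal.Quotient.mk I)
    Ideal.Quotient.mk_surjective (K := maximalIdeal (R ⧸ I))
  rw [← eq_maximalIdeal hmax, Ideal.map_comap_of_surjective _ Ideal.Quotient.mk_surjective]

lemma exists_isWeaklyRegular_cons_of_quotient [IsDomain R] {x : R} (hx : x ∈ maximalIdeal R)
    (hx0 : x ≠ 0) [IsLocalRing (R ⧸ Ideal.span {x})] {rs : List (R ⧸ Ideal.span {x})}
    (hrs : ∀ r ∈ rs, r ∈ maximalIdeal (R ⧸ Ideal.span {x}))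
    (hreg : IsWeaklyRegular (R ⧸ Ideal.span {x}) rs) :
    ∃ ts : List R, ts.length = rs.length + 1 ∧ (∀ r ∈ ts, r ∈ maximalIdeal R) ∧
      IsWeaklyRegular R ts := by
  obtain ⟨ts, rfl⟩ := (Ideal.Quotient.mk_surjective (I := Ideal.span {x})).list_map rs
  refine ⟨x :: ts, by simp, List.forall_mem_cons.2 ⟨hx, fun r hr ↦ ?_⟩, ?_⟩
  · have hr' := (mem_maximalIdeal _).1 (hrs _ (List.mem_map_of_mem hr))
    exact fun hu ↦ hr' (hu.map _)
  · have htop : Ideal.span {x} = x • (⊤ : Ideal R) := by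
      simp [← Submodule.ideal_span_singleton_smul]
    refine (isWeaklyRegular_cons_iff _ _ _).2 ⟨fun a b hab ↦ mul_left_cancel₀ hx0 hab, ?_⟩
    exact (LinearEquiv.isWeaklyRegular_congr (Submodule.quotEquivOfEq _ _ htop) ts).1
      ((isWeaklyRegular_map_algebraMap_iff (S := R ⧸ Ideal.span {x}) _ ts).1 hreg)

variable [IsNoetherianRing R]

lemma exists_span_insert_eq_maximalIdeal {x : R} (hx : x ∈ maximalIdeal R)
    (hx2 : x ∉ maximalIdeal R ^ 2) :
    ∃ t : Finset R, t.card + 1 = (maximalIdeal R).spanFinrank ∧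
      Ideal.span (insert x (t : Set R)) = maximalIdeal R := by
  classical
  have hfg : (maximalIdeal R).FG := IsNoetherian.noetherian _
  have hfin := Submodule.FG.finite_generators hfg
  set s := hfin.toFinset with hs
  have hspan : Ideal.span (s : Set R) = maximalIdeal R := by
    rw [hs, hfin.coe_toFinset]
    exact Submodule.span_generators _
  have hcard : s.card = (maximalIdeal R).spanFinrank := by
    rw [hs, ← Set.ncard_eq_toFinset_card _ hfin, Submodule.FG.generators_ncard hfg]
  obtain ⟨c, -, hc⟩ := Submodule.mem_span_finset.1 (hspan.symm ▸ hx)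
  obtain ⟨j, hj, hcj⟩ : ∃ j ∈ s, IsUnit (c j) := by
    by_contra! hcon
    refine hx2 (hc ▸ pow_two (maximalIdeal R) ▸ Ideal.sum_mem _ fun j hj ↦ ?_)
    exact Ideal.mul_mem_mul ((mem_maximalIdeal _).2 (hcon j hj)) (hspan ▸ Ideal.subset_span hj)
  refine ⟨s.erase j, by rw [Finset.card_erase_add_one hj, hcard], le_antisymm ?_ ?_⟩
  · refine Ideal.span_le.2 (Set.insert_subset hx fun k hk ↦ ?_)
    exact hspan ▸ Ideal.subset_span (Finset.mem_of_mem_erase hk)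
  · have hmem (k : R) (hk : k ∈ s.erase j) :
        k ∈ Ideal.span (insert x (s.erase j : Set R)) :=
      Ideal.subset_span (Set.mem_insert_of_mem _ hk)
    rw [← hspan, Ideal.span_le]
    intro k hk
    obtain rfl | hkj := eq_or_ne k j
    · refine (Ideal.unit_mul_mem_iff_mem _ hcj).1 ?_
      rw [← smul_eq_mul, eq_sub_of_add_eq ((Finset.add_sum_erase s _ hk).trans hc)]
      exact sub_mem (Ideal.subset_span (Set.mem_insert _ _))
        (Ideal.sum_mem _ fun k hk ↦ Ideal.mul_mem_left _ _ (hmem k hk))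
    · exact hmem k (Finset.mem_erase.2 ⟨hkj, hk⟩)

lemma spanFinrank_maximalIdeal_quotient_add_one_le {x : R} (hx : x ∈ maximalIdeal R)
    (hx2 : x ∉ maximalIdeal R ^ 2) [IsLocalRing (R ⧸ Ideal.span {x})] :
    (maximalIdeal (R ⧸ Ideal.span {x})).spanFinrank + 1 ≤ (maximalIdeal R).spanFinrank := by
  classical
  obtain ⟨t, hcard, hspan⟩ := exists_span_insert_eq_maximalIdeal hx hx2
  have hspan' : maximalIdeal (R ⧸ Ideal.span {x}) =
      Ideal.span (t.image (Ideal.Quotient.mk (Ideal.span {x})) : Set (R ⧸ Ideal.span {x})) := by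
    rw [maximalIdeal_quotient_eq_map, ← hspan, Ideal.map_span, Set.image_insert_eq,
      Ideal.Quotient.eq_zero_iff_mem.2 (Ideal.mem_span_singleton_self x), Ideal.span_insert_zero,
      Finset.coe_image]
  have hle := Submodule.spanFinrank_span_le_ncard_of_finite (R := R ⧸ Ideal.span {x})
    (t.image (Ideal.Quotient.mk (Ideal.span {x}))).finite_toSet
  rw [Set.ncard_coe_finset] at hle
  rw [← hcard, hspan']
  exact Nat.succ_le_succ (hle.trans Finset.card_image_le)

lemma exists_mem_maximalIdeal_notMem_sq_notMem_minimalPrimes (hR : 0 < ringKrullDim R) :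
    ∃ x ∈ maximalIdeal R, x ∉ maximalIdeal R ^ 2 ∧ ∀ q ∈ minimalPrimes R, x ∉ q := by
  have hsq : ¬maximalIdeal R ≤ maximalIdeal R ^ 2 := fun hle ↦ by
    have hbot : maximalIdeal R = ⊥ :=
      Submodule.eq_bot_of_le_smul_of_le_jacobson_bot (maximalIdeal R) (maximalIdeal R)
        (IsNoetherian.noetherian _) (by rwa [smul_eq_mul, ← pow_two])
        (by rw [jacobson_eq_maximalIdeal _ bot_ne_top])
    exact hR.ne' (ringKrullDim_eq_zero_of_isField (isField_iff_maximalIdeal_eq.2 hbot))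
  have hmin (q : Ideal R) (hq : q ∈ minimalPrimes R) : ¬maximalIdeal R ≤ q := fun hle ↦ by
    rw [← maximalIdeal_height_eq_ringKrullDim, Ideal.height_eq_zero_iff.2] at hR
    · exact lt_irrefl _ hR
    · rwa [← (le_maximalIdeal hq.1.1.ne_top).antisymm hle]
  have hunion := (Ideal.subset_union_prime_finite (f := id) (I := maximalIdeal R)
    ((minimalPrimes.finite_of_isNoetherianRing R).insert (maximalIdeal R ^ 2))
    (maximalIdeal R ^ 2) (maximalIdeal R ^ 2)
    fun i hi hne _ ↦ (hi.resolve_left hne).1.1).not.2 (by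
      rintro ⟨i, rfl | hi, hle⟩
      exacts [hsq hle, hmin i hi hle])
  obtain ⟨x, hx, hxU⟩ := Set.not_subset.1 hunion
  refine ⟨x, hx, fun h ↦ hxU (Set.mem_biUnion (Set.mem_insert _ _) h), fun q hq h ↦ hxU ?_⟩
  exact Set.mem_biUnion (Set.mem_insert_of_mem _ hq) h

lemma isDomain_of_isPrime_span_singleton {x : R} (hx : x ∈ maximalIdeal R)
    (hmin : ∀ q ∈ minimalPrimes R, x ∉ q) (hp : (Ideal.span {x}).IsPrime) : IsDomain R := by
  obtain ⟨q, hq, hqx⟩ := Ideal.exists_minimalPrimes_le (I := ⊥) (J := Ideal.span {x}) bot_le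
  have hqp : q.IsPrime := hq.1.1
  have hqbot : q = ⊥ := by
    refine Submodule.eq_bot_of_le_smul_of_le_jacobson_bot (maximalIdeal R) q
      (IsNoetherian.noetherian _) (fun y hy ↦ ?_) (by rw [jacobson_eq_maximalIdeal _ bot_ne_top])
    obtain ⟨c, rfl⟩ := Ideal.mem_span_singleton'.1 (hqx hy)
    rw [mul_comm c]
    exact Ideal.mul_mem_mul hx ((hqp.mem_or_mem hy).resolve_right (hmin q hq))
  rw [hqbot] at hqp
  exact .of_bot_isPrime R

end

lemma isRegularLocalRing_quotient_span_singleton [IsRegularLocalRing R] {x : R}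
    (hx : x ∈ maximalIdeal R) (hx2 : x ∉ maximalIdeal R ^ 2) :
    IsRegularLocalRing (R ⧸ Ideal.span {x}) ∧
      ringKrullDim (R ⧸ Ideal.span {x}) + 1 = ringKrullDim R := by
  have : Nontrivial (R ⧸ Ideal.span {x}) :=
    Ideal.Quotient.nontrivial_iff.2 fun h ↦ hx (Ideal.span_singleton_eq_top.1 h)
  have : IsLocalRing (R ⧸ Ideal.span {x}) :=
    .of_surjective' (Ideal.Quotient.mk _) Ideal.Quotient.mk_surjective
  have hgen : ((maximalIdeal (R ⧸ Ideal.span {x})).spanFinrank : WithBot ℕ∞) + 1 ≤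
      ringKrullDim R := by
    rw [← IsRegularLocalRing.spanFinrank_maximalIdeal]
    exact_mod_cast spanFinrank_maximalIdeal_quotient_add_one_le hx hx2
  have hdim : ringKrullDim R ≤ ringKrullDim (R ⧸ Ideal.span {x}) + 1 := by
    simpa using ringKrullDim_le_ringKrullDim_quotient_add_encard {x}
      (by simpa [ringJacobson_eq_maximalIdeal] using hx)
  have hgen' : ((maximalIdeal (R ⧸ Ideal.span {x})).spanFinrank : WithBot ℕ∞) ≤
      ringKrullDim (R ⧸ Ideal.span {x}) :=
    ENat.WithBot.add_le_add_one_right_iff.1 (hgen.trans hdim)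
  refine ⟨.of_spanFinrank_maximalIdeal_le _ hgen', le_antisymm ?_ hdim⟩
  exact (add_le_add_left (ringKrullDim_le_spanFinrank_maximalIdeal _) 1).trans hgen

lemma isDomain_and_exists_isWeaklyRegular [IsRegularLocalRing R] {d : ℕ}
    (hd : ringKrullDim R = d) :
    IsDomain R ∧ ∃ rs : List R, rs.length = d ∧ (∀ r ∈ rs, r ∈ maximalIdeal R) ∧
      IsWeaklyRegular R rs := by
  induction d generalizing R with
  | zero =>
    have hbot : maximalIdeal R = ⊥ := by
      have h := IsRegularLocalRing.spanFinrank_maximalIdeal (R := R)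
      rw [hd] at h
      exact (Submodule.spanFinrank_eq_zero_iff_eq_bot (IsNoetherian.noetherian _)).1
        (by exact_mod_cast h)
    exact ⟨(isField_iff_maximalIdeal_eq.2 hbot).isDomain, [], rfl, by simp, .nil _ _⟩
  | succ d ih =>
    obtain ⟨x, hx, hx2, hmin⟩ := exists_mem_maximalIdeal_notMem_sq_notMem_minimalPrimes (R := R)
      (by rw [hd]; exact_mod_cast d.succ_pos)
    obtain ⟨hQ, hdim⟩ := isRegularLocalRing_quotient_span_singleton hx hx2
    obtain ⟨hdom, rs, hlen, hrs, hreg⟩ := ih (R := R ⧸ Ideal.span {x})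
      (le_antisymm (ENat.WithBot.add_le_add_one_right_iff.1 (hdim.trans hd).le)
        (ENat.WithBot.add_le_add_one_right_iff.1 (hdim.trans hd).ge))
    have hR := isDomain_of_isPrime_span_singleton hx hmin
      ((Ideal.Quotient.isDomain_iff_prime _).1 hdom)
    obtain ⟨ts, htlen, hts⟩ := exists_isWeaklyRegular_cons_of_quotient hx
      (fun h ↦ hx2 (h ▸ zero_mem _)) hrs hreg
    exact ⟨hR, ts, by rw [htlen, hlen], hts⟩

end RegularLocalRing

section Depth

open IsLocalRing RingTheory.Sequence

variable {R : Type*} [CommRing R]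

lemma isRegularLocalRing_of_span_eq_maximalIdeal [IsLocalRing R] [IsNoetherianRing R]
    {s : Finset R} (hs : Ideal.span (s : Set R) = maximalIdeal R)
    (hcard : (s.card : WithBot ℕ∞) = ringKrullDim R) : IsRegularLocalRing R := by
  refine .of_spanFinrank_maximalIdeal_le R ?_
  rw [← hcard, ← hs, ← Set.ncard_coe_finset]
  exact_mod_cast Submodule.spanFinrank_span_le_ncard_of_finite s.finite_toSet

variable (M : Type*) [AddCommGroup M] [Module R M] [Module.Finite R M]

lemma modDepth_le_ringKrullDim [IsLocalRing R] [IsNoetherianRing R] [Nontrivial M] :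
    (modDepth R M : WithBot ℕ∞) ≤ ringKrullDim R := by
  obtain ⟨d, hd⟩ : ∃ d : ℕ∞, (d : WithBot ℕ∞) = ringKrullDim R :=
    WithBot.ne_bot_iff_exists.1 ringKrullDim_ne_bot
  rw [← hd]
  refine WithBot.coe_le_coe.2 (sSup_le ?_)
  rintro _ ⟨rs, rfl, -, hrs⟩
  have hquot := hrs.quot_ofList_smul_nontrivial ⊤
  have hpos : 0 ≤ Module.supportDim R (M ⧸ Ideal.ofList rs • (⊤ : Submodule R M)) :=
    Order.krullDim_nonneg_iff.2 Module.nonempty_support_of_nontrivial.to_subtype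
  have hlen : ((rs.length : ℕ) : WithBot ℕ∞) ≤ ringKrullDim R :=
    calc ((rs.length : ℕ) : WithBot ℕ∞)
        ≤ Module.supportDim R (M ⧸ Ideal.ofList rs • (⊤ : Submodule R M)) + rs.length :=
          le_add_of_nonneg_left hpos
      _ = Module.supportDim R M := Module.supportDim_add_length_eq_supportDim_of_isRegular rs hrs
      _ ≤ ringKrullDim R := Module.supportDim_le_ringKrullDim R M
  rw [← hd] at hlen
  exact_mod_cast hlen

lemma modDepth_eq_ringKrullDim_of_free [IsRegularLocalRing R] [Module.Free R M] [Nontrivial M] :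
    (modDepth R M : WithBot ℕ∞) = ringKrullDim R := by
  have hd := IsRegularLocalRing.spanFinrank_maximalIdeal (R := R)
  obtain ⟨-, rs, hlen, hrs, hreg⟩ := isDomain_and_exists_isWeaklyRegular hd.symm
  have hregM : IsRegular M rs := by
    refine IsRegular.of_isWeaklyRegular_of_mem_maximalIdeal _ hrs ?_
    exact (LinearEquiv.isWeaklyRegular_congr (TensorProduct.lid R M) rs).1
      hreg.isWeaklyRegular_rTensor
  refine (modDepth_le_ringKrullDim M).antisymm ?_
  rw [← hd, ← hlen]
  exact WithBot.coe_le_coe.2 (le_sSup ⟨rs, rfl, hrs, hregM⟩)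

end Depth

section Grade

open RingTheory.Sequence

variable {R : Type*} [CommRing R]

lemma isSMulRegular_quotient_span_singleton_iff {a b : R} :
    IsSMulRegular (R ⧸ Ideal.span {a}) b ↔ ∀ t, a ∣ b * t → a ∣ t := by
  simp only [isSMulRegular_quotient_iff_mem_of_smul_mem, Ideal.mem_span_singleton, smul_eq_mul]

lemma isSMulRegular_of_isWeaklyRegular_triple {x₁ x₂ x₃ : R}
    (h : IsWeaklyRegular R [x₁, x₂, x₃]) :
    IsSMulRegular R x₁ ∧ IsSMulRegular (R ⧸ Ideal.span {x₁}) x₂ ∧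
      IsSMulRegular (R ⧸ Ideal.span {x₁, x₂}) x₃ := by
  rw [isWeaklyRegular_iff_Fin] at h
  refine ⟨?_, ?_, ?_⟩
  · exact ((Submodule.quotEquivOfEqBot _ (by simp)).isSMulRegular_congr x₁).1 (h ⟨0, by simp⟩)
  · exact ((Submodule.quotEquivOfEq _ _ (by simp)).isSMulRegular_congr x₂).1 (h ⟨1, by simp⟩)
  · exact ((Submodule.quotEquivOfEq _ _ (by simp [Ideal.span_insert])).isSMulRegular_congr
      x₃).1 (h ⟨2, by simp⟩)

lemma dvd_of_dvd_mul_comm [IsDomain R] {a b : R} (ha : a ≠ 0)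
    (hab : ∀ t, a ∣ b * t → a ∣ t) (t : R) (ht : b ∣ a * t) : b ∣ t := by
  obtain ⟨u, hu⟩ := ht
  obtain ⟨c, rfl⟩ := hab u ⟨t, hu.symm⟩
  exact ⟨c, mul_left_cancel₀ ha (by rw [hu, mul_left_comm])⟩

lemma exists_mem_isSMulRegular_notMem [IsNoetherianRing R] {M : Type*} [AddCommGroup M]
    [Module R M] [Module.Finite R M] {Q P : Ideal R} (hP : ¬Q ≤ P) {x : R} (hx : x ∈ Q)
    (hxM : IsSMulRegular M x) : ∃ z ∈ Q, IsSMulRegular M z ∧ z ∉ P := by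
  have hunion : ¬(Q : Set R) ⊆ ⋃ q ∈ insert P (associatedPrimes R M), (id q : Ideal R) := by
    refine (Ideal.subset_union_prime_finite ((associatedPrimes.finite R M).insert P) P P
      fun q hq hne _ ↦ (hq.resolve_left hne).1).not.2 ?_
    rintro ⟨q, rfl | hq, hle⟩
    · exact hP hle
    · have hmem := Set.mem_biUnion hq (hle hx)
      rw [biUnion_associatedPrimes_eq_compl_regular] at hmem
      exact hmem hxM
  obtain ⟨z, hz, hzU⟩ := Set.not_subset.1 hunion
  refine ⟨z, hz, ?_, fun h ↦ hzU (Set.mem_biUnion (Set.mem_insert _ _) h)⟩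
  by_contra hzM
  have hmem : z ∈ ⋃ q ∈ associatedPrimes R M, (q : Set R) := by
    rw [biUnion_associatedPrimes_eq_compl_regular]
    exact hzM
  obtain ⟨q, hq, hzq⟩ := Set.mem_iUnion₂.1 hmem
  exact hzU (Set.mem_biUnion (Set.mem_insert_of_mem _ hq) hzq)

-- `R/(s, y)` and `R/(s, z)` have isomorphic submodules annihilated by `Q`: send `t` to `t'` with
-- `t z ≡ t' y` modulo `s`. Only the transfer of vanishing is needed.
lemma colon_span_pair_le_of_colon_span_pair_le {Q : Ideal R} {s y z : R} (hz : z ∈ Q)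
    (hys : ∀ t, s ∣ y * t → s ∣ t) (hzs : ∀ t, s ∣ z * t → s ∣ t)
    (h : (Ideal.span {s, z}).colon Q ≤ Ideal.span {s, z}) :
    (Ideal.span {s, y}).colon Q ≤ Ideal.span {s, y} := by
  intro t ht
  have ht' (q : R) (hq : q ∈ Q) : ∃ u w, u * s + w * y = t * q :=
    Ideal.mem_span_pair.1 (Submodule.mem_colon.1 ht q hq)
  obtain ⟨u, t', htz⟩ := ht' z hz
  obtain ⟨c, d, rfl⟩ : ∃ c d, c * s + d * z = t' := by
    refine Ideal.mem_span_pair.1 (h (Submodule.mem_colon.2 fun q hq ↦ ?_))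
    obtain ⟨u', w, hw⟩ := ht' q hq
    obtain ⟨e, he⟩ := hys (t' * q - w * z)
      ⟨z * u' - u * q, by linear_combination q * htz - z * hw⟩
    exact Ideal.mem_span_pair.2 ⟨e, w, by rw [smul_eq_mul]; linear_combination -he⟩
  obtain ⟨e, he⟩ := hzs (t - y * d) ⟨u + y * c, by linear_combination -htz⟩
  exact Ideal.mem_span_pair.2 ⟨e, d, by linear_combination -he⟩

variable [IsDomain R]

lemma not_le_span_singleton_of_containsRegSeq3 {Q : Ideal R} (hQ : ContainsRegSeq3 R Q) {p : R}
    (hp : ¬IsUnit p) : ¬Q ≤ Ideal.span {p} := by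
  obtain ⟨rs, hlen, hmem, hreg⟩ := hQ
  obtain ⟨x₁, x₂, x₃, rfl⟩ := List.length_eq_three.1 hlen
  obtain ⟨h₁, h₂, -⟩ := isSMulRegular_of_isWeaklyRegular_triple hreg.toIsWeaklyRegular
  intro hle
  obtain ⟨u, rfl⟩ := Ideal.mem_span_singleton.1 (hle (hmem x₁ (by simp)))
  obtain ⟨v, rfl⟩ := Ideal.mem_span_singleton.1 (hle (hmem x₂ (by simp)))
  have hu : u ≠ 0 := by
    rintro rfl
    exact one_ne_zero (h₁ (by simp : (p * 0) • (1 : R) = (p * 0) • 0))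
  obtain ⟨c, hc⟩ := isSMulRegular_quotient_span_singleton_iff.1 h₂ u ⟨v, by ring⟩
  refine hp (.of_mul_eq_one c (mul_left_cancel₀ hu ?_))
  linear_combination -hc

lemma colon_span_pair_le_of_containsRegSeq3 [IsNoetherianRing R] {Q : Ideal R}
    (hQ : ContainsRegSeq3 R Q) {p y : R} (hp : Prime p) (hy : ¬p ∣ y) :
    (Ideal.span {p, y}).colon Q ≤ Ideal.span {p, y} := by
  have hQp := not_le_span_singleton_of_containsRegSeq3 hQ hp.not_isUnit
  obtain ⟨rs, hlen, hmem, hreg⟩ := hQ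
  obtain ⟨x₁, x₂, x₃, rfl⟩ := List.length_eq_three.1 hlen
  obtain ⟨h₁, h₂, h₃⟩ := isSMulRegular_of_isWeaklyRegular_triple hreg.toIsWeaklyRegular
  have hx₁ : x₁ ≠ 0 := by
    rintro rfl
    exact one_ne_zero (h₁ (by simp : (0 : R) • (1 : R) = (0 : R) • 0))
  obtain ⟨z, hzQ, hz, hzp⟩ := exists_mem_isSMulRegular_notMem hQp (hmem x₂ (by simp)) h₂
  rw [Ideal.mem_span_singleton] at hzp
  rw [isSMulRegular_quotient_span_singleton_iff] at h₂ hz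
  have hprime {w : R} (hw : ¬p ∣ w) (t : R) (ht : p ∣ w * t) : p ∣ t :=
    (hp.dvd_or_dvd ht).resolve_left hw
  have hx₁x₂ : (Ideal.span {x₁, x₂}).colon Q ≤ Ideal.span {x₁, x₂} := fun t ht ↦
    (isSMulRegular_quotient_iff_mem_of_smul_mem _ _).1 h₃ t
      (by simpa [mul_comm] using Submodule.mem_colon.1 ht x₃ (hmem x₃ (by simp)))
  have hx₁z := colon_span_pair_le_of_colon_span_pair_le (hmem x₂ (by simp)) hz h₂ hx₁x₂
  have hzp' := colon_span_pair_le_of_colon_span_pair_le (y := p) (hmem x₁ (by simp))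
    (dvd_of_dvd_mul_comm hp.ne_zero (hprime hzp)) (dvd_of_dvd_mul_comm hx₁ hz)
    (by rwa [Set.pair_comm])
  exact colon_span_pair_le_of_colon_span_pair_le hzQ (hprime hy) (hprime hzp)
    (by rwa [Set.pair_comm])

end Grade

section Arithmetic

variable {S : Type*} [CommRing S]

lemma not_dvd_of_not_dvd_pow_add_mul {π h c : S} {n : ℕ} (hn : n ≠ 0) (h' : ¬π ∣ h ^ n + c * π) :
    ¬π ∣ h :=
  fun hπ ↦ h' (dvd_add (dvd_pow hπ hn) (dvd_mul_left π c))

lemma dvd_of_dvd_mul_of_isSMulRegular [IsDomain S] [IsNoetherianRing S] [IsLocalRing S]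
    {π f g s : S} (hπ : Prime π) (hg : ¬π ∣ g)
    (hf : ∀ t, t * f ∈ Ideal.span {π, g} → t ∈ Ideal.span {π, g}) (hs : g ∣ f * s) : g ∣ s := by
  set N : Ideal S := (Ideal.span {g}).colon {f} with hN
  have hmem (t : S) : t ∈ N ↔ g ∣ f * t := by
    rw [hN, Submodule.mem_colon_singleton, smul_eq_mul, mul_comm, Ideal.mem_span_singleton]
  have hle : N ≤ Ideal.span {g} ⊔ Ideal.span {π} • N := by
    intro t ht
    obtain ⟨u, hu⟩ := (hmem t).1 ht
    obtain ⟨t', w, htw⟩ := Ideal.mem_span_pair.1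
      (hf t (Ideal.mem_span_pair.2 ⟨0, u, by linear_combination -hu⟩))
    obtain ⟨c, hc⟩ := (hπ.dvd_or_dvd (a := g) (b := u - f * w)
      ⟨f * t', by linear_combination -f * htw - hu⟩).resolve_left hg
    have ht' : t' ∈ N := (hmem t').2 ⟨c, mul_left_cancel₀ hπ.ne_zero <| by
      linear_combination f * htw + hu + g * hc⟩
    rw [← htw, add_comm, mul_comm t']
    exact Submodule.add_mem_sup (Ideal.mem_span_singleton.2 (dvd_mul_left g w))
      (Submodule.smul_mem_smul (Ideal.mem_span_singleton_self π) ht')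
  have hN' := Submodule.le_of_le_smul_of_le_jacobson_bot (IsNoetherian.noetherian N)
    (by
      rw [IsLocalRing.jacobson_eq_maximalIdeal _ bot_ne_top, Ideal.span_singleton_le_iff_mem]
      exact hπ.not_isUnit) hle
  exact Ideal.mem_span_singleton.1 (hN' ((hmem s).2 hs))

section ContainsRegSeq3

variable [IsDomain S] {π f g : S}

lemma not_dvd_of_containsRegSeq3_span_triple [IsNoetherianRing S] [IsLocalRing S]
    (hπ : Prime π) (hQ : ContainsRegSeq3 S (Ideal.span {π, f, g})) (hfg : IsUnit f → IsUnit g) :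
    ¬π ∣ g := by
  intro hg
  have hQle (I : Ideal S) (hI : π ∈ I) (hfI : f ∈ I) : Ideal.span {π, f, g} ≤ I :=
    Ideal.span_le.2 (by simp [Set.insert_subset_iff, hI, hfI, I.mem_of_dvd hg hI])
  have hf : ¬π ∣ f := fun hf ↦ not_le_span_singleton_of_containsRegSeq3 hQ hπ.not_isUnit
    (hQle _ (Ideal.mem_span_singleton_self π) (Ideal.mem_span_singleton.2 hf))
  have hone : (1 : S) ∈ Ideal.span {π, f} := by
    refine colon_span_pair_le_of_containsRegSeq3 hQ hπ hf (Submodule.mem_colon.2 fun q hq ↦ ?_)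
    rw [one_smul]
    exact hQle _ (Ideal.mem_span_pair.2 ⟨1, 0, by ring⟩) (Ideal.mem_span_pair.2 ⟨0, 1, by ring⟩) hq
  obtain ⟨u, v, huv⟩ := Ideal.mem_span_pair.1 hone
  have hfu : IsUnit f := isUnit_of_mul_isUnit_right
    ((IsLocalRing.isUnit_or_isUnit_of_add_one huv).resolve_left
      fun h ↦ hπ.not_isUnit (isUnit_of_mul_isUnit_right h))
  exact hπ.not_isUnit (isUnit_of_dvd_unit hg (hfg hfu))

lemma mem_span_pair_of_mul_mem_of_containsRegSeq3 [IsNoetherianRing S] (hπ : Prime π)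
    (hQ : ContainsRegSeq3 S (Ideal.span {π, f, g})) (hg : ¬π ∣ g) (t : S)
    (ht : t * f ∈ Ideal.span {π, g}) : t ∈ Ideal.span {π, g} := by
  refine colon_span_pair_le_of_containsRegSeq3 hQ hπ hg (Submodule.mem_colon.2 fun q hq ↦ ?_)
  have hle : Ideal.span {π, f, g} * Ideal.span {t} ≤ Ideal.span {π, g} := by
    rw [Ideal.span_mul_span', Ideal.span_le]
    rintro _ ⟨q, rfl | rfl | rfl, _, rfl, rfl⟩
    · exact Ideal.mul_mem_right _ _ (Ideal.subset_span (by simp))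
    · simpa [mul_comm] using ht
    · exact Ideal.mul_mem_right _ _ (Ideal.subset_span (by simp))
  rw [smul_eq_mul, mul_comm]
  exact hle (Ideal.mul_mem_mul hq (Ideal.mem_span_singleton_self t))

end ContainsRegSeq3

variable {p : ℕ} (hp : p.Prime) (hpS : Prime (p : S))

include hp hpS

lemma dvd_sub_of_dvd_pow_sub_pow {x y : S} (h : (p : S) ∣ x ^ p - y ^ p) : (p : S) ∣ x - y := by
  have := Fact.mk hp
  have hprime := (Ideal.span_singleton_prime hpS.ne_zero).2 hpS
  have hchar : CharP (S ⧸ Ideal.span {(p : S)}) p := by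
    refine CharP.quotient S p fun h ↦ hpS.not_isUnit h
  rw [← Ideal.mem_span_singleton, ← Ideal.Quotient.eq_zero_iff_mem] at h ⊢
  rw [map_sub, map_pow, map_pow, ← sub_pow_char] at h
  rw [map_sub]
  exact eq_zero_of_pow_eq_zero h

variable {f g h₁ h₂ a b : S} (hf : f = h₁ ^ p + a * p) (hg : g = h₂ ^ p + b * p)

include hf hg

lemma exists_mul_pow_eq_add_sq_mul {i : ℕ}
    (hfgi : ∃ x y : S, f * g ^ i = x ^ p + y * (p : S) ^ 2) :
    ∃ y : S, f * g ^ i = (h₁ * h₂ ^ i) ^ p + (p : S) ^ 2 * y := by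
  obtain ⟨x, y, hxy⟩ := hfgi
  obtain ⟨c, hc⟩ : (p : S) ∣ g ^ i - (h₂ ^ p) ^ i :=
    (Dvd.intro_left b (by rw [hg]; ring)).trans (sub_dvd_pow_sub_pow g (h₂ ^ p) i)
  have hx : (p : S) ∣ x - h₁ * h₂ ^ i := dvd_sub_of_dvd_pow_sub_pow hp hpS
    ⟨f * c + a * (h₂ ^ p) ^ i - y * p, by linear_combination f * hc + (h₂ ^ p) ^ i * hf - hxy⟩
  obtain ⟨z, hz⟩ := dvd_sub_pow_of_dvd_sub hx 1
  exact ⟨y + z, by rw [pow_one, one_add_one_eq_two] at hz; linear_combination hxy + hz⟩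

omit hp in
lemma dvd_of_mul_pow_eq_add_sq_mul [IsDomain S] {i : ℕ} (hi : 1 ≤ i) (hh₂ : ¬(p : S) ∣ h₂) {y : S}
    (hy : f * g ^ i = (h₁ * h₂ ^ i) ^ p + (p : S) ^ 2 * y) :
    (p : S) ∣ a * h₂ ^ p + i * (b * h₁ ^ p) := by
  obtain ⟨n, rfl⟩ := Nat.exists_eq_add_of_le' hi
  obtain ⟨k, hk⟩ := Polynomial.powAddExpansion (h₂ ^ p) (b * p) (n + 1)
  rw [Nat.add_sub_cancel, ← hg] at hk
  refine (hpS.dvd_or_dvd (a := (h₂ ^ p) ^ n) ?_).resolve_left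
    fun h ↦ hh₂ (hpS.dvd_of_dvd_pow (hpS.dvd_of_dvd_pow h))
  refine ⟨y - a * (n + 1) * (h₂ ^ p) ^ n * b - f * k * b ^ 2, mul_left_cancel₀ hpS.ne_zero ?_⟩
  have hpow : (h₁ * h₂ ^ (n + 1)) ^ p = h₁ ^ p * (h₂ ^ p) ^ (n + 1) := by ring
  push_cast at hk ⊢
  linear_combination hy - f * hk - ((h₂ ^ p) ^ (n + 1) + (n + 1) * (h₂ ^ p) ^ n * (b * p)) * hf +
    hpow

omit hf in
lemma exists_eq_mul_pow_add_of_dvd {i : ℕ} (hi₁ : 1 ≤ i) (hi₂ : i < p) (hh₂ : ¬(p : S) ∣ h₂)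
    (hab : (p : S) ∣ a * h₂ ^ p + i * (b * h₁ ^ p))
    (hreg : ∀ t, t * h₁ ^ p ∈ Ideal.span {(p : S), g} → t ∈ Ideal.span {(p : S), g}) :
    ∃ d e₁ e₂ : S, a = -(i * d * h₁ ^ p) + p * e₁ ∧ b = d * h₂ ^ p + p * e₂ := by
  obtain ⟨c, hc⟩ := hab
  obtain ⟨u, v, huv⟩ : IsCoprime (i : S) (p : S) :=
    ((Nat.coprime_of_lt_prime (by omega) hi₂ hp).symm.cast (R := S))
  have hib : i * b ∈ Ideal.span {(p : S), g} := hreg _ <| Ideal.mem_span_pair.2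
    ⟨c + a * b, -a, by rw [hg]; linear_combination -hc⟩
  have hb : b ∈ Ideal.span {(p : S), g} := by
    rw [← one_mul b, ← huv, add_mul, mul_assoc, mul_right_comm]
    exact add_mem (Ideal.mul_mem_left _ _ hib)
      (Ideal.mul_mem_left _ _ (Ideal.subset_span (Set.mem_insert _ _)))
  obtain ⟨e, d, hd⟩ := Ideal.mem_span_pair.1 hb
  obtain ⟨e₁, he₁⟩ : (p : S) ∣ a + i * d * h₁ ^ p := by
    refine (hpS.dvd_or_dvd (a := h₂ ^ p) ?_).resolve_left fun h ↦ hh₂ (hpS.dvd_of_dvd_pow h)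
    exact ⟨c - i * h₁ ^ p * (e + d * b), by
      rw [hg] at hd; linear_combination hc + i * h₁ ^ p * hd⟩
  exact ⟨d, e₁, e + d * b, by linear_combination he₁, by rw [hg] at hd; linear_combination -hd⟩

end Arithmetic

section Adjoin

open Algebra Polynomial

variable {R A : Type*} [CommRing R] [CommRing A] [Algebra R A]

lemma toSubmodule_adjoin_singleton_eq_span_range {x : A} {f : R[X]} (hf : f.Monic)
    (hx : aeval x f = 0) : Subalgebra.toSubmodule (adjoin R {x}) =
      Submodule.span R (Set.range fun j : Fin f.natDegree ↦ x ^ (j : ℕ)) := by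
  rw [← Submodule.span_range_natDegree_eq_adjoin hf hx]
  congr 1
  ext y
  simp [Fin.exists_iff]

lemma toSubmodule_adjoin_pair_eq_span_range {x y : A} {f g : R[X]} (hf : f.Monic) (hg : g.Monic)
    (hx : aeval x f = 0) (hy : aeval y g = 0) : Subalgebra.toSubmodule (adjoin R {x, y}) =
      Submodule.span R (Set.range fun j : Fin f.natDegree × Fin g.natDegree ↦
        x ^ (j.1 : ℕ) * y ^ (j.2 : ℕ)) := by
  rw [Set.insert_eq, adjoin_union_coe_submodule,
    toSubmodule_adjoin_singleton_eq_span_range hf hx,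
    toSubmodule_adjoin_singleton_eq_span_range hg hy, Submodule.span_mul_span]
  congr 1
  ext z
  simp [Set.mem_mul]

lemma adjoin_pair_sub_algebraMap (x y : A) (r s : R) :
    adjoin R {x - algebraMap R A r, y - algebraMap R A s} = adjoin R {x, y} := by
  have hmem {B : Subalgebra R A} {z : A} (t : R) (hz : z ∈ B) : z - algebraMap R A t ∈ B :=
    sub_mem hz (B.algebraMap_mem t)
  refine le_antisymm (adjoin_le ?_) (adjoin_le ?_)
  · rintro z (rfl | rfl)
    exacts [hmem r (subset_adjoin (by simp)), hmem s (subset_adjoin (by simp))]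
  · have hx : x - algebraMap R A r ∈ adjoin R {x - algebraMap R A r, y - algebraMap R A s} :=
      subset_adjoin (by simp)
    have hy : y - algebraMap R A s ∈ adjoin R {x - algebraMap R A r, y - algebraMap R A s} :=
      subset_adjoin (by simp)
    rintro z (rfl | rfl)
    exacts [by simpa using hmem (-r) hx, by simpa using hmem (-s) hy]

lemma toSubmodule_adjoin_pair_eq_span_pow_sub {n : ℕ} (hn : n ≠ 0) {x y : A} {f g : R}
    (hx : x ^ n = algebraMap R A f) (hy : y ^ n = algebraMap R A g) (r s : R) :
    Subalgebra.toSubmodule (adjoin R {x, y}) = Submodule.span R (Set.range fun j : Fin n × Fin n ↦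
      (x - algebraMap R A r) ^ (j.1 : ℕ) * (y - algebraMap R A s) ^ (j.2 : ℕ)) := by
  nontriviality R
  have hmonic (f r : R) : ((X ^ n - C f).comp (X + C r)).Monic :=
    (monic_X_pow_sub_C f hn).comp_X_add_C r
  have hdeg (f r : R) : ((X ^ n - C f).comp (X + C r)).natDegree = n := by
    rw [← taylor_apply, natDegree_taylor, natDegree_X_pow_sub_C]
  have hroot {z : A} {f : R} (hz : z ^ n = algebraMap R A f) (r : R) :
      aeval (z - algebraMap R A r) ((X ^ n - C f).comp (X + C r)) = 0 := by
    simp [hz]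
  rw [← adjoin_pair_sub_algebraMap x y r s, toSubmodule_adjoin_pair_eq_span_range (hmonic f r)
    (hmonic g s) (hroot hx r) (hroot hy s), hdeg, hdeg]

lemma exists_smul_mem_adjoin_of_isLocalization (M : Submonoid R) {V : Type*} [CommRing V]
    [Algebra R V] [IsLocalization M V] [Algebra V A] [IsScalarTower R V A] {s : Set A} {x : A}
    (hx : x ∈ adjoin V s) : ∃ m ∈ M, m • x ∈ adjoin R s := by
  induction hx using adjoin_induction with
  | mem x hx => exact ⟨1, M.one_mem, by simpa using subset_adjoin hx⟩
  | algebraMap v =>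
    obtain ⟨⟨r, m⟩, hm⟩ := IsLocalization.surj M v
    refine ⟨m, m.2, ?_⟩
    rw [smul_def, IsScalarTower.algebraMap_apply R V A, ← map_mul, mul_comm, hm,
      ← IsScalarTower.algebraMap_apply]
    exact Subalgebra.algebraMap_mem _ _
  | add x y _ _ hx hy =>
    obtain ⟨m, hm, hmx⟩ := hx
    obtain ⟨n, hn, hny⟩ := hy
    refine ⟨m * n, M.mul_mem hm hn, ?_⟩
    rw [smul_add, mul_comm m, mul_smul, mul_comm n, mul_smul]
    exact add_mem (Subalgebra.smul_mem _ hmx n) (Subalgebra.smul_mem _ hny m)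
  | mul x y _ _ hx hy =>
    obtain ⟨m, hm, hmx⟩ := hx
    obtain ⟨n, hn, hny⟩ := hy
    exact ⟨m * n, M.mul_mem hm hn, by rw [← smul_mul_smul_comm]; exact mul_mem hmx hny⟩

end Adjoin

section MonomialBasis

open Algebra

variable {S : Type*} [CommRing S] {L : Type*} [Field L] [Algebra S L]
  [IsFractionRing S L] {K : Type*} [Field K] [Algebra L K] [Algebra S K] [IsScalarTower S L K]

lemma linearIndependent_of_span_eq_top_of_card_eq_finrank {ι : Type*} [Fintype ι] {v : ι → K}
    (hv : ⊤ ≤ Submodule.span L (Set.range v)) (hcard : Fintype.card ι = Module.finrank L K) :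
    LinearIndependent S v :=
  (LinearIndependent.iff_fractionRing S L).2
    (linearIndependent_of_top_le_span_of_card_eq_finrank hv hcard)

variable {p : ℕ} {f g : S} {ω μ : K}

omit [IsFractionRing S L] in
lemma span_range_pow_sub_mul_pow_sub_eq_top (hp : p ≠ 0) (hω : ω ^ p = algebraMap S K f)
    (hμ : μ ^ p = algebraMap S K g) (hKgen : adjoin L ({ω, μ} : Set K) = ⊤) (h₁ h₂ : S) :
    Submodule.span L (Set.range fun j : Fin p × Fin p ↦
      (ω - algebraMap S K h₁) ^ (j.1 : ℕ) * (μ - algebraMap S K h₂) ^ (j.2 : ℕ)) = ⊤ := by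
  simp only [IsScalarTower.algebraMap_apply S L K] at hω hμ ⊢
  rw [← toSubmodule_adjoin_pair_eq_span_pow_sub hp hω hμ, hKgen, Algebra.top_toSubmodule]

lemma exists_basis_adjoin_pair (hp : p ≠ 0) (hω : ω ^ p = algebraMap S K f)
    (hμ : μ ^ p = algebraMap S K g) (hKgen : adjoin L ({ω, μ} : Set K) = ⊤)
    (hdeg : Module.finrank L K = p ^ 2) (h₁ h₂ : S) :
    ∃ B : Module.Basis (Fin p × Fin p) S (adjoin S ({ω, μ} : Set K)),
      ∀ j, B j = (omegaA ω μ - algebraMap S _ h₁) ^ (j.1 : ℕ) *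
        (muA ω μ - algebraMap S _ h₂) ^ (j.2 : ℕ) := by
  have hli : LinearIndependent S fun j : Fin p × Fin p ↦
      (ω - algebraMap S K h₁) ^ (j.1 : ℕ) * (μ - algebraMap S K h₂) ^ (j.2 : ℕ) :=
    linearIndependent_of_span_eq_top_of_card_eq_finrank
      (span_range_pow_sub_mul_pow_sub_eq_top hp hω hμ hKgen h₁ h₂).ge (by simp [hdeg, sq])
  refine ⟨(Module.Basis.span hli).map (LinearEquiv.ofEq _ _
    (toSubmodule_adjoin_pair_eq_span_pow_sub hp hω hμ h₁ h₂).symm), fun j ↦ Subtype.ext ?_⟩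
  rw [Module.Basis.map_apply, LinearEquiv.coe_ofEq_apply, Module.Basis.span_apply]
  rfl

end MonomialBasis

section Coordinates

variable {S A : Type*} [CommRing S] [CommRing A] [Algebra S A] {π : S}

lemma dvd_repr_of_algebraMap_dvd {ι : Type*} (B : Module.Basis ι S A) {z : A}
    (hz : algebraMap S A π ∣ z) (j : ι) : π ∣ B.repr z j := by
  obtain ⟨w, rfl⟩ := hz
  rw [← Algebra.smul_def, map_smul, Finsupp.smul_apply, smul_eq_mul]
  exact dvd_mul_right _ _

lemma algebraMap_dvd_of_dvd_repr {ι : Type*} [Finite ι] (B : Module.Basis ι S A) {z : A}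
    (hz : ∀ j, π ∣ B.repr z j) : algebraMap S A π ∣ z := by
  have := Fintype.ofFinite ι
  rw [← B.sum_repr z]
  exact Finset.dvd_sum fun j _ ↦ Algebra.smul_def (B.repr z j) (B j) ▸
    Dvd.dvd.mul_right (map_dvd _ (hz j)) _

variable {n : ℕ} {X Y : A} {B : Module.Basis (Fin n × Fin n) S A}
  (hB : ∀ j, B j = X ^ (j.1 : ℕ) * Y ^ (j.2 : ℕ)) (hX : algebraMap S A π ∣ X ^ n)

lemma apply_reindex_prodComm (hB : ∀ j, B j = X ^ (j.1 : ℕ) * Y ^ (j.2 : ℕ))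
    (j : Fin n × Fin n) :
    B.reindex (Equiv.prodComm _ _) j = Y ^ (j.1 : ℕ) * X ^ (j.2 : ℕ) := by
  simp [hB, mul_comm]

include hB hX

lemma dvd_repr_mul_basis (i r : Fin n × Fin n) :
    π ∣ B.repr (X * B r) i - if (r.1 : ℕ) + 1 = i.1 ∧ r.2 = i.2 then 1 else 0 := by
  rw [hB, ← mul_assoc, ← pow_succ']
  obtain hr | hr : (r.1 : ℕ) + 1 < n ∨ (r.1 : ℕ) + 1 = n := Nat.lt_or_eq_of_le r.1.2
  · rw [← hB (⟨r.1 + 1, hr⟩, r.2), B.repr_self_apply]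
    simp [Prod.ext_iff, Fin.ext_iff]
  · rw [if_neg fun h ↦ (hr.symm.trans h.1).not_gt i.1.2, sub_zero, hr]
    exact dvd_repr_of_algebraMap_dvd B (hX.mul_right _) i

lemma dvd_repr_mul_of_fst_eq_zero (z : A) {i : Fin n × Fin n} (hi : (i.1 : ℕ) = 0) :
    π ∣ B.repr (X * z) i := by
  rw [← B.sum_repr z, Finset.mul_sum, map_sum, Finsupp.finsetSum_apply]
  refine Finset.dvd_sum fun r _ ↦ ?_
  rw [mul_smul_comm, map_smul, Finsupp.smul_apply]
  exact Dvd.dvd.mul_left (by simpa [hi] using dvd_repr_mul_basis hB hX i r) _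

lemma dvd_repr_mul_sub_repr (z : A) {i j : Fin n × Fin n} (h₁ : (j.1 : ℕ) + 1 = i.1)
    (h₂ : j.2 = i.2) : π ∣ B.repr (X * z) i - B.repr z j := by
  rw [← B.sum_repr z, Finset.mul_sum, map_sum, map_sum, Finsupp.finsetSum_apply,
    Finsupp.finsetSum_apply, ← Finset.sum_sub_distrib]
  refine Finset.dvd_sum fun r _ ↦ ?_
  rw [mul_smul_comm, map_smul, map_smul, Finsupp.smul_apply, Finsupp.smul_apply, ← smul_sub]
  refine Dvd.dvd.mul_left ?_ _
  convert dvd_repr_mul_basis hB hX i r using 2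
  rw [B.repr_self_apply]
  simp [Prod.ext_iff, Fin.ext_iff, ← h₁, h₂]

lemma dvd_repr_pow_mul_sub_repr (z : A) (m : ℕ) {i j : Fin n × Fin n}
    (h₁ : (j.1 : ℕ) + m = i.1) (h₂ : j.2 = i.2) : π ∣ B.repr (X ^ m * z) i - B.repr z j := by
  induction m generalizing i with
  | zero =>
    obtain rfl : j = i := Prod.ext (Fin.ext h₁) h₂
    simp
  | succ m ih =>
    have hlt : (j.1 : ℕ) + m < n := by have := i.1.2; omega
    rw [pow_succ', mul_assoc, ← sub_add_sub_cancel _ (B.repr (X ^ m * z) (⟨j.1 + m, hlt⟩, j.2))]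
    exact dvd_add (dvd_repr_mul_sub_repr hB hX _ h₁ h₂) (ih rfl rfl)

variable (hY : algebraMap S A π ∣ Y ^ n)

include hY

lemma dvd_repr_pow_mul_pow_mul_sub_repr (z : A) {s t : ℕ} {i j : Fin n × Fin n}
    (h₁ : (j.1 : ℕ) + s = i.1) (h₂ : (j.2 : ℕ) + t = i.2) :
    π ∣ B.repr (X ^ s * Y ^ t * z) i - B.repr z j := by
  have hXs := dvd_repr_pow_mul_sub_repr hB hX (Y ^ t * z) s (i := i) (j := (j.1, i.2)) h₁ rfl
  have hYt := dvd_repr_pow_mul_sub_repr (apply_reindex_prodComm hB) hY z t (i := (i.2, j.1))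
    (j := (j.2, j.1)) h₂ rfl
  rw [B.repr_reindex_apply, B.repr_reindex_apply] at hYt
  simpa [mul_assoc] using dvd_add hXs hYt

omit hB hX hY in
variable (B π) in
/-- The elements of `A` whose coordinates at the monomials `X ^ j * Y ^ k` with `j + k < m` are
divisible by `π`: the preimage of `(X, Y) ^ m ⊆ A / πA`, described by coordinates. -/
def orderSubmodule (m : ℕ) : Submodule S A where
  carrier := {z | ∀ j : Fin n × Fin n, (j.1 + j.2 : ℕ) < m → π ∣ B.repr z j}
  add_mem' hz hw j hj := by simpa using dvd_add (hz j hj) (hw j hj)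
  zero_mem' j _ := by simp
  smul_mem' c z hz j hj := by simpa using (hz j hj).mul_left c

omit hY in
lemma left_mul_mem_orderSubmodule {m : ℕ} {z : A} (hz : z ∈ orderSubmodule π B m) :
    X * z ∈ orderSubmodule π B (m + 1) := by
  intro i hi
  rcases hi₁ : (i.1 : ℕ) with _ | k
  · exact dvd_repr_mul_of_fst_eq_zero hB hX z hi₁
  · have hlt : k < n := by have := i.1.2; omega
    exact (dvd_iff_dvd_of_dvd_sub (dvd_repr_mul_sub_repr hB hX z (j := (⟨k, hlt⟩, i.2)) hi₁.symm
      rfl)).2 (hz _ (by simp only; omega))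

omit hX in
lemma right_mul_mem_orderSubmodule {m : ℕ} {z : A} (hz : z ∈ orderSubmodule π B m) :
    Y * z ∈ orderSubmodule π B (m + 1) := by
  have hz' : z ∈ orderSubmodule π (B.reindex (Equiv.prodComm _ _)) m := fun j hj ↦ by
    rw [B.repr_reindex_apply]
    exact hz _ (by simpa [add_comm] using hj)
  intro i hi
  have := left_mul_mem_orderSubmodule (apply_reindex_prodComm hB) hY hz' i.swap
    (by simpa [add_comm] using hi)
  rwa [B.repr_reindex_apply] at this

lemma mul_mem_orderSubmodule (w : A) {m : ℕ} {z : A} (hz : z ∈ orderSubmodule π B m) :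
    w * z ∈ orderSubmodule π B m := by
  have hmono {w : A} (hw : w ∈ orderSubmodule π B (m + 1)) : w ∈ orderSubmodule π B m :=
    fun j hj ↦ hw j (by omega)
  have hpow (s t : ℕ) : X ^ s * Y ^ t * z ∈ orderSubmodule π B m := by
    induction s with
    | zero =>
      induction t with
      | zero => simpa
      | succ t ih =>
        have := hmono (right_mul_mem_orderSubmodule hB hY ih)
        rwa [← mul_assoc, mul_left_comm, ← pow_succ'] at this
    | succ s ih =>
      have := hmono (left_mul_mem_orderSubmodule hB hX ih)
      rwa [← mul_assoc, ← mul_assoc, ← pow_succ'] at this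
  rw [← B.sum_repr w, Finset.sum_mul]
  refine Submodule.sum_mem _ fun j _ ↦ ?_
  rw [smul_mul_assoc, hB]
  exact Submodule.smul_mem _ _ (hpow _ _)

lemma mul_mem_orderSubmodule_of_mem_span_pair {w z : A} (hw : w ∈ Ideal.span {X, Y}) {m : ℕ}
    (hz : z ∈ orderSubmodule π B m) : w * z ∈ orderSubmodule π B (m + 1) := by
  obtain ⟨c, d, rfl⟩ := Ideal.mem_span_pair.1 hw
  rw [add_mul, mul_assoc, mul_assoc]
  exact add_mem (mul_mem_orderSubmodule hB hX hY c (left_mul_mem_orderSubmodule hB hX hz))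
    (mul_mem_orderSubmodule hB hX hY d (right_mul_mem_orderSubmodule hB hY hz))

lemma mul_mem_orderSubmodule_of_mem_span_pair_sq {w z : A} (hw : w ∈ Ideal.span {X, Y} ^ 2)
    {m : ℕ} (hz : z ∈ orderSubmodule π B m) : w * z ∈ orderSubmodule π B (m + 2) := by
  rw [sq] at hw
  induction hw using Submodule.mul_induction_on' with
  | mem_mul_mem u hu v hv =>
    rw [mul_assoc]
    exact mul_mem_orderSubmodule_of_mem_span_pair hB hX hY hu
      (mul_mem_orderSubmodule_of_mem_span_pair hB hX hY hv hz)
  | add u _ v _ hu hv => exact add_mul u v z ▸ add_mem hu hv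

lemma mem_orderSubmodule_of_dvd_pow_mul_pow_mul {w : A}
    (hw : ∀ s t, s + t + 1 = n → algebraMap S A π ∣ X ^ s * Y ^ t * w) :
    w ∈ orderSubmodule π B n := by
  intro j hj
  have hn : 0 < n := j.1.pos
  have h := dvd_repr_pow_mul_pow_mul_sub_repr hB hX hY w (s := n - 1 - j.1) (t := j.1)
    (i := (⟨n - 1, by omega⟩, ⟨j.2 + j.1, by omega⟩)) (j := j) (by simp only; omega) rfl
  exact (dvd_iff_dvd_of_dvd_sub h).1 (dvd_repr_of_algebraMap_dvd B (hw _ _ (by omega)) _)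

lemma dvd_repr_of_smul_add_smul_mem_orderSubmodule (hπ : Prime π) {l l' : S} (hl : ¬π ∣ l) {z : A}
    {m : ℕ} (hm : m + 1 < n) (hz : l • (X * z) + l' • (Y * z) ∈ orderSubmodule π B (m + 2))
    {j : Fin n × Fin n} (hj : (j.1 + j.2 : ℕ) = m) : π ∣ B.repr z j := by
  have hdvd {i j : Fin n × Fin n} (hj : (j.1 + j.2 : ℕ) = m) (h₁ : (j.1 : ℕ) + 1 = i.1)
      (h₂ : j.2 = i.2) (hY : π ∣ B.repr (Y * z) i) : π ∣ B.repr z j := by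
    have hsum := hz i (by omega)
    rw [map_add, map_smul, map_smul] at hsum
    exact (dvd_iff_dvd_of_dvd_sub (dvd_repr_mul_sub_repr hB hX z h₁ h₂)).1
      ((hπ.dvd_or_dvd ((dvd_add_left (hY.mul_left l')).1 hsum)).resolve_left hl)
  obtain ⟨j₁, k, hk⟩ := j
  simp only at hj
  induction k generalizing j₁ with
  | zero =>
    refine hdvd (i := (⟨j₁ + 1, by omega⟩, ⟨0, hk⟩)) hj rfl rfl ?_
    have h := dvd_repr_mul_of_fst_eq_zero (apply_reindex_prodComm hB) hY z
      (i := (⟨0, hk⟩, ⟨j₁ + 1, by omega⟩)) rfl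
    rwa [B.repr_reindex_apply] at h
  | succ k ih =>
    refine hdvd (i := (⟨j₁ + 1, by omega⟩, ⟨k + 1, hk⟩)) hj rfl rfl ?_
    have h := dvd_repr_pow_mul_pow_mul_sub_repr hB hX hY z (s := 0) (t := 1)
      (i := (⟨j₁ + 1, by omega⟩, ⟨k + 1, hk⟩)) (j := (⟨j₁ + 1, by omega⟩, ⟨k, by omega⟩)) rfl rfl
    rw [pow_zero, pow_one, one_mul] at h
    exact (dvd_iff_dvd_of_dvd_sub h).2 (ih _ _ (by simp only; omega))

lemma mem_orderSubmodule_of_mul_mem (hπ : Prime π) {l l' : S} (hl : ¬π ∣ l) {v z : A}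
    (hv : v - (l • X + l' • Y) ∈ Ideal.span {X, Y} ^ 2)
    (hz : z * v ∈ orderSubmodule π B n) : z ∈ orderSubmodule π B (n - 1) := by
  suffices h : ∀ m < n, z ∈ orderSubmodule π B m by
    obtain rfl | hn := n.eq_zero_or_pos
    · exact fun j ↦ j.1.elim0
    · exact h _ (by omega)
  intro m hm
  induction m with
  | zero => exact fun j hj ↦ absurd hj (Nat.not_lt_zero _)
  | succ m ih =>
    have hzv : z * v ∈ orderSubmodule π B (m + 2) := fun j hj ↦ hz j (by omega)
    have hlin : l • (X * z) + l' • (Y * z) ∈ orderSubmodule π B (m + 2) := by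
      convert sub_mem hzv (mul_mem_orderSubmodule_of_mem_span_pair_sq hB hX hY hv (ih (by omega)))
        using 1
      simp only [Algebra.smul_def]
      ring
    intro j hj
    obtain hj | hj := Nat.lt_succ_iff_lt_or_eq.1 hj
    · exact ih (by omega) j hj
    · exact dvd_repr_of_smul_add_smul_mem_orderSubmodule hB hX hY hπ hl hm hlin hj

lemma dvd_repr_of_dvd_mul (z : A) (hXz : algebraMap S A π ∣ X * z) (hYz : algebraMap S A π ∣ Y * z)
    {j : Fin n × Fin n} (hj : (j.1 : ℕ) + 1 < n ∨ (j.2 : ℕ) + 1 < n) : π ∣ B.repr z j := by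
  obtain hj | hj := hj
  · have h := dvd_repr_pow_mul_pow_mul_sub_repr hB hX hY z (s := 1) (t := 0)
      (i := (⟨j.1 + 1, hj⟩, j.2)) (j := j) rfl rfl
    exact (dvd_iff_dvd_of_dvd_sub h).1 (dvd_repr_of_algebraMap_dvd B (by simpa) _)
  · have h := dvd_repr_pow_mul_pow_mul_sub_repr hB hX hY z (s := 0) (t := 1)
      (i := (j.1, ⟨j.2 + 1, hj⟩)) (j := j) rfl rfl
    exact (dvd_iff_dvd_of_dvd_sub h).1 (dvd_repr_of_algebraMap_dvd B (by simpa) _)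

end Coordinates

section Colon

variable {A : Type*} [CommRing A]

lemma span_triple_pow_le_span_singleton {π X Y : A} {n : ℕ} (hX : π ∣ X ^ n) (hY : π ∣ Y ^ n) :
    Ideal.span {π, X, Y} ^ (2 * n - 1) ≤ Ideal.span {π} := by
  have hzero {x : A} (hx : π ∣ x ^ n) :
      Ideal.span {Ideal.Quotient.mk (Ideal.span {π}) x} ^ n = 0 := by
    rw [Ideal.span_singleton_pow, ← map_pow, (Ideal.Quotient.eq_zero_iff_dvd _ _).2 hx]
    exact Ideal.span_singleton_eq_bot.2 rfl
  have h := (Commute.all _ _).add_pow_add_eq_zero_of_pow_eq_zero (hzero hX) (hzero hY)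
  rw [← Ideal.mk_ker (I := Ideal.span {π}), ← Ideal.map_eq_bot_iff_le_ker, Ideal.map_pow,
    Ideal.map_span, Set.image_insert_eq, Set.image_pair,
    (Ideal.Quotient.eq_zero_iff_dvd _ _).2 dvd_rfl, Ideal.span_insert_zero, Ideal.span_insert,
    two_mul]
  exact h

lemma mem_colon_of_mul_mem {π v y : A} {P : Ideal A} {n : ℕ} (hn : 2 ≤ n)
    (hP : P ^ (2 * n - 1) ≤ Ideal.span {π}) (hyP : Ideal.span {y} * P ≤ Ideal.span {π})
    (hyv : y * v ∈ Ideal.span {π} * P ^ n) :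
    y ∈ (Ideal.span {π ^ 2}).colon
      (((Ideal.span {π} + Ideal.span {v} * P ^ (n - 2)) * P : Ideal A) : Set A) := by
  have hJ : (Ideal.span {π} + Ideal.span {v} * P ^ (n - 2)) * P =
      P * Ideal.span {π} + Ideal.span {v} * P ^ (n - 1) := by
    rw [add_mul, mul_assoc, ← pow_succ, show n - 2 + 1 = n - 1 by omega, mul_comm P]
  have hyJ : Ideal.span {y} * (P * Ideal.span {π} + Ideal.span {v} * P ^ (n - 1)) ≤
      Ideal.span {π ^ 2} := by
    rw [mul_add, ← mul_assoc, ← mul_assoc, Ideal.span_singleton_mul_span_singleton, sq,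
      ← Ideal.span_singleton_mul_span_singleton π]
    refine sup_le (Ideal.mul_mono_left hyP) ?_
    calc Ideal.span {y * v} * P ^ (n - 1) ≤ Ideal.span {π} * P ^ n * P ^ (n - 1) :=
          Ideal.mul_mono_left ((Ideal.span_singleton_le_iff_mem _).2 hyv)
      _ = Ideal.span {π} * P ^ (2 * n - 1) := by
          rw [mul_assoc, ← pow_add, show n + (n - 1) = 2 * n - 1 by omega]
      _ ≤ Ideal.span {π} * Ideal.span {π} := Ideal.mul_mono_right hP
  rw [Submodule.mem_colon, hJ]
  exact fun z hz ↦ hyJ (Ideal.mul_mem_mul (Ideal.mem_span_singleton_self y) hz)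

variable {S : Type*} [CommRing S] [Algebra S A] {p : ℕ} {P : Ideal A} {X Y : A}

lemma pow_mul_pow_mem_pow_add (hX : X ∈ P) (hY : Y ∈ P) (s t : ℕ) : X ^ s * Y ^ t ∈ P ^ (s + t) :=
  pow_add P s t ▸ Ideal.mul_mem_mul (Ideal.pow_mem_pow hX s) (Ideal.pow_mem_pow hY t)

lemma mem_pow_of_mem_span_image_antidiagonal (hX : X ∈ P) (hY : Y ∈ P) {m : ℕ} {D : A}
    (hD : D ∈ Submodule.span S ((fun j : ℕ × ℕ ↦ X ^ j.1 * Y ^ j.2) '' {j | j.1 + j.2 = m})) :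
    D ∈ P ^ m := by
  suffices h : Submodule.span S ((fun j : ℕ × ℕ ↦ X ^ j.1 * Y ^ j.2) '' {j | j.1 + j.2 = m}) ≤
      (P ^ m).restrictScalars S from h hD
  rw [Submodule.span_le]
  rintro _ ⟨j, rfl, rfl⟩
  exact pow_mul_pow_mem_pow_add hX hY j.1 j.2

lemma exists_cast_pow_card_sub_one_eq (hp : p.Prime) {i : ℕ} (hi : ¬p ∣ i) :
    ∃ t : A, (i : A) ^ (p - 1) = 1 + p * t := by
  have hcop : IsCoprime (i : ℤ) p := Nat.isCoprime_iff_coprime.2 (hp.coprime_iff_not_dvd.2 hi).symm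
  obtain ⟨t, ht⟩ := (Int.ModEq.pow_card_sub_one_eq_one hp hcop).symm.dvd
  exact ⟨t, by rw [← sub_eq_iff_eq_add']; exact_mod_cast congrArg (Int.cast : ℤ → A) ht⟩

lemma exists_mul_sub_mem_pow (hp : p.Prime) (hp2 : p ≠ 2) {i : ℕ} (hi : ¬p ∣ i) (h₁ h₂ d : S)
    (hpP : (p : A) ∈ P) (hY : Y ∈ P) :
    ∃ D ∈ Submodule.span S ((fun j : ℕ × ℕ ↦ X ^ j.1 * Y ^ j.2) '' {j | j.1 + j.2 = p - 2}),
      D * (h₂ • X + (i * h₁) • Y) -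
        ((i * d * h₁ ^ p * h₂) • Y ^ (p - 1) - (i * d * h₁ * h₂ ^ p) • X ^ (p - 1)) ∈ P ^ p := by
  have hgeom := geom_sum₂_mul ((i * h₁) • Y) (-(h₂ • X)) (p - 1)
  rw [(hp.even_sub_one hp2).neg_pow] at hgeom
  refine ⟨(i * d * h₁ * h₂) • ∑ k ∈ Finset.range (p - 1),
    ((i * h₁) • Y) ^ k * (-(h₂ • X)) ^ (p - 1 - 1 - k), ?_, ?_⟩
  · refine Submodule.smul_mem _ _ (Submodule.sum_mem _ fun k hk ↦ ?_)
    rw [← neg_smul, smul_pow, smul_pow, smul_mul_smul_comm, mul_comm (Y ^ k)]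
    have hk := Finset.mem_range.1 hk
    exact Submodule.smul_mem _ _ (Submodule.subset_span
      ⟨(p - 1 - 1 - k, k), show p - 1 - 1 - k + k = p - 2 by omega, rfl⟩)
  · obtain ⟨t, ht⟩ := exists_cast_pow_card_sub_one_eq (A := A) hp hi
    obtain ⟨q, rfl⟩ := Nat.exists_eq_add_one_of_ne_zero hp.ne_zero
    have hmem : (i * d * h₁ ^ (q + 1) * h₂) • t * (Y ^ q * ((q + 1 : ℕ) : A)) ∈ P ^ (q + 1) :=
      Ideal.mul_mem_left _ _ (pow_succ P q ▸ Ideal.mul_mem_mul (Ideal.pow_mem_pow hY q) hpP)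
    convert hmem using 1
    simp only [add_tsub_cancel_right, Algebra.smul_def, map_mul, map_pow, map_natCast, mul_pow]
      at hgeom ht ⊢
    linear_combination (i * algebraMap S A d * algebraMap S A h₁ * algebraMap S A h₂) * hgeom +
      i * algebraMap S A d * algebraMap S A h₁ ^ (q + 1) * algebraMap S A h₂ * Y ^ q * ht

lemma span_singleton_mul_le_span_mul_pow {π a b : A} {n : ℕ} (hn : 2 ≤ n) (hX : X ^ n = π * a)
    (hY : Y ^ n = π * b) {D : A} (hD : D ∈ Ideal.span {π, X, Y} ^ (n - 2)) :
    Ideal.span {X ^ (n - 1) * Y ^ (n - 1) + π * D} * Ideal.span {π, X, Y} ≤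
      Ideal.span {π} * Ideal.span {π, X, Y} ^ (n - 1) := by
  refine Ideal.span_singleton_mul_le_iff.2 fun x hx ↦ ?_
  obtain ⟨r, s, t, rfl⟩ := Submodule.mem_span_triple.1 hx
  set P : Ideal A := Ideal.span {π, X, Y}
  have hXP : X ^ (n - 1) ∈ P ^ (n - 1) := Ideal.pow_mem_pow (Ideal.subset_span (by simp)) _
  have hYP : Y ^ (n - 1) ∈ P ^ (n - 1) := Ideal.pow_mem_pow (Ideal.subset_span (by simp)) _
  have hDP {y : A} (hy : y ∈ P) : y * D ∈ P ^ (n - 1) := by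
    rw [show n - 1 = n - 2 + 1 by omega, pow_succ']
    exact Ideal.mul_mem_mul hy hD
  have hw : r * (X ^ (n - 1) * Y ^ (n - 1) + π * D) + s * (a * Y ^ (n - 1) + X * D) +
      t * (b * X ^ (n - 1) + Y * D) ∈ P ^ (n - 1) :=
    add_mem (add_mem (Ideal.mul_mem_left _ _ (add_mem (Ideal.mul_mem_left _ _ hYP)
        (hDP (Ideal.subset_span (by simp)))))
      (Ideal.mul_mem_left _ _ (add_mem (Ideal.mul_mem_left _ _ hYP)
        (hDP (Ideal.subset_span (by simp))))))
      (Ideal.mul_mem_left _ _ (add_mem (Ideal.mul_mem_left _ _ hXP)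
        (hDP (Ideal.subset_span (by simp)))))
  convert Ideal.mul_mem_mul (Ideal.mem_span_singleton_self π) hw using 1
  rw [← mul_pow_sub_one (by omega : n ≠ 0)] at hX hY
  simp only [smul_eq_mul]
  linear_combination s * Y ^ (n - 1) * hX + t * X ^ (n - 1) * hY

lemma mul_mem_span_mul_pow_of_sub_mem {π a b c α β : A} {n : ℕ} (hn : 2 ≤ n)
    (hX : X ^ n = π * (a + X * α)) (hY : Y ^ n = π * (b + Y * β)) {l l' D v : A}
    (hD : D ∈ Ideal.span {π, X, Y} ^ (n - 2))
    (hDl : D * (l * X + l' * Y) + (l * a * Y ^ (n - 1) + l' * b * X ^ (n - 1)) ∈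
      Ideal.span {π, X, Y} ^ n)
    (hv : v - c * (l * X + l' * Y) ∈ Ideal.span {π, X, Y} ^ 2) :
    (X ^ (n - 1) * Y ^ (n - 1) + π * D) * v ∈
      Ideal.span {π} * Ideal.span {π, X, Y} ^ n := by
  set P : Ideal A := Ideal.span {π, X, Y} with hPdef
  have hXP : X ∈ P := Ideal.subset_span (by simp)
  have hYP : Y ∈ P := Ideal.subset_span (by simp)
  have hlin : (X ^ (n - 1) * Y ^ (n - 1) + π * D) * (l * X + l' * Y) ∈
      Ideal.span {π} * P ^ n := by
    have hpow {x y : A} (hx : x ∈ P) (hy : y ∈ P) : x * y ^ (n - 1) ∈ P ^ n :=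
      mul_pow_sub_one (by omega : n ≠ 0) P ▸ Ideal.mul_mem_mul hx (Ideal.pow_mem_pow hy _)
    have hw := add_mem hDl (add_mem (Ideal.mul_mem_left _ (l * α) (hpow hXP hYP))
      (Ideal.mul_mem_left _ (l' * β) (hpow hYP hXP)))
    convert Ideal.mul_mem_mul (Ideal.mem_span_singleton_self π) hw using 1
    rw [← mul_pow_sub_one (by omega : n ≠ 0)] at hX hY
    linear_combination l * Y ^ (n - 1) * hX + l' * X ^ (n - 1) * hY
  have hsq : (X ^ (n - 1) * Y ^ (n - 1) + π * D) * (v - c * (l * X + l' * Y)) ∈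
      Ideal.span {π} * P ^ n := by
    refine (?_ : Ideal.span {X ^ (n - 1) * Y ^ (n - 1) + π * D} * P ^ 2 ≤ _)
      (Ideal.mul_mem_mul (Ideal.mem_span_singleton_self _) hv)
    rw [sq, ← mul_assoc, ← pow_sub_one_mul (by omega : n ≠ 0) P, ← mul_assoc]
    exact Ideal.mul_mono_left (span_singleton_mul_le_span_mul_pow hn hX hY hD)
  convert add_mem hsq (Ideal.mul_mem_left _ c hlin) using 1
  ring

end Colon

section ColonCoordinates

variable {S A : Type*} [CommRing S] [CommRing A] [Algebra S A] {π : S} {n : ℕ}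
  {X Y : A} {B : Module.Basis (Fin n × Fin n) S A}

variable (π B) in
/-- The elements of `A` spanning `(π²A : J)`; the corner `j = (n - 1, n - 1)` needs the corrected
socle element `E` in place of `π • B j`. -/
noncomputable def colonGenerators (E : A) (j : Fin n × Fin n) : A :=
  if (j.1 + j.2 : ℕ) < n - 1 then π ^ 2 • B j
  else if (j.1 + 1 : ℕ) < n ∨ (j.2 + 1 : ℕ) < n then π • B j
  else E

lemma sq_smul_mem_span_range_colonGenerators {E : A} {j : Fin n × Fin n}
    (hj : (j.1 + 1 : ℕ) < n ∨ (j.2 + 1 : ℕ) < n) :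
    π ^ 2 • B j ∈ Submodule.span S (Set.range (colonGenerators π B E)) := by
  have h : colonGenerators π B E j ∈ Submodule.span S (Set.range (colonGenerators π B E)) :=
    Submodule.subset_span ⟨j, rfl⟩
  rw [colonGenerators, if_pos hj] at h
  split_ifs at h
  · exact h
  · rw [sq, mul_smul]
    exact Submodule.smul_mem _ π h

lemma smul_mem_span_range_colonGenerators (hB : ∀ j, B j = X ^ (j.1 : ℕ) * Y ^ (j.2 : ℕ))
    (hn : 2 ≤ n) {D : A}
    (hD : D ∈ Submodule.span S ((fun j : ℕ × ℕ ↦ X ^ j.1 * Y ^ j.2) '' {j | j.1 + j.2 = n - 2}))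
    {z : A} (hz : z ∈ orderSubmodule π B (n - 1)) :
    π • z ∈ Submodule.span S (Set.range (colonGenerators π B
      (X ^ (n - 1) * Y ^ (n - 1) + algebraMap S A π * D))) := by
  set N := Submodule.span S (Set.range (colonGenerators π B
    (X ^ (n - 1) * Y ^ (n - 1) + algebraMap S A π * D)))
  have hDN : π ^ 2 • D ∈ N := by
    refine (Submodule.span_le (p := N.comap (LinearMap.lsmul S A (π ^ 2)))).2 ?_ hD
    rintro _ ⟨j, hj : j.1 + j.2 = n - 2, rfl⟩
    have h : π ^ 2 • B (⟨j.1, by omega⟩, ⟨j.2, by omega⟩) ∈ N :=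
      sq_smul_mem_span_range_colonGenerators (by simp only; omega)
    rw [hB] at h
    exact h
  rw [← B.sum_repr z, Finset.smul_sum]
  refine Submodule.sum_mem _ fun j _ ↦ ?_
  have hj : colonGenerators π B _ j ∈ N := Submodule.subset_span ⟨j, rfl⟩
  rw [colonGenerators] at hj
  split_ifs at hj with hj₁ hj₂
  · obtain ⟨c, hc⟩ := hz j hj₁
    rw [hc, smul_smul, ← mul_assoc, ← sq, mul_comm, mul_smul]
    exact Submodule.smul_mem _ _ hj
  · exact smul_comm π (B.repr z j) (B j) ▸ Submodule.smul_mem _ _ hj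
  · have h₁ : (j.1 : ℕ) = n - 1 := by omega
    have h₂ : (j.2 : ℕ) = n - 1 := by omega
    have hπj : π • B j ∈ N := by
      convert sub_mem (Submodule.smul_mem _ π hj) hDN using 1
      rw [hB, h₁, h₂, smul_add, ← Algebra.smul_def, smul_smul, ← sq, add_sub_cancel_right]
    exact smul_comm π (B.repr z j) (B j) ▸ Submodule.smul_mem _ _ hπj

lemma colonGenerators_mem_colon (hB : ∀ j, B j = X ^ (j.1 : ℕ) * Y ^ (j.2 : ℕ)) (hn : 2 ≤ n)
    {P : Ideal A} (hXP : X ∈ P) (hYP : Y ∈ P)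
    (hP : P ^ (2 * n - 1) ≤ Ideal.span {algebraMap S A π}) {v E : A} (hv : v ∈ P)
    (hE : E ∈ (Ideal.span {algebraMap S A π ^ 2}).colon
      (((Ideal.span {algebraMap S A π} + Ideal.span {v} * P ^ (n - 2)) * P : Ideal A) : Set A))
    (j : Fin n × Fin n) :
    colonGenerators π B E j ∈ (Ideal.span {algebraMap S A π ^ 2}).colon
      (((Ideal.span {algebraMap S A π} + Ideal.span {v} * P ^ (n - 2)) * P : Ideal A) : Set A) := by
  rw [colonGenerators]
  split_ifs with hj₁ hj₂
  · rw [Algebra.smul_def, map_pow]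
    exact Ideal.mul_mem_right _ _ (Ideal.le_colon (Ideal.mem_span_singleton_self _))
  · rw [Algebra.smul_def]
    have hBj : B j ∈ P ^ (n - 1) := by
      rw [hB]
      exact Ideal.pow_le_pow_right (not_lt.1 hj₁) (pow_mul_pow_mem_pow_add hXP hYP _ _)
    refine mem_colon_of_mul_mem hn hP
      (Ideal.mul_le_left.trans (Ideal.span_singleton_le_span_singleton.2 (dvd_mul_right _ _))) ?_
    rw [mul_assoc, ← pow_sub_one_mul (by omega : n ≠ 0) P]
    exact Ideal.mul_mem_mul (Ideal.mem_span_singleton_self _) (Ideal.mul_mem_mul hBj hv)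
  · exact hE

variable [IsDomain A]

lemma exists_eq_smul_add_of_mem_colon (hB : ∀ j, B j = X ^ (j.1 : ℕ) * Y ^ (j.2 : ℕ))
    (hX : algebraMap S A π ∣ X ^ n) (hY : algebraMap S A π ∣ Y ^ n) (hπ : Prime π)
    (hπA : algebraMap S A π ≠ 0) (hn : 2 ≤ n) {l l' : S} (hl : ¬π ∣ l) {v D y : A}
    (hv : v - (l • X + l' • Y) ∈ Ideal.span {X, Y} ^ 2)
    {J : Ideal A} (hJX : algebraMap S A π * X ∈ J) (hJY : algebraMap S A π * Y ∈ J)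
    (hJv : ∀ s t, s + t + 1 = n → v * (X ^ s * Y ^ t) ∈ J)
    (hE : X ^ (n - 1) * Y ^ (n - 1) + algebraMap S A π * D ∈
      (Ideal.span {algebraMap S A π ^ 2}).colon (J : Set A))
    (hy : y ∈ (Ideal.span {algebraMap S A π ^ 2}).colon (J : Set A)) :
    ∃ c : S, ∃ z ∈ orderSubmodule π B (n - 1),
      y = c • (X ^ (n - 1) * Y ^ (n - 1) + algebraMap S A π * D) + π • z := by
  have hdvd {y z : A} (hy : y ∈ (Ideal.span {algebraMap S A π ^ 2}).colon (J : Set A))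
      (hz : z ∈ J) : algebraMap S A π ^ 2 ∣ y * z :=
    Ideal.mem_span_singleton.1 (Submodule.mem_colon.1 hy z hz)
  have hdvd' {w : A} (hw : algebraMap S A π * w ∈ J) : algebraMap S A π ∣ w * y := by
    have h := hdvd hy hw
    rwa [sq, mul_left_comm, mul_dvd_mul_iff_left hπA, mul_comm] at h
  set top : Fin n × Fin n := (⟨n - 1, by omega⟩, ⟨n - 1, by omega⟩)
  obtain ⟨z, hz⟩ : algebraMap S A π ∣ y - B.repr y top • B top :=
    algebraMap_dvd_of_dvd_repr B fun j ↦ by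
      rw [map_sub, map_smul, Finsupp.sub_apply, Finsupp.smul_apply, B.repr_self_apply]
      split_ifs with hj
      · simp [hj]
      · rw [smul_zero, sub_zero]
        refine dvd_repr_of_dvd_mul hB hX hY y (hdvd' hJX) (hdvd' hJY) ?_
        contrapose! hj
        exact Prod.ext (Fin.ext (by simp only [top]; omega)) (Fin.ext (by simp only [top]; omega))
  have hyE : y = B.repr y top • (X ^ (n - 1) * Y ^ (n - 1) + algebraMap S A π * D) +
      π • (z - B.repr y top • D) := by
    rw [smul_sub, Algebra.smul_def π z, ← hz, hB]
    simp only [top, Algebra.smul_def]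
    ring
  refine ⟨B.repr y top, z - B.repr y top • D, ?_, hyE⟩
  refine mem_orderSubmodule_of_mul_mem hB hX hY hπ hl hv ?_
  refine mem_orderSubmodule_of_dvd_pow_mul_pow_mul hB hX hY fun s t hst ↦ ?_
  have h := hdvd (sub_mem hy (Submodule.smul_of_tower_mem _ (B.repr y top) hE)) (hJv s t hst)
  rw [sub_eq_of_eq_add' hyE, Algebra.smul_def π, mul_assoc, sq, mul_dvd_mul_iff_left hπA,
    ← mul_assoc] at h
  rwa [mul_comm (X ^ s * Y ^ t)]

lemma restrictScalars_colon_eq_span_range_colonGenerators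
    (hB : ∀ j, B j = X ^ (j.1 : ℕ) * Y ^ (j.2 : ℕ))
    (hX : algebraMap S A π ∣ X ^ n) (hY : algebraMap S A π ∣ Y ^ n) (hπ : Prime π)
    (hπA : algebraMap S A π ≠ 0) (hn : 2 ≤ n) {l l' : S} (hl : ¬π ∣ l) {v D : A}
    (hv : v - (l • X + l' • Y) ∈ Ideal.span {X, Y} ^ 2)
    (hD : D ∈ Submodule.span S ((fun j : ℕ × ℕ ↦ X ^ j.1 * Y ^ j.2) '' {j | j.1 + j.2 = n - 2}))
    {P : Ideal A} (hP : P = Ideal.span {algebraMap S A π, X, Y}) {J : Ideal A}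
    (hJ : J = (Ideal.span {algebraMap S A π} + Ideal.span {v} * P ^ (n - 2)) * P)
    (hE : X ^ (n - 1) * Y ^ (n - 1) + algebraMap S A π * D ∈
      (Ideal.span {algebraMap S A π ^ 2}).colon (J : Set A)) :
    ((Ideal.span {algebraMap S A π ^ 2}).colon (J : Set A)).restrictScalars S =
      Submodule.span S (Set.range (colonGenerators π B
        (X ^ (n - 1) * Y ^ (n - 1) + algebraMap S A π * D))) := by
  have hle : Ideal.span {X, Y} ≤ P := hP ▸ Ideal.span_mono (Set.subset_insert _ _)
  have hXP : X ∈ P := hle (Ideal.subset_span (by simp))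
  have hYP : Y ∈ P := hle (Ideal.subset_span (by simp))
  refine le_antisymm (fun y hy ↦ ?_) (Submodule.span_le.2 ?_)
  · have hJp {x : A} (hx : x ∈ P) : algebraMap S A π * x ∈ J :=
      hJ ▸ Ideal.mul_mem_mul (Ideal.mem_sup_left (Ideal.mem_span_singleton_self _)) hx
    have hJv (s t : ℕ) (hst : s + t + 1 = n) : v * (X ^ s * Y ^ t) ∈ J := by
      rw [hJ, add_mul, mul_assoc, ← pow_succ, show n - 2 + 1 = s + t by omega]
      exact Ideal.mem_sup_right (Ideal.mul_mem_mul (Ideal.mem_span_singleton_self v)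
        (pow_mul_pow_mem_pow_add hXP hYP s t))
    obtain ⟨c, z, hz, rfl⟩ := exists_eq_smul_add_of_mem_colon hB hX hY hπ hπA hn hl hv (hJp hXP)
      (hJp hYP) hJv hE hy
    refine add_mem (Submodule.smul_mem _ c (Submodule.subset_span
      ⟨(⟨n - 1, by omega⟩, ⟨n - 1, by omega⟩), ?_⟩))
      (smul_mem_span_range_colonGenerators hB hn hD hz)
    rw [colonGenerators, if_neg (by simp only; omega), if_neg (by simp only; omega)]
  · rintro _ ⟨j, rfl⟩
    subst hJ
    refine colonGenerators_mem_colon hB hn hXP hYP ?_ ?_ hE j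
    · rw [hP]
      exact span_triple_pow_le_span_singleton hX hY
    · rw [← sub_add_cancel v (l • X + l' • Y)]
      exact add_mem (hle (Ideal.pow_le_self two_ne_zero hv))
        (add_mem (Submodule.smul_of_tower_mem _ l hXP) (Submodule.smul_of_tower_mem _ l' hYP))

variable {p : ℕ} {B : Module.Basis (Fin p × Fin p) S A}

lemma exists_restrictScalars_colon_eq_span_range_colonGenerators (hp : p.Prime) (hp2 : p ≠ 2)
    (hpS : Prime (p : S)) (hpA : (p : A) ≠ 0) (hB : ∀ j, B j = X ^ (j.1 : ℕ) * Y ^ (j.2 : ℕ))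
    {h₁ h₂ a b c d e₁ e₂ : S} {i : ℕ} {α β v : A}
    (hX : X ^ p = p * (algebraMap S A a + X * α)) (hY : Y ^ p = p * (algebraMap S A b + Y * β))
    (ha : a = -(i * d * h₁ ^ p) + p * e₁) (hb : b = d * h₂ ^ p + p * e₂) (hi : ¬p ∣ i)
    (hh₂ : ¬(p : S) ∣ h₂) (hc : ¬(p : S) ∣ c)
    (hv : v - c • (h₂ • X + (i * h₁) • Y) ∈ Ideal.span {X, Y} ^ 2)
    {P : Ideal A} (hP : P = Ideal.span {(p : A), X, Y}) {J : Ideal A}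
    (hJ : J = (Ideal.span {(p : A)} + Ideal.span {v} * P ^ (p - 2)) * P) :
    ∃ E, ((Ideal.span {(p : A) ^ 2}).colon (J : Set A)).restrictScalars S =
      Submodule.span S (Set.range (colonGenerators (p : S) B E)) := by
  have hpP : (p : A) ∈ P := hP ▸ Ideal.subset_span (by simp)
  have hXP : X ∈ P := hP ▸ Ideal.subset_span (by simp)
  have hYP : Y ∈ P := hP ▸ Ideal.subset_span (by simp)
  have hle : Ideal.span {X, Y} ≤ P := hP ▸ Ideal.span_mono (Set.subset_insert _ _)
  obtain ⟨D, hD, hDl⟩ := exists_mul_sub_mem_pow (X := X) hp hp2 hi h₁ h₂ d hpP hYP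
  have hDP := mem_pow_of_mem_span_image_antidiagonal hXP hYP hD
  have hDl' : D * (algebraMap S A h₂ * X + algebraMap S A (i * h₁) * Y) +
      (algebraMap S A h₂ * algebraMap S A a * Y ^ (p - 1) +
        algebraMap S A (i * h₁) * algebraMap S A b * X ^ (p - 1)) ∈ P ^ p := by
    have hmul {x : A} (hx : x ∈ P) (r : A) : r * (p * x ^ (p - 1)) ∈ P ^ p :=
      mul_pow_sub_one hp.ne_zero P ▸
        Ideal.mul_mem_left _ r (Ideal.mul_mem_mul hpP (Ideal.pow_mem_pow hx _))
    convert add_mem hDl (add_mem (hmul hYP (algebraMap S A (h₂ * e₁)))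
      (hmul hXP (algebraMap S A (i * h₁ * e₂)))) using 1
    simp only [ha, hb, Algebra.smul_def, map_add, map_neg, map_mul, map_pow, map_natCast]
    ring
  have hE : X ^ (p - 1) * Y ^ (p - 1) + p * D ∈ (Ideal.span {(p : A) ^ 2}).colon (J : Set A) := by
    subst hP hJ
    refine mem_colon_of_mul_mem hp.two_le (span_triple_pow_le_span_singleton ⟨_, hX⟩ ⟨_, hY⟩)
      ((span_singleton_mul_le_span_mul_pow hp.two_le hX hY hDP).trans Ideal.mul_le_left)
      (mul_mem_span_mul_pow_of_sub_mem hp.two_le hX hY hDP hDl' (c := algebraMap S A c) ?_)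
    simpa only [Algebra.smul_def] using Ideal.pow_right_mono hle 2 hv
  rw [smul_add, smul_smul, smul_smul] at hv
  rw [← map_natCast (algebraMap S A)] at *
  exact ⟨_, restrictScalars_colon_eq_span_range_colonGenerators hB ⟨_, hX⟩ ⟨_, hY⟩ hpS hpA
    hp.two_le (hpS.not_dvd_mul hc hh₂) hv hD hP hJ hE⟩

end ColonCoordinates

section PowSub

variable {R : Type*} [CommRing R] {p : ℕ}

lemma exists_pow_eq_mul_add_mul (hp : p.Prime) {x h c : R} (hx : (x + h) ^ p = h ^ p + p * c) :
    ∃ w, x ^ p = p * (c + x * w) ∧ x ∣ w + h ^ (p - 1) := by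
  set t : ℕ → R := fun k ↦ x ^ (k - 1) * h ^ (p - k - 1) * ↑(p.choose k / p)
  refine ⟨-(h * ∑ k ∈ Finset.Ioo 0 p, t k), ?_, ?_⟩
  · have hpow : (x + h) ^ p = x ^ p + h ^ p + p * x * h * ∑ k ∈ Finset.Ioo 0 p, t k :=
      add_pow_prime_eq hp x h
    linear_combination hx - hpow
  · have h₁ : t 1 = h ^ (p - 2) := by
      simp [t, Nat.div_self hp.pos, Nat.sub_sub]
    have hsplit : h ^ (p - 1) = h * h ^ (p - 2) := by
      rw [← pow_succ', show p - 2 + 1 = p - 1 by have := hp.two_le; omega]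
    rw [← Finset.add_sum_erase _ _ (Finset.mem_Ioo.2 ⟨one_pos, hp.one_lt⟩), h₁, hsplit,
      show ∀ u v : R, -(h * (u + v)) + h * u = h * -v by intros; ring, ← Finset.sum_neg_distrib]
    refine dvd_mul_of_dvd_right (Finset.dvd_sum fun k hk ↦ (dvd_neg.2 ?_)) h
    obtain ⟨hk₁, hk₂⟩ := Finset.mem_erase.1 hk
    have hk₀ := (Finset.mem_Ioo.1 hk₂).1
    exact ((dvd_pow_self x (by omega)).mul_right _).mul_right _

lemma mul_add_pow_sub_mem_span_pair_sq (X Y h₁ h₂ : R) {i : ℕ} (hi : i ≠ 0) :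
    (X + h₁) * (Y + h₂) ^ i - h₁ * h₂ ^ i - h₂ ^ (i - 1) * (h₂ * X + i * h₁ * Y) ∈
      Ideal.span {X, Y} ^ 2 := by
  obtain ⟨t, ht⟩ := Polynomial.powAddExpansion h₂ Y i
  have hpow : h₂ ^ i = h₂ ^ (i - 1) * h₂ := (pow_sub_one_mul hi h₂).symm
  have hX : X ∈ Ideal.span {X, Y} := Ideal.subset_span (by simp)
  have hY : Y ∈ Ideal.span {X, Y} := Ideal.subset_span (by simp)
  have heq : (X + h₁) * (Y + h₂) ^ i - h₁ * h₂ ^ i - h₂ ^ (i - 1) * (h₂ * X + i * h₁ * Y) =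
      i * h₂ ^ (i - 1) * (X * Y) + (X + h₁) * t * (Y * Y) := by
    rw [add_comm Y, ht, hpow]
    ring
  rw [heq, sq]
  exact add_mem (Ideal.mul_mem_left _ _ (Ideal.mul_mem_mul hX hY))
    (Ideal.mul_mem_left _ _ (Ideal.mul_mem_mul hY hY))

end PowSub

section ColonSubmodule

open Algebra

variable {S : Type*} [CommRing S] {K : Type*} [Field K] [Algebra S K] {A : Subalgebra S K}

lemma toSubmodule_le_colonSubmodule (J : Ideal A) :
    Subalgebra.toSubmodule A ≤ colonSubmodule S K A (Subtype.val '' (J : Set A)) := by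
  rintro x hx _ ⟨z, -, rfl⟩
  exact A.mul_mem hx z.2

lemma mem_colonSubmodule_image_iff {J : Ideal A} {c : A} (hcJ : c ∈ J) (hc : (c : K) ≠ 0) {x : K} :
    x ∈ colonSubmodule S K A (Subtype.val '' (J : Set A)) ↔
      ∃ y ∈ (Ideal.span {c}).colon (J : Set A), x = (c : K)⁻¹ * y := by
  constructor
  · intro hx
    refine ⟨⟨x * c, hx _ ⟨c, hcJ, rfl⟩⟩, Submodule.mem_colon.2 fun z hz ↦ ?_, ?_⟩
    · refine Ideal.mem_span_singleton.2 ⟨⟨x * z, hx _ ⟨z, hz, rfl⟩⟩, Subtype.ext ?_⟩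
      simp only [smul_eq_mul, MulMemClass.coe_mul]
      ring
    · simp only
      field_simp
  · rintro ⟨y, hy, rfl⟩ _ ⟨z, hz, rfl⟩
    obtain ⟨t, ht⟩ := Ideal.mem_span_singleton.1 (Submodule.mem_colon.1 hy z hz)
    have ht' : (y : K) * z = c * t := congrArg Subtype.val ht
    rw [mul_assoc, ht', inv_mul_cancel_left₀ hc]
    exact t.2

lemma colonSubmodule_image_eq_span_range {J : Ideal A} {c : A} (hcJ : c ∈ J) (hc : (c : K) ≠ 0)
    {ι : Type*} {G : ι → A} (hG : ((Ideal.span {c}).colon (J : Set A)).restrictScalars S =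
      Submodule.span S (Set.range G)) :
    colonSubmodule S K A (Subtype.val '' (J : Set A)) =
      Submodule.span S (Set.range fun j ↦ (c : K)⁻¹ * G j) := by
  have hmap : Submodule.span S (Set.range fun j ↦ (c : K)⁻¹ * G j) =
      (Submodule.span S (Set.range G)).map
        (LinearMap.mulLeft S (c : K)⁻¹ ∘ₗ A.val.toLinearMap) := by
    rw [Submodule.map_span, ← Set.range_comp]
    rfl
  ext x
  rw [hmap, ← hG, mem_colonSubmodule_image_iff hcJ hc]
  exact exists_congr fun y ↦ and_congr Iff.rfl eq_comm

lemma modDepth_span_range_eq_ringKrullDim [IsRegularLocalRing S] {ι : Type*} [Finite ι]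
    [Nonempty ι] {e : ι → K} (he : LinearIndependent S e) :
    (modDepth S (Submodule.span S (Set.range e)) : WithBot ℕ∞) = ringKrullDim S := by
  let b := Module.Basis.span he
  have : Module.Free S (Submodule.span S (Set.range e)) := .of_basis b
  have : Module.Finite S (Submodule.span S (Set.range e)) := .of_basis b
  have : Nontrivial (Submodule.span S (Set.range e)) := b.repr.toEquiv.nontrivial
  exact modDepth_eq_ringKrullDim_of_free _

variable {L : Type*} [Field L] [Algebra S L] [IsFractionRing S L] [Algebra L K]
  [IsScalarTower S L K]

lemma modDepth_colonSubmodule_image_eq_ringKrullDim [IsRegularLocalRing S] {J : Ideal A} {c : A}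
    (hcJ : c ∈ J) (hc : (c : K) ≠ 0) {ι : Type*} [Fintype ι] {G : ι → A}
    (hG : ((Ideal.span {c}).colon (J : Set A)).restrictScalars S = Submodule.span S (Set.range G))
    (hA : Submodule.span L (A : Set K) = ⊤) (hcard : Fintype.card ι = Module.finrank L K)
    (hι : 0 < Fintype.card ι) :
    (modDepth S (colonSubmodule S K A (Subtype.val '' (J : Set A))) : WithBot ℕ∞) =
      ringKrullDim S := by
  have : Nonempty ι := Fintype.card_pos_iff.1 hι
  have hle := toSubmodule_le_colonSubmodule J
  rw [colonSubmodule_image_eq_span_range hcJ hc hG] at hle ⊢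
  refine modDepth_span_range_eq_ringKrullDim
    (linearIndependent_of_span_eq_top_of_card_eq_finrank (L := L) ?_ hcard)
  rw [← hA, Submodule.span_le]
  exact fun x hx ↦ Submodule.span_subset_span S L _ (hle hx)

end ColonSubmodule

section Denominators

open Algebra Polynomial

lemma aeval_derivative_mul_mem_adjoin {T F K : Type*} [CommRing T] [IsDomain T]
    [IsIntegrallyClosed T] [Field F] [Algebra T F] [IsFractionRing T F] [Field K] [Algebra F K]
    [Algebra T K] [IsScalarTower T F K] [FiniteDimensional F K] [Algebra.IsSeparable F K] {x r : K}
    (hx : adjoin F {x} = ⊤) {f : T[X]} (hf : f.Monic) (hfx : aeval x f = 0)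
    (hr : IsIntegral T r) : aeval x (derivative f) * r ∈ adjoin T {x} := by
  have hxT : IsIntegral T x := ⟨f, hf, hfx⟩
  have hdual : r ∈ (traceForm F K).dualSubmodule (Subalgebra.toSubmodule (adjoin T {x})) := by
    intro y hy
    have hy' : IsIntegral T y := adjoin_le_integralClosure hxT hy
    obtain ⟨t, ht⟩ := IsIntegrallyClosed.isIntegral_iff.1
      (isIntegral_trace (L := F) (hr.mul hy'))
    exact Submodule.mem_one.2 ⟨t, ht⟩
  have : Module.IsTorsionFree T K := .trans_faithfulSMul T F K
  have hdvd : minpoly T x ∣ f := minpoly.isIntegrallyClosed_dvd hxT hfx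
  rw [traceForm_dualSubmodule_adjoin T F hx hxT] at hdual
  obtain ⟨y, hy, rfl⟩ := hdual
  obtain ⟨c, rfl⟩ := hdvd
  have hne : aeval x (derivative (minpoly F x)) ≠ 0 :=
    (Algebra.IsSeparable.isSeparable F x).aeval_derivative_ne_zero (minpoly.aeval F x)
  have heq : aeval x (derivative (minpoly T x * c)) =
      aeval x (derivative (minpoly F x)) * aeval x c := by
    rw [minpoly.isIntegrallyClosed_eq_field_fractions' F hxT, derivative_map,
      aeval_map_algebraMap]
    simp
  rw [heq, DistribSMul.toLinearMap_apply, smul_eq_mul, mul_mul_mul_comm,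
    mul_inv_cancel₀ hne, one_mul]
  exact mul_mem (aeval_mem_adjoin_singleton T x) hy

variable {S L K : Type*} [CommRing S] [Field L] [Algebra S L] [IsFractionRing S L] [Field K]
  [Algebra L K] [Algebra S K] [IsScalarTower S L K]

lemma adjoin_fractionField_eq_top (T : Subalgebra S K) {F : Type*} [Field F] [Algebra T F]
    [Algebra F K] [IsScalarTower T F K] {x : K} (hT : adjoin L (insert x (T : Set K)) = ⊤) :
    adjoin F {x} = ⊤ := by
  refine _root_.eq_top_iff.2 fun y _ ↦ ?_
  have hy : y ∈ adjoin L (insert x (T : Set K)) := hT ▸ mem_top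
  induction hy using adjoin_induction with
  | mem y hy =>
    obtain rfl | hy := hy
    · exact subset_adjoin rfl
    · change algebraMap T K ⟨y, hy⟩ ∈ _
      rw [IsScalarTower.algebraMap_apply T F K]
      exact algebraMap_mem _ _
  | algebraMap l =>
    obtain ⟨n, d, -, rfl⟩ := IsFractionRing.div_surjective (A := S) l
    convert algebraMap_mem (adjoin F {x})
      (algebraMap T F (algebraMap S T n) /
        algebraMap T F (algebraMap S T d)) using 1
    simp only [map_div₀, ← IsScalarTower.algebraMap_apply]
  | add y z _ _ hy hz => exact add_mem (hy trivial) (hz trivial)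
  | mul y z _ _ hy hz => exact mul_mem (hy trivial) (hz trivial)

variable {p : ℕ} {f g : S} {ω μ : K}

lemma algebraMap_mul_mem_adjoin_pair_of_isIntegral [CharZero K] (hp : p ≠ 0)
    (hω : ω ^ p = algebraMap S K f) (hKgen : adjoin L ({ω, μ} : Set K) = ⊤)
    [IsIntegrallyClosed (adjoin S ({μ} : Set K))] {r : K} (hr : IsIntegral S r) :
    algebraMap S K f * (p * r) ∈ adjoin S ({ω, μ} : Set K) := by
  let T := adjoin S ({μ} : Set K)
  let F := FractionRing T
  let : Algebra F K := FractionRing.liftAlgebra T K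
  have hF : adjoin F {ω} = ⊤ := by
    refine adjoin_fractionField_eq_top (L := L) T (top_le_iff.1 (hKgen ▸ adjoin_mono ?_))
    exact Set.insert_subset_insert (Set.singleton_subset_iff.2 (self_mem_adjoin_singleton S μ))
  set q : T[X] := X ^ p - C (algebraMap S T f)
  have hq : q.Monic := monic_X_pow_sub_C _ hp
  have hqω : aeval ω q = 0 := by simp [q, hω, ← IsScalarTower.algebraMap_apply]
  have : CharZero F := algebraRat.charZero F
  have hωF : IsIntegral F ω := IsIntegral.tower_top (R := T) ⟨q, hq, hqω⟩
  have : FiniteDimensional F K := by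
    have := hωF.fg_adjoin_singleton
    rw [hF] at this
    exact ⟨this⟩
  have hmem : aeval ω (derivative q) * r ∈ adjoin T {ω} :=
    aeval_derivative_mul_mem_adjoin hF hq hqω hr.tower_top
  have heq : algebraMap S K f * (p * r) = ω * (aeval ω (derivative q) * r) := by
    simp only [q, derivative_sub, derivative_X_pow, derivative_C, sub_zero, map_mul, map_pow,
      aeval_X, map_natCast]
    rw [← hω, ← mul_pow_sub_one hp]
    ring
  rw [heq, Set.insert_eq, Set.union_comm, adjoin_union_eq_adjoin_adjoin]
  exact mul_mem (self_mem_adjoin_singleton T ω) hmem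

lemma natCast_mul_mem_adjoin_pair_of_isIntegral [IsDomain S] [CharZero K] (hp : p ≠ 0)
    (hω : ω ^ p = algebraMap S K f) (hμ : μ ^ p = algebraMap S K g)
    (hKgen : adjoin L ({ω, μ} : Set K) = ⊤) (hdeg : Module.finrank L K = p ^ 2)
    [IsIntegrallyClosed (adjoin S ({ω} : Set K))] [IsIntegrallyClosed (adjoin S ({μ} : Set K))]
    (hg0 : g ≠ 0) (hfg : ∀ s, g ∣ f * s → g ∣ s) {r : K} (hr : IsIntegral S r) :
    p * r ∈ adjoin S ({ω, μ} : Set K) := by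
  obtain ⟨B, -⟩ := exists_basis_adjoin_pair hp hω hμ hKgen hdeg 0 0
  have hf := algebraMap_mul_mem_adjoin_pair_of_isIntegral hp hω hKgen hr
  have hg := algebraMap_mul_mem_adjoin_pair_of_isIntegral hp hμ (Set.pair_comm ω μ ▸ hKgen) hr
  rw [Set.pair_comm] at hg
  have hdvd : algebraMap S (adjoin S {ω, μ}) g ∣ ⟨_, hg⟩ := by
    refine algebraMap_dvd_of_dvd_repr B fun j ↦ hfg _ ⟨B.repr ⟨_, hf⟩ j, ?_⟩
    have heq : f • (⟨_, hg⟩ : adjoin S {ω, μ}) = g • ⟨_, hf⟩ := by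
      refine Subtype.ext ?_
      change f • (algebraMap S K g * (p * r)) = g • (algebraMap S K f * (p * r))
      rw [smul_def, smul_def, mul_left_comm]
    simpa only [map_smul, Finsupp.smul_apply, smul_eq_mul] using congrArg (B.repr · j) heq
  obtain ⟨y, hy⟩ := hdvd
  have hy' : algebraMap S K g * (p * r) = algebraMap S K g * y := congrArg Subtype.val hy
  rw [mul_left_cancel₀ ?_ hy']
  · exact y.2
  · rw [IsScalarTower.algebraMap_apply S L K]
    simpa using hg0

end Denominators

section IntegralElements

open Algebra

lemma mem_of_isIntegral_of_mul_mem {R K : Type*} [CommRing R] [Field K] [Algebra R K]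
    {A : Subalgebra R K} [IsIntegrallyClosed A] {d x : K} (hd : d ∈ A) (hd0 : d ≠ 0)
    (hdx : d * x ∈ A) (hx : IsIntegral R x) : x ∈ A := by
  let F := FractionRing A
  let : Algebra F K := FractionRing.liftAlgebra A K
  set y : F := algebraMap A F ⟨d * x, hdx⟩ / algebraMap A F ⟨d, hd⟩
  have hy : algebraMap F K y = x := by
    rw [map_div₀, ← IsScalarTower.algebraMap_apply, ← IsScalarTower.algebraMap_apply]
    exact mul_div_cancel_left₀ x hd0
  have hyint : IsIntegral A y := by
    rw [← isIntegral_algebraMap_iff (algebraMap F K).injective, hy]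
    exact hx.tower_top
  obtain ⟨z, hz⟩ := IsIntegrallyClosed.isIntegral_iff.1 hyint
  rw [← hy, ← hz, ← IsScalarTower.algebraMap_apply]
  exact z.2

lemma isIntegral_of_sq_eq_mul_add {R A : Type*} [CommRing R] [CommRing A] [Algebra R A]
    {x b c : A} (hb : IsIntegral R b) (hc : IsIntegral R c) (hx : x ^ 2 = b * x + c) :
    IsIntegral R x := by
  have hx' : IsIntegral (integralClosure R A) x := by
    refine ⟨.X ^ 2 - (.C ⟨b, hb⟩ * .X + .C ⟨c, hc⟩), ?_, ?_⟩
    · exact Polynomial.monic_X_pow_sub (Polynomial.degree_linear_le.trans_lt (by decide))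
    · simp [hx, Subalgebra.algebraMap_eq]
  exact isIntegral_trans (A := integralClosure R A) x hx'

lemma isIntegral_pow_sub_one_div {R K : Type*} [CommRing R] [Field K] [Algebra R K] {n : ℕ}
    (hn : 2 ≤ n) {π x b w : K} (hπ : π ≠ 0) (hxn : x ^ n = π * (π * b + x * w))
    (hx : IsIntegral R x) (hb : IsIntegral R b) (hw : IsIntegral R w) :
    IsIntegral R (x ^ (n - 1) / π) := by
  refine isIntegral_of_sq_eq_mul_add (c := x ^ (n - 2) * b) hw ((hx.pow _).mul hb) ?_
  obtain ⟨k, rfl⟩ := Nat.exists_eq_add_of_le' hn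
  simp only [Nat.add_sub_cancel, show k + 2 - 1 = k + 1 from rfl]
  field_simp
  linear_combination x ^ k * hxn

lemma not_algebraMap_dvd_basis {S A ι : Type*} [CommRing S] [CommRing A] [Algebra S A] {π : S}
    (hπ : ¬IsUnit π) (B : Module.Basis ι S A) (j : ι) : ¬algebraMap S A π ∣ B j := fun h ↦
  hπ (isUnit_of_dvd_one (by simpa using dvd_repr_of_algebraMap_dvd B h j))

variable {S L K : Type*} [CommRing S] [Field L] [Algebra S L] [IsFractionRing S L]
  [Field K] [Algebra L K] [Algebra S K] [IsScalarTower S L K] {p : ℕ} {f g h b : S} {ω μ : K}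

lemma not_dvd_of_isIntegrallyClosed_adjoin (hp : p.Prime) (hpS : Prime (p : S))
    (hg : g = h ^ p + b * p) (hω : ω ^ p = algebraMap S K f) (hμ : μ ^ p = algebraMap S K g)
    (hKgen : adjoin L ({ω, μ} : Set K) = ⊤) (hdeg : Module.finrank L K = p ^ 2)
    [IsIntegrallyClosed (adjoin S ({μ} : Set K))] : ¬(p : S) ∣ b := by
  rintro ⟨b, rfl⟩
  obtain ⟨B, hB⟩ := exists_basis_adjoin_pair hp.ne_zero hω hμ hKgen hdeg 0 h
  have hpK : (p : K) ≠ 0 := by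
    rw [← map_natCast (algebraMap S K), IsScalarTower.algebraMap_apply S L K, _root_.map_ne_zero]
    exact (map_ne_zero_iff _ (IsFractionRing.injective S L)).2 hpS.ne_zero
  have hμint : IsIntegral S μ := .of_pow hp.pos (hμ ▸ isIntegral_algebraMap)
  set T := adjoin S ({μ} : Set K)
  have hT (t : T) : IsIntegral S (t : K) := adjoin_le_integralClosure hμint t.2
  let Y : T := ⟨μ, self_mem_adjoin_singleton S μ⟩ - algebraMap S T h
  have hY : (Y + algebraMap S T h) ^ p = algebraMap S T h ^ p + p * (p * algebraMap S T b) := by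
    have hμT : (⟨μ, self_mem_adjoin_singleton S μ⟩ : T) ^ p = algebraMap S T g := Subtype.ext hμ
    rw [sub_add_cancel, hμT, hg]
    simp only [map_add, map_mul, map_pow, map_natCast]
    ring
  obtain ⟨w, hw, -⟩ := exists_pow_eq_mul_add_mul hp hY
  have hwK : (Y : K) ^ p = p * (p * algebraMap S K b + Y * w) := by
    simpa only [map_pow, map_mul, map_add, map_natCast, AlgHom.commutes, Subalgebra.coe_val]
      using congrArg T.val hw
  have hzT : (Y : K) ^ (p - 1) / p ∈ T := by
    refine mem_of_isIntegral_of_mul_mem (natCast_mem T p) hpK ?_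
      (isIntegral_pow_sub_one_div hp.two_le hpK hwK (hT Y) isIntegral_algebraMap (hT w))
    rw [mul_div_cancel₀ _ hpK]
    exact pow_mem Y.2 _
  have hdvd : algebraMap S (adjoin S {ω, μ}) p ∣ (muA ω μ - algebraMap S _ h) ^ (p - 1) := by
    refine ⟨⟨_, adjoin_mono (by simp) hzT⟩, Subtype.ext ?_⟩
    rw [MulMemClass.coe_mul, Subalgebra.coe_algebraMap, map_natCast, mul_div_cancel₀ _ hpK,
      SubmonoidClass.coe_pow]
    rfl
  have hBA : B (⟨0, hp.pos⟩, ⟨p - 1, Nat.pred_lt hp.ne_zero⟩) =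
      (muA ω μ - algebraMap S _ h) ^ (p - 1) := by rw [hB, pow_zero, one_mul]
  exact not_algebraMap_dvd_basis hpS.not_isUnit B _ (hBA ▸ hdvd)

end IntegralElements

section Normality

open IsLocalRing Algebra

lemma map_maximalIdeal_le_of_isMaximal {V E : Type*} [CommRing V] [IsLocalRing V] [CommRing E]
    [Algebra V E] [Algebra.IsIntegral V E] (𝔪 : Ideal E) [𝔪.IsMaximal] :
    (maximalIdeal V).map (algebraMap V E) ≤ 𝔪 := by
  rw [Ideal.map_le_iff_le_comap,
    eq_maximalIdeal (Ideal.isMaximal_comap_of_isIntegral_of_isMaximal (R := V) 𝔪)]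

lemma isUnit_algebraMap_add_mul {V E : Type*} [CommRing V] [IsLocalRing V] [CommRing E]
    [Algebra V E] [Algebra.IsIntegral V E] {y : E} {k : ℕ}
    (hy : y ^ k ∈ (maximalIdeal V).map (algebraMap V E)) {c : V} (hc : IsUnit c) (t : E) :
    IsUnit (algebraMap V E c + y * t) := by
  by_contra h
  obtain ⟨𝔪, h𝔪, hmem⟩ := exists_max_ideal_of_mem_nonunits h
  have hy𝔪 : y ∈ 𝔪 := h𝔪.isPrime.mem_of_pow_mem k (map_maximalIdeal_le_of_isMaximal 𝔪 hy)
  exact h𝔪.ne_top (Ideal.eq_top_of_isUnit_mem _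
    ((Ideal.add_mem_iff_left _ (𝔪.mul_mem_right t hy𝔪)).1 hmem) (hc.map _))

lemma exists_sub_algebraMap_mem_of_adjoin_eq_top {R A : Type*} [CommRing R] [CommRing A]
    [Algebra R A] {s : Set A} (hs : adjoin R s = ⊤) {I : Ideal A}
    (h : ∀ x ∈ s, ∃ r, x - algebraMap R A r ∈ I) (x : A) : ∃ r, x - algebraMap R A r ∈ I := by
  have hle : adjoin R s ≤ (⊥ : Subalgebra R (A ⧸ I)).comap (Ideal.Quotient.mkₐ R I) := by
    refine adjoin_le fun x hx ↦ ?_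
    obtain ⟨r, hr⟩ := h x hx
    exact mem_bot.2 ⟨r, (Ideal.Quotient.mk_eq_mk_iff_sub_mem x _).2 hr |>.symm⟩
  obtain ⟨r, hr⟩ := mem_bot.1 (hle (hs ▸ mem_top : x ∈ adjoin R s))
  exact ⟨r, (Ideal.Quotient.mk_eq_mk_iff_sub_mem x _).1 hr.symm⟩

lemma eq_of_le_of_adjoin_eq_top {V E : Type*} [CommRing V] [IsLocalRing V] [CommRing E]
    [Algebra V E] {s : Set E} (hs : adjoin V s = ⊤) {I 𝔪 : Ideal E} (h𝔪 : 𝔪 ≠ ⊤) (hI : I ≤ 𝔪)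
    (hV : (maximalIdeal V).map (algebraMap V E) ≤ I)
    (h : ∀ x ∈ s, ∃ r, x - algebraMap V E r ∈ I) : I = 𝔪 := by
  refine hI.antisymm fun x hx ↦ ?_
  obtain ⟨r, hr⟩ := exists_sub_algebraMap_mem_of_adjoin_eq_top hs h x
  have hr𝔪 : algebraMap V E r ∈ 𝔪 := by simpa using 𝔪.sub_mem hx (hI hr)
  have hr : r ∈ maximalIdeal V := fun hu ↦
    h𝔪 (Ideal.eq_top_of_isUnit_mem _ hr𝔪 (hu.map _))
  have := I.add_mem ‹x - _ ∈ I› (hV (Ideal.mem_map_of_mem _ hr))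
  rwa [sub_add_cancel] at this

lemma isIntegrallyClosed_localizationAtPrime_of_dvd {E : Type*} [CommRing E] [IsDomain E]
    [IsNoetherianRing E] {𝔪 : Ideal E} [𝔪.IsPrime] {s : Set E} (hs : Ideal.span s = 𝔪) {g : E}
    (hg : g ∈ 𝔪) (h : ∀ x ∈ s, ∃ σ ∉ 𝔪, g ∣ σ * x) :
    IsIntegrallyClosed (Localization.AtPrime 𝔪) := by
  have : IsDomain (Localization.AtPrime 𝔪) :=
    IsLocalization.isDomain_localization 𝔪.primeCompl_le_nonZeroDivisors
  have hmax : maximalIdeal (Localization.AtPrime 𝔪) = Ideal.span {algebraMap E _ g} := by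
    rw [← Localization.AtPrime.map_eq_maximalIdeal]
    refine le_antisymm ?_ ((Ideal.span_singleton_le_iff_mem _).2 (Ideal.mem_map_of_mem _ hg))
    refine (Ideal.map_mono hs.ge).trans ?_
    rw [Ideal.map_span, Ideal.span_le]
    rintro _ ⟨x, hx, rfl⟩
    obtain ⟨σ, hσ, hdvd⟩ := h x hx
    have hσu : IsUnit (algebraMap E (Localization.AtPrime 𝔪) σ) :=
      IsLocalization.map_units _ (⟨σ, hσ⟩ : 𝔪.primeCompl)
    rw [SetLike.mem_coe, Ideal.mem_span_singleton, ← hσu.dvd_mul_left, ← map_mul]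
    exact map_dvd _ hdvd
  have : IsPrincipalIdealRing (Localization.AtPrime 𝔪) :=
    ((tfae_of_isNoetherianRing_of_isLocalRing_of_isDomain
      (Localization.AtPrime 𝔪)).out 4 0).1 (⟨_, hmax⟩ : Submodule.IsPrincipal _)
  infer_instance

-- At a maximal ideal exactly one of `e` and `e - τ` is a unit, and accordingly the ideal is locally
-- generated by `s` or by `y`.
lemma isIntegrallyClosed_of_pow_eq_mul {V E : Type*} [CommRing V] [IsLocalRing V] [CommRing E]
    [IsDomain E] [IsNoetherianRing E] [Algebra V E] [Algebra.IsIntegral V E] {y s e : E}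
    (hgen : adjoin V {y, s, e} = ⊤) (hV : (maximalIdeal V).map (algebraMap V E) ≤ Ideal.span {y})
    {k : ℕ} (hy : y ^ k ∈ (maximalIdeal V).map (algebraMap V E)) {n : ℕ} (hn : n ≠ 0)
    (hse : s ^ n = y * e) {τ : V} (hτ : IsUnit τ) (hsτ : y ∣ s * (e - algebraMap V E τ))
    (heτ : y ∣ e * (e - algebraMap V E τ)) : IsIntegrallyClosed E := by
  refine .of_localization_maximal fun 𝔪 _ h𝔪 ↦ ?_
  have hy𝔪 : y ∈ 𝔪 := h𝔪.isPrime.mem_of_pow_mem k (map_maximalIdeal_le_of_isMaximal 𝔪 hy)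
  have hs𝔪 : s ∈ 𝔪 := h𝔪.isPrime.mem_of_pow_mem n (hse ▸ 𝔪.mul_mem_right e hy𝔪)
  have hspan (t : E) (ht : t ∈ 𝔪) (r : V) (hr : e - algebraMap V E r = t) :
      Ideal.span {y, s, t} = 𝔪 := by
    refine eq_of_le_of_adjoin_eq_top hgen h𝔪.ne_top ?_ (hV.trans (Ideal.span_mono (by simp))) ?_
    · rw [Ideal.span_le]
      rintro x (rfl | rfl | rfl) <;> assumption
    · rintro x (rfl | rfl | rfl)
      · exact ⟨0, by simpa using Ideal.subset_span (by simp)⟩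
      · exact ⟨0, by simpa using Ideal.subset_span (by simp)⟩
      · exact ⟨r, hr ▸ Ideal.subset_span (by simp)⟩
  have hne : ¬(e ∈ 𝔪 ∧ e - algebraMap V E τ ∈ 𝔪) := fun h ↦
    h𝔪.ne_top (Ideal.eq_top_of_isUnit_mem _ (by simpa using 𝔪.sub_mem h.1 h.2)
      (hτ.map (algebraMap V E)))
  obtain ⟨t, ht⟩ := heτ
  have hmem : e * (e - algebraMap V E τ) ∈ 𝔪 := ht ▸ 𝔪.mul_mem_right t hy𝔪
  obtain he | he := h𝔪.isPrime.mem_or_mem hmem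
  · have hσ : e - algebraMap V E τ ∉ 𝔪 := fun h ↦ hne ⟨he, h⟩
    refine isIntegrallyClosed_localizationAtPrime_of_dvd (hspan e he 0 (by simp)) hy𝔪 ?_
    rintro x (rfl | rfl | rfl)
    · exact ⟨_, hσ, dvd_mul_left _ _⟩
    · exact ⟨_, hσ, by rwa [mul_comm]⟩
    · exact ⟨_, hσ, by rw [mul_comm, ht]; exact dvd_mul_right _ _⟩
  · have he' : e ∉ 𝔪 := fun h ↦ hne ⟨h, he⟩
    refine isIntegrallyClosed_localizationAtPrime_of_dvd (hspan _ he τ rfl) hs𝔪 ?_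
    rintro x (rfl | rfl | rfl)
    · exact ⟨_, he', by rw [mul_comm, ← hse]; exact dvd_pow_self s hn⟩
    · exact ⟨_, he', dvd_mul_left _ _⟩
    · refine ⟨_, fun h ↦ he' (h𝔪.isPrime.mem_of_pow_mem 2 h), ?_⟩
      rw [sq, mul_assoc, ht, ← mul_assoc, mul_comm e, ← hse]
      exact (dvd_pow_self s hn).mul_right t

end Normality

section QuotientAlgebra

open IsLocalRing Algebra

variable {V K : Type*} [CommRing V] [IsLocalRing V] [IsNoetherianRing V] [Field K] [Algebra V K]
  {π : V}

lemma isIntegrallyClosed_adjoin_of_pow_eq_mul (hπ : maximalIdeal V = Ideal.span {π})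
    {Y s e u η : K} (hY : IsIntegral V Y) (hs : IsIntegral V s) (he : IsIntegral V e)
    (hu : u ∈ adjoin V {Y, s, e}) (hη : η ∈ adjoin V {Y, s, e}) {k n : ℕ} (hk : k ≠ 0)
    (hn : n ≠ 0) (hYu : Y ^ k = algebraMap V K π * u) (hYη : algebraMap V K π = Y ^ k * η)
    (hse : s ^ n = Y * e) {τ : V} (hτ : IsUnit τ) {t₁ t₂ : K} (ht₁ : t₁ ∈ adjoin V {Y, s, e})
    (ht₂ : t₂ ∈ adjoin V {Y, s, e}) (hsτ : s * (e - algebraMap V K τ) = Y * t₁)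
    (heτ : e * (e - algebraMap V K τ) = Y * t₂) : IsIntegrallyClosed (adjoin V {Y, s, e}) := by
  have : IsNoetherianRing (adjoin V {Y, s, e}) :=
    isNoetherianRing_of_fg (Subalgebra.fg_def.2 ⟨_, by simp, rfl⟩)
  have : Algebra.IsIntegral V (adjoin V {Y, s, e}) := .adjoin (by simp [hY, hs, he])
  have hmem (x : K) (hx : x ∈ ({Y, s, e} : Set K)) : x ∈ adjoin V {Y, s, e} := subset_adjoin hx
  have hgen : adjoin V {(⟨Y, hmem Y (by simp)⟩ : adjoin V {Y, s, e}), ⟨s, hmem s (by simp)⟩,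
      ⟨e, hmem e (by simp)⟩} = ⊤ := by
    convert adjoin_adjoin_coe_preimage (R := V) (s := {Y, s, e}) using 2
    ext x
    simp [Subtype.ext_iff]
  have hmap : (maximalIdeal V).map (algebraMap V (adjoin V {Y, s, e})) =
      Ideal.span {algebraMap V (adjoin V {Y, s, e}) π} := by
    rw [hπ, Ideal.map_span, Set.image_singleton]
  refine isIntegrallyClosed_of_pow_eq_mul hgen ?_ (k := k) ?_ hn (Subtype.ext hse) hτ
    ⟨⟨t₁, ht₁⟩, Subtype.ext hsτ⟩ ⟨⟨t₂, ht₂⟩, Subtype.ext heτ⟩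
  · rw [hmap, Ideal.span_singleton_le_span_singleton]
    exact (dvd_pow_self _ hk).trans ⟨⟨η, hη⟩, Subtype.ext hYη⟩
  · rw [hmap, Ideal.mem_span_singleton]
    exact ⟨⟨u, hu⟩, Subtype.ext hYu⟩

lemma sub_algebraMap_eq_mul {V K : Type*} [CommRing V] [Field K] [Algebra V K]
    {Y v η w β w' : K} (hY : Y ≠ 0) {b b' c : V} (hb : b * b' = 1)
    (hηb : η * (algebraMap V K b + Y * β) = 1) (hwc : w + algebraMap V K c = v * w') :
    η * w - algebraMap V K (-(c * b')) =
      Y * (η * (v / Y) * w' + algebraMap V K (c * b') * η * β) := by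
  have hbK : algebraMap V K b * algebraMap V K b' = 1 := by rw [← map_mul, hb, map_one]
  have hvY : Y * (v / Y) = v := mul_div_cancel₀ v hY
  simp only [map_neg, map_mul]
  linear_combination η * hwc - algebraMap V K c * algebraMap V K b' * hηb +
    algebraMap V K c * η * hbK - η * w' * hvY

section Relations

variable {K : Type*} [Field K] {p : ℕ} {Y v η π y w : K}

lemma div_pow_of_pow_eq (hY : Y ≠ 0) (hπ : π = Y ^ p * η) (hv : v ^ p = π * (π * y + v * w)) :
    (v / Y) ^ p = η * (π * y + v * w) := by
  rw [div_pow, hv, hπ]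
  field_simp

lemma div_mul_pow_sub_one_div (hp : p ≠ 0) (hY : Y ≠ 0) (hπ : π = Y ^ p * η)
    (hv : v ^ p = π * (π * y + v * w)) :
    v / Y * (v ^ (p - 1) / Y ^ p) = Y ^ (p - 1) * η ^ 2 * y + v / Y * (η * w) := by
  obtain ⟨p, rfl⟩ := Nat.exists_eq_succ_of_ne_zero hp
  rw [Nat.succ_eq_add_one, Nat.add_sub_cancel] at *
  subst hπ
  field_simp
  linear_combination hv

lemma pow_sub_one_div_sq (hp : 2 ≤ p) (hY : Y ≠ 0) (hπ : π = Y ^ p * η)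
    (hv : v ^ p = π * (π * y + v * w)) :
    (v ^ (p - 1) / Y ^ p) ^ 2 = v ^ (p - 2) * η ^ 2 * y + v ^ (p - 1) / Y ^ p * (η * w) := by
  obtain ⟨p, rfl⟩ := Nat.exists_eq_add_of_le' hp
  simp only [Nat.add_sub_cancel, show p + 2 - 1 = p + 1 from rfl] at *
  subst hπ
  field_simp
  linear_combination v ^ p * hv

end Relations

lemma adjoin_pair_le_adjoin_div {V K : Type*} [CommRing V] [Field K] [Algebra V K] {Y : K}
    (hY : Y ≠ 0) (v e : K) : adjoin V {Y, v} ≤ adjoin V {Y, v / Y, e} := by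
  refine adjoin_le (Set.insert_subset (subset_adjoin (by simp)) (Set.singleton_subset_iff.2 ?_))
  have hv : v / Y * Y ∈ adjoin V {Y, v / Y, e} :=
    mul_mem (subset_adjoin (by simp)) (subset_adjoin (by simp))
  rwa [div_mul_cancel₀ v hY] at hv

variable {p : ℕ} {Y v η y w : K}

lemma isIntegrallyClosed_adjoin_div (hp : 3 ≤ p) (hπ : maximalIdeal V = Ideal.span {π})
    (hY : IsIntegral V Y) (hv : IsIntegral V v) (hη : η ∈ adjoin V {Y, v})
    (hy : y ∈ adjoin V {Y, v}) (hw : w ∈ adjoin V {Y, v}) (hπ0 : algebraMap V K π ≠ 0)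
    (hYη : algebraMap V K π = Y ^ p * η)
    (hvp : v ^ p = algebraMap V K π * (algebraMap V K π * y + v * w)) {u : K}
    (hu : u ∈ adjoin V {Y, v}) (hYu : Y ^ p = algebraMap V K π * u) {τ : V} (hτ : IsUnit τ) {t : K}
    (ht : t ∈ adjoin V {Y, v / Y, v ^ (p - 1) / Y ^ p})
    (hτt : η * w - algebraMap V K τ = Y * t) :
    IsIntegrallyClosed (adjoin V {Y, v / Y, v ^ (p - 1) / Y ^ p}) := by
  have hY0 : Y ≠ 0 := by
    rintro rfl
    exact hπ0 (by rw [hYη, zero_pow (by lia), zero_mul])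
  have hs := div_pow_of_pow_eq hY0 hYη hvp
  have hse := div_mul_pow_sub_one_div (by lia) hY0 hYη hvp
  have he := pow_sub_one_div_sq (by lia) hY0 hYη hvp
  have heπ : v ^ (p - 1) / Y ^ p = η * (v ^ (p - 1) / algebraMap V K π) := by
    have hη0 := right_ne_zero_of_mul (hYη ▸ hπ0)
    rw [hYη]
    field_simp
  have hvs : v = Y * (v / Y) := (mul_div_cancel₀ v hY0).symm
  have hsp : (v / Y) ^ (p - 1) = Y * (v ^ (p - 1) / Y ^ p) := by
    rw [div_pow, ← mul_pow_sub_one (by lia : p ≠ 0) Y]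
    field_simp
  have hint : adjoin V {Y, v} ≤ integralClosure V K := adjoin_le (by simp [Set.insert_subset_iff,
    mem_integralClosure_iff, hY, hv])
  have hE := adjoin_pair_le_adjoin_div (V := V) hY0 v (v ^ (p - 1) / Y ^ p)
  set s := v / Y
  set e := v ^ (p - 1) / Y ^ p
  have hYE : Y ∈ adjoin V {Y, s, e} := subset_adjoin (by simp)
  have hsE : s ∈ adjoin V {Y, s, e} := subset_adjoin (by simp)
  have heE : e ∈ adjoin V {Y, s, e} := subset_adjoin (by simp)
  have hvE : v ∈ adjoin V {Y, s, e} := hE (subset_adjoin (by simp))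
  refine isIntegrallyClosed_adjoin_of_pow_eq_mul hπ hY ?_ ?_ (hE hu) (hE hη) (by lia) (by lia)
    hYu hYη hsp hτ (t₁ := Y ^ (p - 2) * η ^ 2 * y + s * t)
    (t₂ := s * v ^ (p - 3) * η ^ 2 * y + e * t) ?_ ?_ ?_ ?_
  · refine .of_pow (by lia : 0 < p) (hs ▸ hint (mul_mem hη (add_mem ?_ ?_)))
    · exact mul_mem (algebraMap_mem _ _) hy
    · exact mul_mem (subset_adjoin (by simp)) hw
  · exact heπ ▸ (hint hη).mul
      (isIntegral_pow_sub_one_div (by lia) hπ0 hvp hv (hint hy) (hint hw))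
  · exact add_mem (mul_mem (mul_mem (pow_mem hYE _) (pow_mem (hE hη) _)) (hE hy)) (mul_mem hsE ht)
  · exact add_mem (mul_mem (mul_mem (mul_mem hsE (pow_mem hvE _)) (pow_mem (hE hη) _)) (hE hy))
      (mul_mem heE ht)
  · have hYp : Y ^ (p - 1) = Y * Y ^ (p - 2) := by rw [← pow_succ']; congr 1; lia
    linear_combination hse + s * hτt + η ^ 2 * y * hYp
  · have hvp' : v ^ (p - 2) = Y * s * v ^ (p - 3) := by rw [← hvs, ← pow_succ']; congr 1; lia
    linear_combination he + e * hτt + η ^ 2 * y * hvp'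

lemma isIntegrallyClosed_adjoin_div_of_isUnit (hp : 3 ≤ p)
    (hπ : maximalIdeal V = Ideal.span {π}) (hπ0 : algebraMap V K π ≠ 0)
    (hY : IsIntegral V Y) (hv : IsIntegral V v) {β w' : K} (hβ : β ∈ adjoin V {Y, v})
    (hη : η ∈ adjoin V {Y, v}) (hy : y ∈ adjoin V {Y, v}) (hw : w ∈ adjoin V {Y, v})
    (hw' : w' ∈ adjoin V {Y, v}) {b c : V} (hb : IsUnit b) (hc : IsUnit c)
    (hYβ : Y ^ p = algebraMap V K π * (algebraMap V K b + Y * β))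
    (hηβ : η * (algebraMap V K b + Y * β) = 1)
    (hvw : v ^ p = algebraMap V K π * (algebraMap V K π * y + v * w))
    (hww' : w + algebraMap V K c = v * w') :
    IsIntegrallyClosed (adjoin V {Y, v / Y, v ^ (p - 1) / Y ^ p}) := by
  have hY0 : Y ≠ 0 := by
    rintro rfl
    rw [zero_pow (by lia), zero_mul, add_zero, eq_comm, mul_eq_zero] at hYβ
    obtain h | h := hYβ
    · exact hπ0 h
    · simp [h] at hηβ
  have hYη : algebraMap V K π = Y ^ p * η := by
    rw [hYβ, mul_assoc, mul_comm _ η, hηβ, mul_one]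
  obtain ⟨b', hb'⟩ := hb.exists_right_inv
  have hE := adjoin_pair_le_adjoin_div (V := V) hY0 v (v ^ (p - 1) / Y ^ p)
  have hu : algebraMap V K b + Y * β ∈ adjoin V {Y, v} :=
    add_mem (algebraMap_mem _ b) (mul_mem (subset_adjoin (by simp)) hβ)
  refine isIntegrallyClosed_adjoin_div hp hπ hY hv hη hy hw hπ0 hYη hvw hu hYβ
    (hc.mul (.of_mul_eq_one_right _ hb')).neg ?_ (sub_algebraMap_eq_mul hY0 hb' hηβ hww')
  exact add_mem (mul_mem (mul_mem (hE hη) (subset_adjoin (by simp))) (hE hw'))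
    (mul_mem (mul_mem (algebraMap_mem _ _) (hE hη)) (hE hβ))

end QuotientAlgebra

section StableModule

open Algebra

variable {V K : Type*} [CommRing V] [Field K] [Algebra V K]

/-- The `B`-submodule of `K` generated by the monomials `v ^ a * Y ^ b` of degree at least `p` other
than `Y ^ p`. For `v = ωμ ^ i - h₁h₂ ^ i`, `Y = μ - h₂` and `B` the localization of `S[ω, μ]` at the
prime `(p)` of `S`, it is the localization of `I * P`. -/
def monomialSpan (B : Subalgebra V K) (p : ℕ) (Y v : K) : Submodule B K :=
  .span B {x | ∃ a b, p ≤ a + b ∧ (1 ≤ a ∨ p < b) ∧ x = v ^ a * Y ^ b}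

variable {B : Subalgebra V K} {p : ℕ} {Y v η π y w x z : K}

lemma pow_mul_pow_mem_monomialSpan {a b : ℕ} (hab : p ≤ a + b) (h : 1 ≤ a ∨ p < b) :
    v ^ a * Y ^ b ∈ monomialSpan B p Y v :=
  Submodule.subset_span ⟨a, b, hab, h, rfl⟩

lemma mul_mem_of_mem_subalgebra {N : Submodule B K} (hx : x ∈ B) (hz : z ∈ N) : x * z ∈ N :=
  N.smul_mem ⟨x, hx⟩ hz

lemma mul_mem_monomialSpan_of_forall_pow_mul_pow {t : K}
    (h : ∀ a b, p ≤ a + b → (1 ≤ a ∨ p < b) → t * (v ^ a * Y ^ b) ∈ monomialSpan B p Y v)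
    (hz : z ∈ monomialSpan B p Y v) : t * z ∈ monomialSpan B p Y v := by
  have hle : monomialSpan B p Y v ≤ (monomialSpan B p Y v).comap (LinearMap.mulLeft B t) := by
    refine Submodule.span_le.2 ?_
    rintro _ ⟨a, b, hab, h', rfl⟩
    exact h a b hab h'
  exact hle hz

lemma div_mul_mem_monomialSpan (hp : 2 ≤ p) (hη : η ∈ B) (hy : y ∈ B) (hw : w ∈ B) (hY : Y ≠ 0)
    (hπ : π = Y ^ p * η) (hv : v ^ p = π * (π * y + v * w)) (hz : z ∈ monomialSpan B p Y v) :
    v / Y * z ∈ monomialSpan B p Y v := by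
  refine mul_mem_monomialSpan_of_forall_pow_mul_pow (fun a b hab h ↦ ?_) hz
  obtain _ | b := b
  · obtain ⟨a, rfl⟩ := Nat.exists_eq_add_of_le' hab
    obtain ⟨p, rfl⟩ := Nat.exists_eq_add_of_le' hp
    have heq : v / Y * (v ^ (a + (p + 2)) * Y ^ 0) =
        η ^ 2 * y * (v ^ (a + 1) * Y ^ (2 * p + 3)) + η * w * (v ^ (a + 2) * Y ^ (p + 1)) := by
      rw [pow_add v a, hv, hπ]
      field_simp
      ring
    rw [heq]
    exact add_mem
      (mul_mem_of_mem_subalgebra (mul_mem (pow_mem hη _) hy)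
        (pow_mul_pow_mem_monomialSpan (by lia) (by lia)))
      (mul_mem_of_mem_subalgebra (mul_mem hη hw)
        (pow_mul_pow_mem_monomialSpan (by lia) (by lia)))
  · have heq : v / Y * (v ^ a * Y ^ (b + 1)) = v ^ (a + 1) * Y ^ b := by
      field_simp
      ring
    exact heq ▸ pow_mul_pow_mem_monomialSpan (by lia) (by lia)

lemma pow_sub_one_div_mul_mem_monomialSpan (hp : 2 ≤ p) (hη : η ∈ B) (hy : y ∈ B) (hw : w ∈ B)
    (hY : Y ≠ 0) (hπ : π = Y ^ p * η) (hv : v ^ p = π * (π * y + v * w))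
    (hz : z ∈ monomialSpan B p Y v) : v ^ (p - 1) / Y ^ p * z ∈ monomialSpan B p Y v := by
  refine mul_mem_monomialSpan_of_forall_pow_mul_pow (fun a b hab h ↦ ?_) hz
  obtain _ | a := a
  · obtain ⟨b, rfl⟩ := Nat.exists_eq_add_of_le' (by lia : p ≤ b)
    have heq : v ^ (p - 1) / Y ^ p * (v ^ 0 * Y ^ (b + p)) = v ^ (p - 1) * Y ^ b := by
      field_simp
      ring
    exact heq ▸ pow_mul_pow_mem_monomialSpan (by lia) (by lia)
  · have heq : v ^ (p - 1) / Y ^ p * (v ^ (a + 1) * Y ^ b) =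
        η ^ 2 * y * (v ^ a * Y ^ (b + p)) + η * w * (v ^ (a + 1) * Y ^ b) := by
      have hvp : v ^ (p - 1) * v = π * (π * y + v * w) := by rw [pow_sub_one_mul (by lia), hv]
      subst hπ
      field_simp
      linear_combination v ^ a * Y ^ b * hvp
    rw [heq]
    exact add_mem
      (mul_mem_of_mem_subalgebra (mul_mem (pow_mem hη _) hy)
        (pow_mul_pow_mem_monomialSpan (by lia) (by lia)))
      (mul_mem_of_mem_subalgebra (mul_mem hη hw) (pow_mul_pow_mem_monomialSpan hab h))

lemma mul_mem_of_mem_adjoin {N : Submodule B K} {s : Set K} (h : ∀ x ∈ s, ∀ z ∈ N, x * z ∈ N)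
    (hx : x ∈ adjoin V s) (hz : z ∈ N) : x * z ∈ N := by
  induction hx using adjoin_induction generalizing z with
  | mem x hx => exact h x hx z hz
  | algebraMap r => exact mul_mem_of_mem_subalgebra (B.algebraMap_mem r) hz
  | add x y _ _ hx hy => exact add_mul x y z ▸ add_mem (hx hz) (hy hz)
  | mul x y _ _ hx hy => exact mul_assoc x y z ▸ hx (hy hz)

lemma mul_mem_monomialSpan_of_mem_adjoin_div (hp : 2 ≤ p) (hYB : Y ∈ B) (hη : η ∈ B) (hy : y ∈ B)
    (hw : w ∈ B) (hY : Y ≠ 0) (hπ : π = Y ^ p * η) (hv : v ^ p = π * (π * y + v * w))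
    (hx : x ∈ adjoin V {Y, v / Y, v ^ (p - 1) / Y ^ p}) (hz : z ∈ monomialSpan B p Y v) :
    x * z ∈ monomialSpan B p Y v := by
  refine mul_mem_of_mem_adjoin ?_ hx hz
  rintro _ (rfl | rfl | rfl) z hz
  · exact mul_mem_of_mem_subalgebra hYB hz
  · exact div_mul_mem_monomialSpan hp hη hy hw hY hπ hv hz
  · exact pow_sub_one_div_mul_mem_monomialSpan hp hη hy hw hY hπ hv hz

end StableModule

section LocalData

open IsLocalRing Algebra

variable {V K : Type*} [CommRing V] [Field K] [Algebra V K] {p : ℕ}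

lemma exists_mem_pow_eq_mul_add_mul {B : Subalgebra V K} (hp : p.Prime) {x h c : K} (hx : x ∈ B)
    (hh : h ∈ B) (hc : c ∈ B) (hxp : (x + h) ^ p = h ^ p + p * c) :
    ∃ w ∈ B, x ^ p = p * (c + x * w) ∧ ∃ w' ∈ B, w + h ^ (p - 1) = x * w' := by
  obtain ⟨w, hw, w', hw'⟩ := exists_pow_eq_mul_add_mul (x := (⟨x, hx⟩ : B)) (h := ⟨h, hh⟩)
    (c := ⟨c, hc⟩) hp (Subtype.ext hxp)
  exact ⟨w, w.2, congrArg B.val hw, w', w'.2, congrArg B.val hw'⟩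

variable [IsLocalRing V]

lemma exists_mem_mul_algebraMap_add_mul_eq_one {B : Subalgebra V K} [Algebra.IsIntegral V B]
    {x u t : K} (hx : x ∈ B) (hu : u ∈ B) (ht : t ∈ B) {k : ℕ} {π c : V} (hπ : π ∈ maximalIdeal V)
    (hxk : x ^ k = algebraMap V K π * u) (hc : IsUnit c) :
    ∃ η ∈ B, η * (algebraMap V K c + x * t) = 1 := by
  have hmem : (⟨x, hx⟩ : B) ^ k ∈ (maximalIdeal V).map (algebraMap V B) := by
    rw [show (⟨x, hx⟩ : B) ^ k = algebraMap V B π * ⟨u, hu⟩ from Subtype.ext hxk]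
    exact Ideal.mul_mem_right _ _ (Ideal.mem_map_of_mem _ hπ)
  obtain ⟨η, hη⟩ := (isUnit_algebraMap_add_mul hmem hc ⟨t, ht⟩).exists_left_inv
  exact ⟨η, η.2, congrArg B.val hη⟩

variable {Y v : K} {h h₂ b y : V}

lemma exists_mem_adjoin_pow_eq_natCast_mul (hp : p.Prime)
    (hY : (Y + algebraMap V K h₂) ^ p = algebraMap V K h₂ ^ p + p * algebraMap V K b)
    [Algebra.IsIntegral V (adjoin V {Y, v})] (hpV : (p : V) ∈ maximalIdeal V) (hb : IsUnit b) :
    ∃ β ∈ adjoin V {Y, v}, ∃ η ∈ adjoin V {Y, v},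
      Y ^ p = p * (algebraMap V K b + Y * β) ∧ η * (algebraMap V K b + Y * β) = 1 := by
  have hYB : Y ∈ adjoin V {Y, v} := subset_adjoin (by simp)
  obtain ⟨β, hβ, hYβ, -⟩ := exists_mem_pow_eq_mul_add_mul hp hYB (algebraMap_mem _ h₂)
    (algebraMap_mem _ b) hY
  obtain ⟨η, hη, hη1⟩ := exists_mem_mul_algebraMap_add_mul_eq_one hYB
    (add_mem (algebraMap_mem _ b) (mul_mem hYB hβ)) hβ hpV (by rw [map_natCast, hYβ]) hb
  exact ⟨β, hβ, η, hη, hYβ, hη1⟩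

lemma mul_mem_monomialSpan_of_isIntegral [IsNoetherianRing V] (hp : p.Prime) (hp3 : 3 ≤ p)
    (hpK : (p : K) ≠ 0) (hpV : maximalIdeal V = Ideal.span {(p : V)})
    [Algebra.IsIntegral V (adjoin V {Y, v})]
    (hY : (Y + algebraMap V K h₂) ^ p = algebraMap V K h₂ ^ p + p * algebraMap V K b)
    (hb : IsUnit b)
    (hv : (v + algebraMap V K h) ^ p = algebraMap V K h ^ p + p * (p * algebraMap V K y))
    (hh : IsUnit h) {r z : K} (hr : IsIntegral V r) (hpr : p * r ∈ adjoin V {Y, v})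
    (hz : z ∈ monomialSpan (adjoin V {Y, v}) p Y v) :
    r * z ∈ monomialSpan (adjoin V {Y, v}) p Y v := by
  have hYB : Y ∈ adjoin V {Y, v} := subset_adjoin (by simp)
  have hvB : v ∈ adjoin V {Y, v} := subset_adjoin (by simp)
  have hyB : algebraMap V K y ∈ adjoin V {Y, v} := algebraMap_mem _ y
  have hint : adjoin V {Y, v} ≤ integralClosure V K := le_integralClosure_iff_isIntegral.2 ‹_›
  obtain ⟨β, hβ, η, hη, hYβ, hηβ⟩ := exists_mem_adjoin_pow_eq_natCast_mul (v := v) hp hY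
    (hpV ▸ Ideal.mem_span_singleton_self _) hb
  obtain ⟨w, hw, hvw, w', hw', hww'⟩ := exists_mem_pow_eq_mul_add_mul hp hvB
    (algebraMap_mem _ h) (mul_mem (natCast_mem _ p) hyB) hv
  have hpη : (p : K) = Y ^ p * η := by rw [hYβ, mul_assoc, mul_comm _ η, hηβ, mul_one]
  have hY0 : Y ≠ 0 := by
    rintro rfl
    exact hpK (by rw [hpη, zero_pow hp.ne_zero, zero_mul])
  have hic : IsIntegrallyClosed (adjoin V {Y, v / Y, v ^ (p - 1) / Y ^ p}) :=
    isIntegrallyClosed_adjoin_div_of_isUnit hp3 hpV (by simpa) (hint hYB) (hint hvB) hβ hη hyB hw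
      hw' hb (hh.pow (p - 1)) (by rwa [map_natCast]) hηβ (by rwa [map_natCast])
      (by rw [map_pow, hww'])
  have hrE : r ∈ adjoin V {Y, v / Y, v ^ (p - 1) / Y ^ p} :=
    mem_of_isIntegral_of_mul_mem (natCast_mem _ p) hpK (adjoin_pair_le_adjoin_div hY0 _ _ hpr) hr
  exact mul_mem_monomialSpan_of_mem_adjoin_div hp.two_le hYB hη hyB hw hY0 hpη hvw hrE hz

end LocalData

section ColonStable

open Algebra

lemma span_pair_pow_le {R : Type*} [CommRing R] {x y : R} {I : Ideal R} {n : ℕ}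
    (h : ∀ a b, a + b = n → x ^ a * y ^ b ∈ I) : Ideal.span {x, y} ^ n ≤ I := by
  rw [Ideal.span_insert, ← Submodule.add_eq_sup, add_pow]
  refine Finset.sum_induction _ (· ≤ I) (fun _ _ ↦ sup_le) bot_le fun a ha ↦ ?_
  rw [Ideal.span_singleton_pow, Ideal.span_singleton_pow, Ideal.span_singleton_mul_span_singleton]
  exact Ideal.mul_le_left.trans ((Ideal.span_singleton_le_iff_mem I).2
    (h a (n - a) (Nat.add_sub_of_le (Finset.mem_range_succ_iff.1 ha))))

lemma span_add_span_mul_pow_mul_le {R : Type*} [CommRing R] {π x y : R} {I : Ideal R} {n : ℕ}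
    (hn : 2 ≤ n) (hx : π * x ∈ I) (hy : π * y ∈ I)
    (h : ∀ a b, n ≤ a + b → 1 ≤ a → x ^ a * y ^ b ∈ I) :
    (Ideal.span {π} + Ideal.span {x} * Ideal.span {x, y} ^ (n - 2)) * Ideal.span {x, y} ≤ I := by
  rw [add_mul, mul_assoc, ← pow_succ, show n - 2 + 1 = n - 1 by lia]
  refine sup_le ?_ ?_
  · rw [Ideal.span_mul_span', Ideal.span_le]
    rintro _ ⟨_, rfl, _, rfl | rfl, rfl⟩
    exacts [hx, hy]
  · refine Ideal.span_singleton_mul_le_iff.2 fun z hz ↦ ?_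
    have hle : Ideal.span {x, y} ^ (n - 1) ≤ I.colon {x} := span_pair_pow_le fun a b hab ↦ by
      rw [Submodule.mem_colon_singleton, smul_eq_mul, mul_right_comm, ← pow_succ]
      exact h _ _ (by lia) (by lia)
    have := hle hz
    rwa [Submodule.mem_colon_singleton, smul_eq_mul, mul_comm] at this

lemma map_span_add_span_mul_pow_mul_le {R T : Type*} [CommRing R] [CommRing T] {φ : R →+* T}
    {P : Ideal R} {Q : Ideal T} {π x : R} {n : ℕ} (h : P.map φ ≤ Q) :
    ((Ideal.span {π} + Ideal.span {x} * P ^ n) * P).map φ ≤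
      (Ideal.span {φ π} + Ideal.span {φ x} * Q ^ n) * Q := by
  rw [Ideal.map_mul, Ideal.add_eq_sup, Ideal.map_sup, Ideal.map_mul, Ideal.map_pow,
    Ideal.map_span, Ideal.map_span, Set.image_singleton, Set.image_singleton, ← Ideal.add_eq_sup]
  gcongr

lemma mem_of_mul_mem_of_mul_mem {S K ι : Type*} [CommRing S] [Field K] [Finite ι] [Algebra S K]
    {A : Subalgebra S K} (B : Module.Basis ι S A) {π σ : S} (hπ : Prime π) (hσ : ¬π ∣ σ)
    (hπK : algebraMap S K π ≠ 0) {x : K} (hπx : algebraMap S K π * x ∈ A)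
    (hσx : algebraMap S K σ * x ∈ A) : x ∈ A := by
  have hdvd : algebraMap S A π ∣ ⟨_, hπx⟩ := by
    refine algebraMap_dvd_of_dvd_repr B fun j ↦ (hπ.dvd_or_dvd ?_).resolve_left hσ
    have heq : σ • (⟨_, hπx⟩ : A) = π • ⟨_, hσx⟩ := by
      refine Subtype.ext ?_
      simp only [smul_def]
      exact mul_left_comm _ _ _
    exact ⟨B.repr ⟨_, hσx⟩ j, by
      simpa only [map_smul, Finsupp.smul_apply, smul_eq_mul] using congrArg (B.repr · j) heq⟩
  obtain ⟨y, hy⟩ := hdvd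
  rw [mul_left_cancel₀ hπK (congrArg A.val hy)]
  exact y.2

variable {S V K : Type*} [CommRing S] [CommRing V] [Field K] [Algebra S K] [Algebra V K]
  {A : Subalgebra S K} {B : Subalgebra V K} {p : ℕ} {P J : Ideal A} {X Y v : A}

lemma coe_mem_monomialSpan (hp : 2 ≤ p) (hAB : ∀ x ∈ A, x ∈ B) {η x₁ x₂ : K} (hη : η ∈ B)
    (hpη : (p : K) = Y ^ p * η) (hx₁ : x₁ ∈ B) (hx₂ : x₂ ∈ B) (hX : (X : K) = x₁ * v + x₂ * Y)
    (hP : P = Ideal.span {(p : A), X, Y})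
    (hJ : J = (Ideal.span {(p : A)} + Ideal.span {v} * P ^ (p - 2)) * P) {z : A} (hz : z ∈ J) :
    (z : K) ∈ monomialSpan B p (Y : K) v := by
  let ι : A →+* B := A.val.toRingHom.codRestrict B.toSubring fun x ↦ hAB x x.2
  let N : Ideal B := (monomialSpan B p (Y : K) v).comap (Algebra.linearMap B K)
  have hpι : ι (p : A) = ι Y ^ (p - 1) * ⟨η, hη⟩ * ι Y := Subtype.ext <| by
    rw [mul_right_comm, pow_sub_one_mul (by lia)]
    exact hpη
  have hPQ : P.map ι ≤ Ideal.span {ι v, ι Y} := by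
    rw [hP, Ideal.map_span, Ideal.span_le]
    rintro _ ⟨x, rfl | rfl | rfl, rfl⟩
    · exact Ideal.mem_span_pair.2 ⟨0, _, by rw [zero_mul, zero_add, hpι]⟩
    · exact Ideal.mem_span_pair.2 ⟨⟨x₁, hx₁⟩, ⟨x₂, hx₂⟩, Subtype.ext hX.symm⟩
    · exact Ideal.subset_span (by simp)
  have hpv : (p : K) * v = η * ((v : K) ^ 1 * (Y : K) ^ p) := by rw [hpη]; ring
  have hpY : (p : K) * Y = η * ((v : K) ^ 0 * (Y : K) ^ (p + 1)) := by rw [hpη]; ring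
  have hN : (Ideal.span {ι p} + Ideal.span {ι v} * Ideal.span {ι v, ι Y} ^ (p - 2)) *
      Ideal.span {ι v, ι Y} ≤ N := by
    refine span_add_span_mul_pow_mul_le hp ?_ ?_ fun a b hab ha ↦ ?_
    · have := mul_mem_of_mem_subalgebra hη
        (pow_mul_pow_mem_monomialSpan (B := B) (v := (v : K)) (Y := (Y : K)) (p := p) (a := 1)
          (b := p) (by lia) (by lia))
      rw [← hpv] at this
      exact this
    · have := mul_mem_of_mem_subalgebra hη
        (pow_mul_pow_mem_monomialSpan (B := B) (v := (v : K)) (Y := (Y : K)) (p := p) (a := 0)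
          (b := p + 1) (by lia) (by lia))
      rw [← hpY] at this
      exact this
    · exact pow_mul_pow_mem_monomialSpan hab (.inl ha)
  rw [hJ] at hz
  exact hN (map_span_add_span_mul_pow_mul_le hPQ (Ideal.mem_map_of_mem ι hz))

lemma mul_mem_of_mem_monomialSpan (hp : 2 ≤ p) (hAB : ∀ x ∈ A, x ∈ B) {u : K} (hu : u ∈ B)
    (hYu : (Y : K) ^ p = p * u) (hvP : v ∈ P) (hYP : Y ∈ P)
    (hJ : J = (Ideal.span {(p : A)} + Ideal.span {v} * P ^ (p - 2)) * P) {m z : K}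
    (hm : ∀ x ∈ J, m * x ∈ A) (hz : z ∈ monomialSpan B p (Y : K) v) : m * z ∈ B := by
  induction hz using Submodule.span_induction with
  | mem x hx =>
    obtain ⟨a, b, hab, h, rfl⟩ := hx
    obtain _ | a := a
    · have hpY : (p : A) * Y ∈ J := hJ ▸
        Ideal.mul_mem_mul (Ideal.mem_sup_left (Ideal.mem_span_singleton_self _)) hYP
      obtain ⟨b, rfl⟩ := Nat.exists_eq_add_of_lt (by lia : p < b)
      have heq : m * ((v : K) ^ 0 * (Y : K) ^ (p + b + 1)) =
          m * ((p : A) * Y : A) * (u * (Y : K) ^ b) := by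
        rw [pow_succ, pow_add, hYu]
        push_cast
        ring
      exact heq ▸ mul_mem (hAB _ (hm _ hpY)) (mul_mem hu (pow_mem (hAB _ Y.2) b))
    · have hmem : v * (v ^ a * Y ^ b) ∈ J := by
        have : v ^ a * Y ^ b ∈ P ^ (p - 2) * P := by
          rw [← pow_succ]
          exact Ideal.pow_le_pow_right (by lia) (pow_mul_pow_mem_pow_add hvP hYP a b)
        rw [hJ, add_mul, mul_assoc]
        exact Ideal.mem_sup_right (Ideal.mul_mem_mul (Ideal.mem_span_singleton_self _) this)
      have heq : m * ((v : K) ^ (a + 1) * (Y : K) ^ b) = m * (v * (v ^ a * Y ^ b) : A) := by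
        push_cast
        ring
      exact heq ▸ hAB _ (hm _ hmem)
  | zero => simp
  | add x y _ _ hx hy => exact mul_add m x y ▸ add_mem hx hy
  | smul b x _ hx =>
    rw [mul_smul_comm]
    exact mul_mem b.2 hx

end ColonStable

section Localize

open Algebra IsLocalRing

section

variable {S V K : Type*} [CommRing S] [CommRing V] [IsLocalRing V] [IsNoetherianRing V] [Field K]
  [Algebra S K] [Algebra V K] {A : Subalgebra S K} {p : ℕ} {P J : Ideal A} {X Y v : A}
  {h h₂ b y : V}

lemma mul_mul_mem_adjoin_pair_of_isIntegral (hp : p.Prime) (hp3 : 3 ≤ p)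
    (hpK : (p : K) ≠ 0) (hpV : maximalIdeal V = Ideal.span {(p : V)})
    [Algebra.IsIntegral V (adjoin V {(Y : K), (v : K)})]
    (hY : ((Y : K) + algebraMap V K h₂) ^ p = algebraMap V K h₂ ^ p + p * algebraMap V K b)
    (hb : IsUnit b)
    (hv : ((v : K) + algebraMap V K h) ^ p = algebraMap V K h ^ p + p * (p * algebraMap V K y))
    (hh : IsUnit h) (hAB : ∀ x ∈ A, x ∈ adjoin V {(Y : K), (v : K)})
    (hX : ∃ x₁ ∈ adjoin V {(Y : K), (v : K)}, ∃ x₂ ∈ adjoin V {(Y : K), (v : K)},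
      (X : K) = x₁ * v + x₂ * Y) (hP : P = Ideal.span {(p : A), X, Y}) (hvP : v ∈ P)
    (hJ : J = (Ideal.span {(p : A)} + Ideal.span {v} * P ^ (p - 2)) * P) {r m : K}
    (hr : IsIntegral V r) (hpr : p * r ∈ adjoin V {(Y : K), (v : K)}) (hm : ∀ x ∈ J, m * x ∈ A)
    {z : A} (hz : z ∈ J) : m * (r * z) ∈ adjoin V {(Y : K), (v : K)} := by
  obtain ⟨β, hβ, η, hη, hYβ, hηβ⟩ := exists_mem_adjoin_pow_eq_natCast_mul (v := (v : K)) hp hY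
    (hpV ▸ Ideal.mem_span_singleton_self _) hb
  obtain ⟨x₁, hx₁, x₂, hx₂, hX⟩ := hX
  have hpη : (p : K) = (Y : K) ^ p * η := by rw [hYβ, mul_assoc, mul_comm _ η, hηβ, mul_one]
  refine mul_mem_of_mem_monomialSpan hp.two_le hAB ?_ hYβ hvP ?_ hJ hm
    (mul_mem_monomialSpan_of_isIntegral hp hp3 hpK hpV hY hb hv hh hr hpr
      (coe_mem_monomialSpan hp.two_le hAB hη hpη hx₁ hx₂ hX hP hJ hz))
  · exact add_mem (algebraMap_mem _ b) (mul_mem (hAB _ Y.2) hβ)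
  · exact hP ▸ Ideal.subset_span (by simp)

end

section

variable {V K : Type*} [CommRing V] [Field K] [Algebra V K] {p : ℕ} {ω μ : K} {f g : V}

lemma inv_mem_of_pow_eq_algebraMap {B : Subalgebra V K} (hp : p ≠ 0)
    (hμ : μ ^ p = algebraMap V K g) (hg : IsUnit g) (hμB : μ ∈ B) : μ⁻¹ ∈ B := by
  obtain ⟨c, hc⟩ := hg.exists_left_inv
  have hinv : algebraMap V K c * μ ^ (p - 1) * μ = 1 := by
    rw [mul_assoc, pow_sub_one_mul hp, hμ, ← map_mul, hc, map_one]
  rw [inv_eq_of_mul_eq_one_left hinv]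
  exact mul_mem (algebraMap_mem B c) (pow_mem hμB _)

lemma mem_adjoin_sub_pair (hp : p ≠ 0) (hμ : μ ^ p = algebraMap V K g) (hg : IsUnit g)
    (c d : V) (i : ℕ) :
    ω ∈ adjoin V {μ - algebraMap V K c, ω * μ ^ i - algebraMap V K d} ∧
      μ ∈ adjoin V {μ - algebraMap V K c, ω * μ ^ i - algebraMap V K d} ∧
      μ⁻¹ ∈ adjoin V {μ - algebraMap V K c, ω * μ ^ i - algebraMap V K d} := by
  set B := adjoin V {μ - algebraMap V K c, ω * μ ^ i - algebraMap V K d}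
  have hμB : μ ∈ B := by
    rw [← sub_add_cancel μ (algebraMap V K c)]
    exact add_mem (subset_adjoin (by simp)) (algebraMap_mem B c)
  have hωμ : ω * μ ^ i ∈ B := by
    rw [← sub_add_cancel (ω * μ ^ i) (algebraMap V K d)]
    exact add_mem (subset_adjoin (by simp)) (algebraMap_mem B d)
  have hinv := inv_mem_of_pow_eq_algebraMap hp hμ hg hμB
  have hμ0 : μ ≠ 0 := by
    rintro rfl
    exact (hg.map (algebraMap V K)).ne_zero (by rw [← hμ, zero_pow hp])
  refine ⟨?_, hμB, hinv⟩
  rw [← mul_inv_cancel_right₀ (pow_ne_zero i hμ0) ω, ← inv_pow]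
  exact mul_mem hωμ (pow_mem hinv i)

lemma adjoin_sub_pair_le (c d : V) (i : ℕ) :
    adjoin V {μ - algebraMap V K c, ω * μ ^ i - algebraMap V K d} ≤ adjoin V {ω, μ} := by
  have hω : ω ∈ adjoin V {ω, μ} := subset_adjoin (by simp)
  have hμ : μ ∈ adjoin V {ω, μ} := subset_adjoin (by simp)
  refine adjoin_le ?_
  rintro _ (rfl | rfl)
  exacts [sub_mem hμ (algebraMap_mem _ c), sub_mem (mul_mem hω (pow_mem hμ i)) (algebraMap_mem _ d)]

lemma isIntegral_adjoin_sub_pair (hp : p ≠ 0) (hω : ω ^ p = algebraMap V K f)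
    (hμ : μ ^ p = algebraMap V K g) (c d : V) (i : ℕ) :
    Algebra.IsIntegral V (adjoin V {μ - algebraMap V K c, ω * μ ^ i - algebraMap V K d}) := by
  have hω' : IsIntegral V ω := .of_pow (Nat.pos_of_ne_zero hp) (hω ▸ isIntegral_algebraMap)
  have hμ' : IsIntegral V μ := .of_pow (Nat.pos_of_ne_zero hp) (hμ ▸ isIntegral_algebraMap)
  refine .adjoin ?_
  rintro _ (rfl | rfl)
  exacts [hμ'.sub isIntegral_algebraMap, (hω'.mul (hμ'.pow i)).sub isIntegral_algebraMap]

lemma exists_sub_eq_mul_add_mul {B : Subalgebra V K} (hμ0 : μ ≠ 0) (hμB : μ ∈ B) (hinv : μ⁻¹ ∈ B)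
    (h₁ h₂ : V) (i : ℕ) :
    ∃ x₁ ∈ B, ∃ x₂ ∈ B, ω - algebraMap V K h₁ =
      x₁ * (ω * μ ^ i - algebraMap V K (h₁ * h₂ ^ i)) + x₂ * (μ - algebraMap V K h₂) := by
  obtain ⟨e, he⟩ := sub_dvd_pow_sub_pow (⟨μ, hμB⟩ : B) (algebraMap V B h₂) i
  have heK : μ ^ i - algebraMap V K h₂ ^ i = (μ - algebraMap V K h₂) * e := congrArg B.val he
  refine ⟨μ⁻¹ ^ i, pow_mem hinv i, -(μ⁻¹ ^ i * algebraMap V K h₁ * e),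
    neg_mem (mul_mem (mul_mem (pow_mem hinv i) (algebraMap_mem B h₁)) e.2), ?_⟩
  have hi : μ⁻¹ ^ i * μ ^ i = 1 := by rw [← mul_pow, inv_mul_cancel₀ hμ0, one_pow]
  rw [map_mul, map_pow]
  linear_combination (algebraMap V K h₁ - ω) * hi - μ⁻¹ ^ i * algebraMap V K h₁ * heK

end

variable {S V K : Type*} [CommRing S] [CommRing V] [Field K] [Algebra S V] [Algebra S K]
  [Algebra V K] [IsScalarTower S V K] {p : ℕ} {f g h₁ h₂ b : S} {ω μ : K}

lemma mul_mul_mem_adjoin_of_isIntegral [IsLocalRing V] [IsNoetherianRing V] (hp : p.Prime)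
    (hp3 : 3 ≤ p) (hpK : (p : K) ≠ 0) (hpV : maximalIdeal V = Ideal.span {(p : V)})
    (hω : ω ^ p = algebraMap S K f) (hμ : μ ^ p = algebraMap S K g) (hg : g = h₂ ^ p + b * p)
    {i : ℕ} {y : S} (hy : f * g ^ i = (h₁ * h₂ ^ i) ^ p + (p : S) ^ 2 * y)
    (hgV : IsUnit (algebraMap S V g)) (hbV : IsUnit (algebraMap S V b))
    (hhV : IsUnit (algebraMap S V (h₁ * h₂ ^ i))) {r : K} (hr : IsIntegral S r)
    (hpr : p * r ∈ adjoin S {ω, μ}) {X Y v : adjoin S {ω, μ}}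
    (hX : (X : K) = ω - algebraMap S K h₁) (hY : (Y : K) = μ - algebraMap S K h₂)
    (hv : (v : K) = ω * μ ^ i - algebraMap S K (h₁ * h₂ ^ i)) {P J : Ideal (adjoin S {ω, μ})}
    (hP : P = Ideal.span {(p : adjoin S {ω, μ}), X, Y}) (hvP : v ∈ P)
    (hJ : J = (Ideal.span {(p : adjoin S {ω, μ})} + Ideal.span {v} * P ^ (p - 2)) * P) {m : K}
    (hm : ∀ x ∈ J, m * x ∈ adjoin S {ω, μ}) {z : adjoin S {ω, μ}} (hz : z ∈ J) :
    m * (r * z) ∈ adjoin V {ω, μ} := by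
  have htow (x : S) : algebraMap S K x = algebraMap V K (algebraMap S V x) :=
    IsScalarTower.algebraMap_apply S V K x
  simp only [htow] at hω hμ hX hY hv
  have hμ0 : μ ≠ 0 := by
    rintro rfl
    exact (hgV.map (algebraMap V K)).ne_zero (by rw [← hμ, zero_pow hp.ne_zero])
  have hYp : ((Y : K) + algebraMap V K (algebraMap S V h₂)) ^ p =
      algebraMap V K (algebraMap S V h₂) ^ p + p * algebraMap V K (algebraMap S V b) := by
    simp [hY, hμ, hg, mul_comm]
  have hvp : ((v : K) + algebraMap V K (algebraMap S V (h₁ * h₂ ^ i))) ^ p =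
      algebraMap V K (algebraMap S V (h₁ * h₂ ^ i)) ^ p +
        p * (p * algebraMap V K (algebraMap S V y)) := by
    rw [hv, sub_add_cancel, mul_pow, pow_right_comm, hω, hμ, ← map_pow, ← map_pow, ← map_mul,
      ← map_mul, hy]
    simp [sq, mul_assoc]
  obtain ⟨hωB, hμB, hinv⟩ := mem_adjoin_sub_pair (ω := ω) hp.ne_zero hμ hgV (algebraMap S V h₂)
    (algebraMap S V (h₁ * h₂ ^ i)) i
  have hXB := exists_sub_eq_mul_add_mul (ω := ω) hμ0 hμB hinv (algebraMap S V h₁)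
    (algebraMap S V h₂) i
  rw [← map_pow, ← map_mul, ← hX, ← hv, ← hY] at hXB
  rw [← hY, ← hv] at hωB hμB
  have hint : Algebra.IsIntegral V (adjoin V {(Y : K), (v : K)}) :=
    hY ▸ hv ▸ isIntegral_adjoin_sub_pair hp.ne_zero hω hμ _ _ i
  have hAB : adjoin S {ω, μ} ≤ (adjoin V {(Y : K), (v : K)}).restrictScalars S :=
    adjoin_le (by rintro _ (rfl | rfl); exacts [hωB, hμB])
  exact (hY ▸ hv ▸ adjoin_sub_pair_le _ _ i : adjoin V {(Y : K), (v : K)} ≤ adjoin V {ω, μ})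
    (mul_mul_mem_adjoin_pair_of_isIntegral hp hp3 hpK hpV hYp hbV hvp hhV (fun x hx ↦ hAB hx) hXB
      hP hvP hJ hr.tower_top (hAB hpr) hm hz)

variable {L : Type*} [Field L] [Algebra S L] [IsFractionRing S L] [Algebra L K]
  [IsScalarTower S L K]

lemma mul_mul_mem_adjoin_of_natCast_mul_mem [IsDomain S] [IsNoetherianRing S] [CharZero K]
    (hp : p.Prime) (hp3 : 3 ≤ p) (hpS : Prime (p : S))
    (hω : ω ^ p = algebraMap S K f) (hμ : μ ^ p = algebraMap S K g) (hg : g = h₂ ^ p + b * p)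
    (hKgen : adjoin L ({ω, μ} : Set K) = ⊤) (hdeg : Module.finrank L K = p ^ 2)
    {i : ℕ} {y : S} (hy : f * g ^ i = (h₁ * h₂ ^ i) ^ p + (p : S) ^ 2 * y)
    (hh₁ : ¬(p : S) ∣ h₁) (hh₂ : ¬(p : S) ∣ h₂) (hb : ¬(p : S) ∣ b) {r : K} (hr : IsIntegral S r)
    (hpr : p * r ∈ adjoin S {ω, μ}) {X Y v : adjoin S {ω, μ}}
    (hX : (X : K) = ω - algebraMap S K h₁) (hY : (Y : K) = μ - algebraMap S K h₂)
    (hv : (v : K) = ω * μ ^ i - algebraMap S K (h₁ * h₂ ^ i)) {P J : Ideal (adjoin S {ω, μ})}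
    (hP : P = Ideal.span {(p : adjoin S {ω, μ}), X, Y}) (hvP : v ∈ P)
    (hJ : J = (Ideal.span {(p : adjoin S {ω, μ})} + Ideal.span {v} * P ^ (p - 2)) * P) {m : K}
    (hm : ∀ x ∈ J, m * x ∈ adjoin S {ω, μ}) {z : adjoin S {ω, μ}} (hz : z ∈ J) :
    m * (r * z) ∈ adjoin S {ω, μ} := by
  have hpK : (p : K) ≠ 0 := Nat.cast_ne_zero.2 hp.ne_zero
  have hprime : (Ideal.span {(p : S)}).IsPrime := (Ideal.span_singleton_prime hpS.ne_zero).2 hpS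
  let V := Localization.subalgebra.ofField L _ (Ideal.span {(p : S)}).primeCompl_le_nonZeroDivisors
  have hV : IsLocalization.AtPrime V (Ideal.span {(p : S)}) :=
    Localization.subalgebra.isLocalization_ofField L _ _
  have := IsLocalization.AtPrime.isLocalRing V (Ideal.span {(p : S)})
  have := IsLocalization.isNoetherianRing (Ideal.span {(p : S)}).primeCompl V ‹_›
  have hpV : maximalIdeal V = Ideal.span {(p : V)} := by
    rw [← IsLocalization.AtPrime.map_eq_maximalIdeal (Ideal.span {(p : S)}), Ideal.map_span,
      Set.image_singleton, map_natCast]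
  have hunit (x : S) (hx : ¬(p : S) ∣ x) : IsUnit (algebraMap S V x) :=
    (IsLocalization.AtPrime.isUnit_to_map_iff V (Ideal.span {(p : S)}) x).2
      fun h ↦ hx (Ideal.mem_span_singleton.1 h)
  have hgp : ¬(p : S) ∣ g := fun h ↦
    hh₂ (hpS.dvd_of_dvd_pow ((dvd_add_left (dvd_mul_left _ b)).1 (hg ▸ h)))
  have hhp : ¬(p : S) ∣ h₁ * h₂ ^ i := fun h ↦ (hpS.dvd_or_dvd h).elim hh₁
    fun h ↦ hh₂ (hpS.dvd_of_dvd_pow h)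
  obtain ⟨σ, hσ, hσm⟩ := exists_smul_mem_adjoin_of_isLocalization (Ideal.span {(p : S)}).primeCompl
    (mul_mul_mem_adjoin_of_isIntegral (V := V) hp hp3 hpK hpV hω hμ hg hy (hunit g hgp)
      (hunit b hb) (hunit _ hhp) hr hpr hX hY hv hP hvP hJ hm hz)
  obtain ⟨B, -⟩ := exists_basis_adjoin_pair hp.ne_zero hω hμ hKgen hdeg 0 0
  refine mem_of_mul_mem_of_mul_mem B hpS (fun h ↦ hσ (Ideal.mem_span_singleton.2 h)) ?_ ?_
    (Algebra.smul_def σ (m * (r * z)) ▸ hσm)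
  · rwa [map_natCast]
  · rw [map_natCast, mul_left_comm, ← mul_assoc (p : K), mul_left_comm]
    exact mul_mem hpr (hm z hz)

end Localize

section MaximalCohenMacaulay

open Algebra

variable {S L K : Type*} [CommRing S] [Field L] [Algebra S L] [IsFractionRing S L]
  [Field K] [Algebra L K] [Algebra S K] [IsScalarTower S L K] {p : ℕ} {f g h₁ h₂ a b : S} {ω μ : K}

lemma exists_restrictScalars_colon_Pid_eq_span_range [CharZero K] (hp : p.Prime)
    (hp2 : p ≠ 2) (hpS : Prime (p : S)) (hf : f = h₁ ^ p + a * p)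
    (hg : g = h₂ ^ p + b * p) (hω : ω ^ p = algebraMap S K f) (hμ : μ ^ p = algebraMap S K g)
    (hKgen : adjoin L ({ω, μ} : Set K) = ⊤) (hdeg : Module.finrank L K = p ^ 2)
    {i : ℕ} (hi₁ : 1 ≤ i) (hi₂ : i < p) {d e₁ e₂ : S} (ha : a = -(i * d * h₁ ^ p) + p * e₁)
    (hb : b = d * h₂ ^ p + p * e₂) (hh₂ : ¬(p : S) ∣ h₂) {P J : Ideal (adjoin S {ω, μ})}
    (hP : P = Pid p ω μ h₁ h₂)
    (hJ : J = (Ideal.span {(p : adjoin S {ω, μ})} +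
      Ideal.span {omegaA ω μ * muA ω μ ^ i - algebraMap S _ (h₁ * h₂ ^ i)} * P ^ (p - 2)) * P) :
    ∃ G : Fin p × Fin p → adjoin S {ω, μ},
      ((Ideal.span {(p : adjoin S {ω, μ}) ^ 2}).colon (J : Set (adjoin S {ω, μ}))).restrictScalars
        S = Submodule.span S (Set.range G) := by
  have hpK : (p : K) ≠ 0 := Nat.cast_ne_zero.2 hp.ne_zero
  obtain ⟨B, hB⟩ := exists_basis_adjoin_pair hp.ne_zero hω hμ hKgen hdeg h₁ h₂
  have hωA : (omegaA ω μ : adjoin S {ω, μ}) ^ p = algebraMap S _ f := Subtype.ext hω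
  have hμA : (muA ω μ : adjoin S {ω, μ}) ^ p = algebraMap S _ g := Subtype.ext hμ
  obtain ⟨α, hα, -⟩ := exists_pow_eq_mul_add_mul (x := omegaA ω μ - algebraMap S _ h₁)
    (h := algebraMap S (adjoin S {ω, μ}) h₁) (c := algebraMap S _ a) hp
    (by rw [sub_add_cancel, hωA, hf]; simp [mul_comm])
  obtain ⟨β, hβ, -⟩ := exists_pow_eq_mul_add_mul (x := muA ω μ - algebraMap S _ h₂)
    (h := algebraMap S (adjoin S {ω, μ}) h₂) (c := algebraMap S _ b) hp
    (by rw [sub_add_cancel, hμA, hg]; simp [mul_comm])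
  have hv := mul_add_pow_sub_mem_span_pair_sq (omegaA ω μ - algebraMap S _ h₁)
    (muA ω μ - algebraMap S (adjoin S {ω, μ}) h₂) (algebraMap S _ h₁) (algebraMap S _ h₂)
    (i := i) (by lia)
  obtain ⟨E, hE⟩ := exists_restrictScalars_colon_eq_span_range_colonGenerators
    (v := omegaA ω μ * muA ω μ ^ i - algebraMap S _ (h₁ * h₂ ^ i)) (c := h₂ ^ (i - 1)) (i := i)
    hp hp2 hpS (fun h ↦ hpK (congrArg Subtype.val h)) hB hα hβ ha hb
    (Nat.not_dvd_of_pos_of_lt hi₁ hi₂) hh₂ (fun h ↦ hh₂ (hpS.dvd_of_dvd_pow h))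
    (by simpa only [sub_add_cancel, Algebra.smul_def, map_mul, map_pow, map_natCast] using hv)
    hP hJ
  exact ⟨_, hE⟩

lemma modDepth_colonSubmodule_Pid_eq_ringKrullDim [IsRegularLocalRing S] [CharZero K]
    (hp : p.Prime) (hp2 : p ≠ 2) (hpS : Prime (p : S)) (hf : f = h₁ ^ p + a * p)
    (hg : g = h₂ ^ p + b * p) (hω : ω ^ p = algebraMap S K f) (hμ : μ ^ p = algebraMap S K g)
    (hKgen : adjoin L ({ω, μ} : Set K) = ⊤) (hdeg : Module.finrank L K = p ^ 2)
    {i : ℕ} (hi₁ : 1 ≤ i) (hi₂ : i < p) {d e₁ e₂ : S} (ha : a = -(i * d * h₁ ^ p) + p * e₁)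
    (hb : b = d * h₂ ^ p + p * e₂) (hh₂ : ¬(p : S) ∣ h₂) {P J : Ideal (adjoin S {ω, μ})}
    (hP : P = Pid p ω μ h₁ h₂)
    (hJ : J = (Ideal.span {(p : adjoin S {ω, μ})} +
      Ideal.span {omegaA ω μ * muA ω μ ^ i - algebraMap S _ (h₁ * h₂ ^ i)} * P ^ (p - 2)) * P) :
    (modDepth S (colonSubmodule S K (adjoin S {ω, μ})
      (Subtype.val '' (J : Set (adjoin S {ω, μ})))) : WithBot ℕ∞) = ringKrullDim S := by
  have hpP : (p : adjoin S {ω, μ}) ∈ P := hP ▸ Ideal.subset_span (Set.mem_insert _ _)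
  have hpJ : (p : adjoin S {ω, μ}) ^ 2 ∈ J := by
    rw [hJ, sq]
    exact Ideal.mul_mem_mul (Ideal.mem_sup_left (Ideal.mem_span_singleton_self _)) hpP
  obtain ⟨G, hG⟩ := exists_restrictScalars_colon_Pid_eq_span_range hp hp2 hpS hf hg hω hμ hKgen hdeg
    hi₁ hi₂ ha hb hh₂ hP hJ
  refine modDepth_colonSubmodule_image_eq_ringKrullDim (L := L) hpJ
    (pow_ne_zero 2 (Nat.cast_ne_zero.2 hp.ne_zero)) hG ?_
    (by simp [hdeg, sq]) (by simp [hp.pos])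
  rw [_root_.eq_top_iff, ← span_range_pow_sub_mul_pow_sub_eq_top hp.ne_zero hω hμ hKgen h₁ h₂]
  refine Submodule.span_mono ?_
  rintro _ ⟨j, rfl⟩
  have hmem {x : K} (hx : x ∈ ({ω, μ} : Set K)) (s : S) :
      x - algebraMap S K s ∈ adjoin S ({ω, μ} : Set K) :=
    sub_mem (subset_adjoin hx) (algebraMap_mem _ s)
  exact mul_mem (pow_mem (hmem (by simp) h₁) _) (pow_mem (hmem (by simp) h₂) _)

lemma mul_mem_colonSubmodule_Pid_of_isIntegral [IsDomain S] [IsNoetherianRing S] [CharZero K]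
    (hp : p.Prime) (hp3 : 3 ≤ p) (hpS : Prime (p : S)) (hg : g = h₂ ^ p + b * p)
    (hω : ω ^ p = algebraMap S K f) (hμ : μ ^ p = algebraMap S K g)
    (hKgen : adjoin L ({ω, μ} : Set K) = ⊤) (hdeg : Module.finrank L K = p ^ 2)
    {i : ℕ} {y : S} (hy : f * g ^ i = (h₁ * h₂ ^ i) ^ p + (p : S) ^ 2 * y)
    (hh₁ : ¬(p : S) ∣ h₁) (hh₂ : ¬(p : S) ∣ h₂) (hb : ¬(p : S) ∣ b) {r : K} (hr : IsIntegral S r)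
    (hpr : p * r ∈ adjoin S {ω, μ}) {P J : Ideal (adjoin S {ω, μ})} (hP : P = Pid p ω μ h₁ h₂)
    (hJ : J = (Ideal.span {(p : adjoin S {ω, μ})} +
      Ideal.span {omegaA ω μ * muA ω μ ^ i - algebraMap S _ (h₁ * h₂ ^ i)} * P ^ (p - 2)) * P)
    {m : K} (hm : m ∈ colonSubmodule S K (adjoin S {ω, μ})
      (Subtype.val '' (J : Set (adjoin S {ω, μ})))) :
    r * m ∈ colonSubmodule S K (adjoin S {ω, μ})
      (Subtype.val '' (J : Set (adjoin S {ω, μ}))) := by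
  have hvP : omegaA ω μ * muA ω μ ^ i - algebraMap S _ (h₁ * h₂ ^ i) ∈ P := by
    have hX : omegaA ω μ - algebraMap S _ h₁ ∈ P := hP ▸ Ideal.subset_span (by simp)
    have hY : muA ω μ - algebraMap S _ h₂ ∈ P := hP ▸ Ideal.subset_span (by simp)
    rw [map_mul, map_pow]
    exact P.mul_sub_mul_mem hX (P.mem_of_dvd (sub_dvd_pow_sub_pow _ _ i) hY)
  rintro _ ⟨z, hz, rfl⟩
  rw [mul_comm r, mul_assoc]
  exact mul_mul_mem_adjoin_of_natCast_mul_mem hp hp3 hpS hω hμ hg hKgen hdeg hy hh₁ hh₂ hb hr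
    hpr rfl rfl rfl hP hvP hJ (fun x hx ↦ hm _ ⟨x, hx, rfl⟩) hz

theorem stmt17_general
    {S : Type*} [CommRing S] [IsDomain S] [IsNoetherianRing S] [IsLocalRing S]
    {L : Type*} [Field L] [CharZero L] [Algebra S L] [IsFractionRing S L]
    {K : Type*} [Field K] [Algebra L K] [Algebra S K] [IsScalarTower S L K]
    {p : ℕ} (hp : p.Prime) (hp3 : 3 ≤ p) (hpS : Prime ((p : ℕ) : S))
    (hreg : ∃ s : Finset S, Ideal.span (s : Set S) = IsLocalRing.maximalIdeal S ∧
      (s.card : WithBot ℕ∞) = ringKrullDim S)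
    {f g h₁ h₂ a b : S} (hf : f = h₁ ^ p + a * (p : S)) (hg : g = h₂ ^ p + b * (p : S))
    (hfg : IsUnit f ↔ IsUnit g)
    {ω μ : K} (hω : ω ^ p = algebraMap S K f) (hμ : μ ^ p = algebraMap S K g)
    (hKgen : Algebra.adjoin L ({ω, μ} : Set K) = ⊤)
    (hdeg : Module.finrank L K = p ^ 2)
    (hicω : IsIntegrallyClosed (Algebra.adjoin S ({ω} : Set K)))
    (hicμ : IsIntegrallyClosed (Algebra.adjoin S ({μ} : Set K)))
    {i : ℕ} (hi1 : 1 ≤ i) (hi2 : i ≤ p - 1)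
    (hfgi : ∃ x y : S, f * g ^ i = x ^ p + y * (p : S) ^ 2)
    (hgrade : ContainsRegSeq3 S (Ideal.span {((p : ℕ) : S), f, g})) :
    letI P := Pid p ω μ h₁ h₂
    letI v := omegaA ω μ * muA ω μ ^ i - algebraMap S _ (h₁ * h₂ ^ i)
    letI M := colonSubmodule S K (Algebra.adjoin S ({ω, μ} : Set K))
      (Subtype.val '' (((Ideal.span {(p : Algebra.adjoin S ({ω, μ} : Set K))} +
        Ideal.span {v} * P ^ (p - 2)) * P : Ideal (Algebra.adjoin S ({ω, μ} : Set K))) :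
        Set (Algebra.adjoin S ({ω, μ} : Set K))))
    (∀ r ∈ integralClosure S K, ∀ m ∈ M, r * m ∈ M) ∧
      (modDepth S M : WithBot ℕ∞) = ringKrullDim S := by
  have := isRegularLocalRing_of_span_eq_maximalIdeal hreg.choose_spec.1 hreg.choose_spec.2
  have := charZero_of_injective_algebraMap (algebraMap L K).injective
  have hpg : ¬(p : S) ∣ g := not_dvd_of_containsRegSeq3_span_triple hpS hgrade hfg.1
  have hpf : ¬(p : S) ∣ f :=
    not_dvd_of_containsRegSeq3_span_triple hpS (Set.pair_comm f g ▸ hgrade) hfg.2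
  have hh₁ := not_dvd_of_not_dvd_pow_add_mul hp.ne_zero (hf ▸ hpf)
  have hh₂ := not_dvd_of_not_dvd_pow_add_mul hp.ne_zero (hg ▸ hpg)
  have hreg' := mem_span_pair_of_mul_mem_of_containsRegSeq3 hpS hgrade hpg
  obtain ⟨y, hy⟩ := exists_mul_pow_eq_add_sq_mul hp hpS hf hg hfgi
  obtain ⟨d, e₁, e₂, ha, hb⟩ := exists_eq_mul_pow_add_of_dvd hp hpS hg hi1 (by lia) hh₂
    (dvd_of_mul_pow_eq_add_sq_mul hpS hf hg hi1 hh₂ hy) (fun t ht ↦ hreg' t (by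
      rw [hf, mul_add, ← mul_assoc, mul_comm _ (p : S)]
      exact add_mem ht (Ideal.mul_mem_right _ _ (Ideal.subset_span (by simp)))))
  have hpb := not_dvd_of_isIntegrallyClosed_adjoin hp hpS hg hω hμ hKgen hdeg
  refine ⟨fun r hr m hm ↦ ?_, modDepth_colonSubmodule_Pid_eq_ringKrullDim hp (by lia) hpS hf hg hω
    hμ hKgen hdeg hi1 (by lia) ha hb hh₂ rfl rfl⟩
  exact mul_mem_colonSubmodule_Pid_of_isIntegral hp hp3 hpS hg hω hμ hKgen hdeg hy hh₁ hh₂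
    hpb hr (natCast_mul_mem_adjoin_pair_of_isIntegral hp.ne_zero hω hμ hKgen hdeg
      (fun h ↦ hpg (h ▸ dvd_zero _)) (fun _ ↦ dvd_of_dvd_mul_of_isSMulRegular hpS hpg hreg') hr)
    rfl rfl hm

end MaximalCohenMacaulay

theorem stmt17
    {S : Type*} [CommRing S] [IsDomain S] [IsNoetherianRing S] [IsLocalRing S]
    [IsIntegrallyClosed S]
    {L : Type*} [Field L] [CharZero L] [Algebra S L] [IsFractionRing S L]
    {K : Type*} [Field K] [Algebra L K] [Algebra S K] [IsScalarTower S L K]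
    {p : ℕ} (hp : p.Prime) (hp3 : 3 ≤ p) (hpS : Prime ((p : ℕ) : S))
    (hSmodp : IsIntegrallyClosed (S ⧸ Ideal.span {((p : ℕ) : S)}))
    (hreg : ∃ s : Finset S, Ideal.span (s : Set S) = IsLocalRing.maximalIdeal S ∧
      (s.card : WithBot ℕ∞) = ringKrullDim S)
    (hmix : ((p : ℕ) : S) ∈ IsLocalRing.maximalIdeal S ∧
      ((p : ℕ) : S) ∉ IsLocalRing.maximalIdeal S ^ 2)
    {f g h₁ h₂ a b : S} (hf : f = h₁ ^ p + a * (p : S)) (hg : g = h₂ ^ p + b * (p : S))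
    (hfg : (¬IsUnit f ∧ ¬IsUnit g ∧ PaperSquarefree f ∧ PaperSquarefree g ∧ SatisfiesA1 f g) ∨
      (IsUnit f ∧ IsUnit g ∧ (∀ x : S, x ^ p ≠ f) ∧ (∀ x : S, x ^ p ≠ g)))
    {ω μ : K} (hω : ω ^ p = algebraMap S K f) (hμ : μ ^ p = algebraMap S K g)
    (hKgen : Algebra.adjoin L ({ω, μ} : Set K) = ⊤)
    (hdeg : Module.finrank L K = p ^ 2)
    (hicω : IsIntegrallyClosed (Algebra.adjoin S ({ω} : Set K)))
    (hicμ : IsIntegrallyClosed (Algebra.adjoin S ({μ} : Set K)))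
    (hh₁ : h₁ ≠ 0) (hh₂ : h₂ ≠ 0)
    (i : ℕ) (hi1 : 1 ≤ i) (hi2 : i ≤ p - 1)
    (hfgi : ∃ x y : S, f * g ^ i = x ^ p + y * (p : S) ^ 2)
    (hgrade : ContainsRegSeq3 S (Ideal.span {((p : ℕ) : S), f, g})) :
    (∀ r ∈ integralClosure S K,
      ∀ m ∈ colonSubmodule S K (Algebra.adjoin S ({ω, μ} : Set K))
        (Subtype.val '' (((Ideal.span {(p : Algebra.adjoin S ({ω, μ} : Set K))} + Ideal.span {omegaA ω μ * muA ω μ ^ i - algebraMap S _ (h₁ * h₂ ^ i)} * Pid p ω μ h₁ h₂ ^ (p - 2)) * Pid p ω μ h₁ h₂ : Ideal (Algebra.adjoin S ({ω, μ} : Set K))) : Set (Algebra.adjoin S ({ω, μ} : Set K)))),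
        r * m ∈ colonSubmodule S K (Algebra.adjoin S ({ω, μ} : Set K))
          (Subtype.val '' (((Ideal.span {(p : Algebra.adjoin S ({ω, μ} : Set K))} + Ideal.span {omegaA ω μ * muA ω μ ^ i - algebraMap S _ (h₁ * h₂ ^ i)} * Pid p ω μ h₁ h₂ ^ (p - 2)) * Pid p ω μ h₁ h₂ : Ideal (Algebra.adjoin S ({ω, μ} : Set K))) : Set (Algebra.adjoin S ({ω, μ} : Set K))))) ∧
    (modDepth S (colonSubmodule S K (Algebra.adjoin S ({ω, μ} : Set K))
        (Subtype.val '' (((Ideal.span {(p : Algebra.adjoin S ({ω, μ} : Set K))} + Ideal.span {omegaA ω μ * muA ω μ ^ i - algebraMap S _ (h₁ * h₂ ^ i)} * Pid p ω μ h₁ h₂ ^ (p - 2)) * Pid p ω μ h₁ h₂ : Ideal (Algebra.adjoin S ({ω, μ} : Set K))) : Set (Algebra.adjoin S ({ω, μ} : Set K))))) :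
      WithBot ℕ∞) = ringKrullDim S := by
  have hfg' : IsUnit f ↔ IsUnit g :=
    hfg.elim (fun h ↦ iff_of_false h.1 h.2.1) fun h ↦ iff_of_true h.1 h.2.1
  exact stmt17_general hp hp3 hpS hreg hf hg hfg' hω hμ hKgen hdeg hicω hicμ hi1 hi2 hfgi hgrade
end

section
/- Let (S,𝔪) be an unramified regular local ring of mixed characteristic p ≥ 3. Assume S[ω] and S[μ] are integrally closed (i.e. f,g ∉ S^{p∧p²}), h₁ ≠ 0, h₂ ≠ 0, that fg^i ∈ S^{p∧p²} for some 1 ≤ i ≤ p−1, and that the ideal (p,f,g) of S has grade three. Set P := (p, ω−h₁, μ−h₂)A and m := ωμ^i − h₁h₂^i ∈ A. Then the colon ideal ((pA + P^p) :_A m) equals pA + P^{p−1}. -/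
/-!
The `p²` monomials `ωʲμᵏ` with `j, k < p` form an `S`-basis of `A`, and modulo `p` the relations
`ωᵖ = f`, `μᵖ = g` become `(ω - h₁)ᵖ = 0`, `(μ - h₂)ᵖ = 0`. Hence `A/pA = R[X, Y]/(Xᵖ, Yᵖ)` with
`R = S/pS` a domain, `P` corresponds to `(X, Y)`, and for `n ≤ p` an element of `A` lies in
`pA + Pⁿ` exactly when a polynomial representing it modulo `p` has order at least `n`. Since
`(p, f, g)` has grade three, `p` does not divide `h₂`, so the polynomial
`(X + h₁)(Y + h₂)ⁱ - h₁h₂ⁱ` representing `m` has order exactly one. Over the domain `R` orders add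
under multiplication, so multiplication by `m` shifts the filtration by exactly one step.
-/

set_option synthInstance.maxHeartbeats 1000000
set_option maxHeartbeats 1600000

theorem length_le_height_of_isWeaklyRegular {R : Type*} [CommRing R] {rs : List R} {I : Ideal R}
    (hreg : RingTheory.Sequence.IsWeaklyRegular R rs) (hmem : ∀ r ∈ rs, r ∈ I) :
    (rs.length : ℕ∞) ≤ I.height := by
  induction rs using List.reverseRecOn generalizing I with
  | nil => simp
  | append_singleton rs r ih =>
    obtain ⟨hrs, hr⟩ := (RingTheory.Sequence.isWeaklyRegular_append_iff R rs [r]).1 hreg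
    rw [RingTheory.Sequence.isWeaklyRegular_singleton_iff] at hr
    rw [Ideal.height_eq_inf_minimalPrimes]
    refine le_iInf₂ fun Q hQ => ?_
    have : Q.IsPrime := hQ.1.1
    have hQmem : ∀ s ∈ rs ++ [r], s ∈ Q := fun s hs => hQ.1.2 (hmem s hs)
    obtain ⟨q, hq, hqQ⟩ := Ideal.exists_minimalPrimes_le (I := Ideal.ofList rs) (J := Q)
      (Ideal.span_le.2 fun s hs => hQmem s (List.mem_append_left _ hs))
    have : q.IsPrime := hq.1.1
    have hrq : r ∉ q := hr.notMem_of_mem_minimalPrimes (by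
      rwa [smul_eq_mul, Ideal.mul_top, Ideal.annihilator_quotient])
    have hlt : q < Q := lt_of_le_of_ne hqQ fun h => hrq (h ▸ hQmem r (by simp))
    calc ((rs ++ [r]).length : ℕ∞) = rs.length + 1 := by simp
      _ ≤ q.height + 1 := by
        gcongr
        exact ih hrs fun s hs => hq.1.2 (Ideal.subset_span hs)
      _ ≤ Q.height := Ideal.height_add_one_le_of_lt_of_isPrime hlt

theorem not_dvd_of_containsRegSeq3 {R : Type*} [CommRing R] [IsNoetherianRing R] [IsLocalRing R]
    {x y z : R} (hx : x ∈ IsLocalRing.maximalIdeal R) (hyz : ¬IsUnit y ∨ IsUnit z)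
    (hgrade : ContainsRegSeq3 R (Ideal.span {x, y, z})) : ¬x ∣ z := by
  intro hxz
  have hz : z ∈ IsLocalRing.maximalIdeal R := Ideal.mem_of_dvd _ hxz hx
  have hy : y ∈ IsLocalRing.maximalIdeal R := hyz.resolve_right hz
  have hspan : Ideal.span {x, y, z} = Ideal.span {x, y} :=
    le_antisymm
      (Ideal.span_le.2 <| by
        rintro _ (rfl | rfl | rfl)
        exacts [Ideal.subset_span (by simp), Ideal.subset_span (by simp),
          Ideal.mem_of_dvd _ hxz (Ideal.subset_span (by simp))])
      (Ideal.span_mono <| by grind)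
  have hne : Ideal.span {x, y} ≠ ⊤ :=
    ne_top_of_le_ne_top (IsLocalRing.maximalIdeal.isMaximal R).ne_top <|
      Ideal.span_le.2 (Set.pair_subset hx hy)
  obtain ⟨rs, hlen, hmem, hreg⟩ := hgrade
  rw [hspan] at hmem
  have := calc (3 : ℕ∞) = rs.length := by rw [hlen]; rfl
    _ ≤ (Ideal.span {x, y}).height := length_le_height_of_isWeaklyRegular hreg.1 hmem
    _ ≤ (Ideal.span {x, y}).spanFinrank := Ideal.height_le_spanFinrank _ hne
    _ ≤ ({x, y} : Set R).ncard := by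
      exact_mod_cast Submodule.spanFinrank_span_le_ncard_of_finite (Set.toFinite _)
    _ ≤ 2 := by exact_mod_cast Set.ncard_insert_le x {y} |>.trans (by simp)
  norm_num at this

theorem sup_sup_pow_eq {R : Type*} [CommRing R] (I J : Ideal R) (n : ℕ) :
    I ⊔ (I ⊔ J) ^ n = I ⊔ J ^ n := by
  have hcomap (J : Ideal R) :
      J ⊔ I = (J.map (Ideal.Quotient.mk I)).comap (Ideal.Quotient.mk I) := by
    rw [Ideal.comap_map_of_surjective' _ Ideal.Quotient.mk_surjective, Ideal.mk_ker]
  rw [sup_comm, sup_comm I (J ^ n), hcomap, hcomap, Ideal.map_pow, Ideal.map_pow, Ideal.map_sup,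
    Ideal.map_quotient_self, bot_sup_eq]

theorem adjoin_range_add_algebraMap {σ R B : Type*} [CommRing R] [CommRing B] [Algebra R B]
    (x : σ → B) (c : σ → R) :
    Algebra.adjoin R (Set.range fun s => x s + algebraMap R B (c s)) =
      Algebra.adjoin R (Set.range x) := by
  refine le_antisymm (Algebra.adjoin_le ?_) (Algebra.adjoin_le ?_) <;> rintro _ ⟨s, rfl⟩
  · exact add_mem (Algebra.subset_adjoin ⟨s, rfl⟩) (Subalgebra.algebraMap_mem _ _)
  · rw [← add_sub_cancel_right (x s) (algebraMap R B (c s))]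
    exact sub_mem (Algebra.subset_adjoin ⟨s, rfl⟩) (Subalgebra.algebraMap_mem _ _)

theorem span_range_pow_eq_adjoin {R B : Type*} [CommRing R] [CommRing B] [Algebra R B]
    {m : ℕ} (hm : m ≠ 0) {c : R} {W : B} (hW : W ^ m = algebraMap R B c) :
    Submodule.span R (Set.range fun j : Fin m => W ^ (j : ℕ)) =
      Subalgebra.toSubmodule (Algebra.adjoin R {W}) := by
  nontriviality R
  rw [← Submodule.span_range_natDegree_eq_adjoin (Polynomial.monic_X_pow_sub_C c hm) (by simp [hW]),
    Polynomial.natDegree_X_pow_sub_C]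
  congr 1
  ext y
  simp [Fin.exists_iff]

theorem span_range_pow_mul_pow_eq_adjoin {R B : Type*} [CommRing R] [CommRing B] [Algebra R B]
    {m n : ℕ} (hm : m ≠ 0) (hn : n ≠ 0) {c d : R} {W U : B} (hW : W ^ m = algebraMap R B c)
    (hU : U ^ n = algebraMap R B d) :
    Submodule.span R (Set.range fun j : Fin m × Fin n => W ^ (j.1 : ℕ) * U ^ (j.2 : ℕ)) =
      Subalgebra.toSubmodule (Algebra.adjoin R {W, U}) := by
  rw [Set.insert_eq, Algebra.adjoin_union_coe_submodule, ← span_range_pow_eq_adjoin hm hW,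
    ← span_range_pow_eq_adjoin hn hU, Submodule.span_mul_span]
  congr 1
  ext y
  simp [Set.mem_mul]

theorem injective_of_linearIndependent_pow_mul_pow {R A B : Type*} [CommRing R] [CommRing A]
    [CommRing B] [Algebra R A] [Algebra R B] {m n : ℕ} (hm : m ≠ 0) (hn : n ≠ 0) {c d : R} {W U : B}
    (hW : W ^ m = algebraMap R B c) (hU : U ^ n = algebraMap R B d)
    (hgen : Algebra.adjoin R {W, U} = ⊤) (φ : B →ₐ[R] A)
    (hli : LinearIndependent R fun j : Fin m × Fin n => φ W ^ (j.1 : ℕ) * φ U ^ (j.2 : ℕ)) :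
    Function.Injective φ := by
  have hspan := span_range_pow_mul_pow_eq_adjoin hm hn hW hU
  rw [hgen, Algebra.top_toSubmodule] at hspan
  have hdisj := Submodule.range_ker_disjoint (f := φ.toLinearMap)
    (v := fun j : Fin m × Fin n => W ^ (j.1 : ℕ) * U ^ (j.2 : ℕ)) (by
      simpa only [Function.comp_def, AlgHom.toLinearMap_apply, map_mul, map_pow] using hli)
  rw [hspan, top_disjoint, LinearMap.ker_eq_bot] at hdisj
  exact hdisj

theorem ker_le_of_linearIndependent_pow_mul_pow {R A B : Type*} [CommRing R] [CommRing A]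
    [CommRing B] [Algebra R A] [Algebra R B] {m n : ℕ} (hm : m ≠ 0) (hn : n ≠ 0) {c d : R}
    {J : Ideal B} {W U : B} (hW : W ^ m - algebraMap R B c ∈ J)
    (hU : U ^ n - algebraMap R B d ∈ J) (hgen : Algebra.adjoin R {W, U} = ⊤) (φ : B →ₐ[R] A)
    (hJφ : J ≤ RingHom.ker φ)
    (hli : LinearIndependent R fun j : Fin m × Fin n => φ W ^ (j.1 : ℕ) * φ U ^ (j.2 : ℕ)) :
    RingHom.ker φ ≤ J := by
  have hgen' : Algebra.adjoin R {Ideal.Quotient.mkₐ R J W, Ideal.Quotient.mkₐ R J U} = ⊤ := by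
    rw [← Set.image_pair, ← AlgHom.map_adjoin, hgen, Algebra.map_top, AlgHom.range_eq_top]
    exact Ideal.Quotient.mkₐ_surjective R J
  have hinj := injective_of_linearIndependent_pow_mul_pow hm hn (c := c) (d := d)
    (Ideal.Quotient.eq.2 hW) (Ideal.Quotient.eq.2 hU) hgen'
    (Ideal.Quotient.liftₐ J φ fun x hx => hJφ hx) hli
  intro x hx
  exact Ideal.Quotient.eq_zero_iff_mem.1 (hinj (hx.trans (map_zero _).symm))

section

open MvPolynomial

theorem mem_pow_idealOfVars_iff_le_order {σ R : Type*} [CommSemiring R] (k : ℕ)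
    (F : MvPolynomial σ R) :
    F ∈ idealOfVars σ R ^ k ↔ (k : ℕ∞) ≤ (F : MvPowerSeries σ R).order := by
  rw [mem_pow_idealOfVars_iff']
  refine ⟨fun h => MvPowerSeries.nat_le_order fun d hd => ?_, fun h d hd => ?_⟩
  · rw [coeff_coe, h d hd]
  · rw [← coeff_coe]
    exact MvPowerSeries.coeff_of_lt_order (lt_of_lt_of_le (by exact_mod_cast hd) h)

theorem mul_mem_pow_idealOfVars_add_iff {σ R : Type*} [CommSemiring R] [NoZeroDivisors R] {k : ℕ}
    {M : MvPolynomial σ R} (hM : M ∈ idealOfVars σ R ^ k) (hM' : M ∉ idealOfVars σ R ^ (k + 1))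
    (n : ℕ) (G : MvPolynomial σ R) :
    G * M ∈ idealOfVars σ R ^ (n + k) ↔ G ∈ idealOfVars σ R ^ n := by
  rw [mem_pow_idealOfVars_iff_le_order] at *
  have hord : (M : MvPowerSeries σ R).order = k := by
    refine le_antisymm (Order.le_of_lt_succ ?_) hM
    simpa using hM'
  rw [coe_mul, MvPowerSeries.order_mul, hord, Nat.cast_add, ENat.add_le_add_iff_right (by simp),
    mem_pow_idealOfVars_iff_le_order]

/-- The polynomial `(X + c₁)(Y + c₂)ⁱ - c₁c₂ⁱ` in the variables `X = X 0` and `Y = X 1`: the element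
`ωμⁱ - h₁h₂ⁱ` written in terms of the generators `ω - h₁` and `μ - h₂` of `P` modulo `p`. -/
noncomputable def translatedMonomial {R : Type*} [CommRing R] (c₁ c₂ : R) (i : ℕ) :
    MvPolynomial (Fin 2) R :=
  (X 0 + C c₁) * (X 1 + C c₂) ^ i - C (c₁ * c₂ ^ i)

theorem map_translatedMonomial {R T : Type*} [CommRing R] [CommRing T] (e : R →+* T)
    (c₁ c₂ : R) (i : ℕ) :
    map e (translatedMonomial c₁ c₂ i) = translatedMonomial (e c₁) (e c₂) i := by
  simp [translatedMonomial]

theorem aeval_translatedMonomial {R B : Type*} [CommRing R] [CommRing B] [Algebra R B]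
    (c₁ c₂ : R) (i : ℕ) (w u : B) :
    aeval ![w - algebraMap R B c₁, u - algebraMap R B c₂] (translatedMonomial c₁ c₂ i) =
      w * u ^ i - algebraMap R B (c₁ * c₂ ^ i) := by
  simp [translatedMonomial]

theorem translatedMonomial_mem_idealOfVars {R : Type*} [CommRing R] (c₁ c₂ : R) (i : ℕ) :
    translatedMonomial c₁ c₂ i ∈ idealOfVars (Fin 2) R := by
  have hX (j : Fin 2) : Ideal.Quotient.mk (idealOfVars (Fin 2) R) (X j) = 0 :=
    Ideal.Quotient.eq_zero_iff_mem.2 (Ideal.subset_span ⟨j, rfl⟩)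
  rw [← Ideal.Quotient.eq_zero_iff_mem]
  simp [translatedMonomial, hX]

theorem translatedMonomial_notMem_idealOfVars_sq {R : Type*} [CommRing R] {c₁ c₂ : R} {i : ℕ}
    (hc : c₂ ^ i ≠ 0) :
    translatedMonomial c₁ c₂ i ∉ idealOfVars (Fin 2) R ^ 2 := by
  -- The coefficient of `X` in the polynomial is `c₂ ^ i`, read off from its `X`-derivative.
  intro hM
  have hcoeff : coeff (0 + Finsupp.single 0 1) (translatedMonomial c₁ c₂ i) = 0 :=
    (mem_pow_idealOfVars_iff' _ _).1 hM _ (by simp)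
  have hpderiv := coeff_pderiv (i := 0) (translatedMonomial c₁ c₂ i) 0
  rw [hcoeff, zero_mul] at hpderiv
  refine hc ?_
  rw [← hpderiv]
  simp [translatedMonomial, ← constantCoeff_eq]

theorem map_idealOfVars {σ R T : Type*} [CommSemiring R] [CommSemiring T] (e : R →+* T) :
    (idealOfVars σ R).map (map e) = idealOfVars σ T := by
  rw [idealOfVars, Ideal.map_span, ← Set.range_comp]
  simp [Function.comp_def]

theorem mem_map_sup_map_pow_iff {σ R B : Type*} [CommRing R] [CommRing B] [Algebra R B]
    (I : Ideal R) {φ : MvPolynomial σ R →ₐ[R] B} (hφ : Function.Surjective φ) {n : ℕ}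
    (hker : RingHom.ker φ ≤ (idealOfVars σ (R ⧸ I) ^ n).comap (map (Ideal.Quotient.mk I)))
    (F : MvPolynomial σ R) :
    φ F ∈ I.map (algebraMap R B) ⊔ (idealOfVars σ R).map φ ^ n ↔
      map (Ideal.Quotient.mk I) F ∈ idealOfVars σ (R ⧸ I) ^ n := by
  have hcomap : (idealOfVars σ (R ⧸ I) ^ n).comap (map (Ideal.Quotient.mk I)) =
      I.map C ⊔ idealOfVars σ R ^ n := by
    rw [← map_idealOfVars (Ideal.Quotient.mk I), ← Ideal.map_pow, Ideal.comap_map_of_surjective' _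
      (map_surjective (Ideal.Quotient.mk I) Ideal.Quotient.mk_surjective), ker_map, Ideal.mk_ker,
      sup_comm]
  have hmap : I.map (algebraMap R B) ⊔ (idealOfVars σ R).map φ ^ n =
      (I.map C ⊔ idealOfVars σ R ^ n).map φ := by
    rw [Ideal.map_sup, Ideal.map_pow, ← φ.comp_algebraMap, ← Ideal.map_map]
    rfl
  rw [hmap, ← Ideal.mem_comap, Ideal.comap_map_of_surjective' _ hφ,
    sup_eq_left.2 (hker.trans_eq hcomap), ← hcomap, Ideal.mem_comap]

theorem map_mk_X_add_C_pow_sub {σ R : Type*} [CommRing R] {p : ℕ} (hp : p.Prime)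
    (hpR : ¬ IsUnit (p : R)) (s : σ) (c a : R) :
    map (Ideal.Quotient.mk (Ideal.span {(p : R)})) ((X s + C c) ^ p - C (c ^ p + a * p)) =
      X s ^ p := by
  have : Fact p.Prime := ⟨hp⟩
  have := CharP.quotient R p hpR
  simp [add_pow_char]

variable {S B : Type*} [CommRing S] [CommRing B] [Algebra S B] {p : ℕ} {h₁ h₂ a b : S} {w u : B}

theorem aeval_surjective_of_adjoin_eq_top (hgen : Algebra.adjoin S {w, u} = ⊤) :
    Function.Surjective (aeval ![w - algebraMap S B h₁, u - algebraMap S B h₂] :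
      MvPolynomial (Fin 2) S →ₐ[S] B) := by
  rw [← AlgHom.range_eq_top, ← Algebra.adjoin_range_eq_range_aeval,
    ← adjoin_range_add_algebraMap _ ![h₁, h₂], ← hgen]
  congr 1
  ext y
  simp [Fin.exists_fin_two, eq_comm]

theorem adjoin_X_add_C_eq_top (c₁ c₂ : S) :
    Algebra.adjoin S {X 0 + C c₁, X 1 + C c₂} = (⊤ : Subalgebra S (MvPolynomial (Fin 2) S)) := by
  rw [← adjoin_range_X, ← adjoin_range_add_algebraMap X ![c₁, c₂]]
  congr 1
  ext F
  simp [Fin.exists_fin_two, eq_comm, algebraMap_eq]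

theorem ker_aeval_sub_algebraMap_le (hp : p ≠ 0) {f g : S} (hw : w ^ p = algebraMap S B f)
    (hu : u ^ p = algebraMap S B g)
    (hli : LinearIndependent S fun j : Fin p × Fin p => w ^ (j.1 : ℕ) * u ^ (j.2 : ℕ)) :
    RingHom.ker (aeval ![w - algebraMap S B h₁, u - algebraMap S B h₂] :
      MvPolynomial (Fin 2) S →ₐ[S] B) ≤
      Ideal.span {(X 0 + C h₁) ^ p - C f, (X 1 + C h₂) ^ p - C g} := by
  refine ker_le_of_linearIndependent_pow_mul_pow (W := X 0 + C h₁) (U := X 1 + C h₂)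
    (c := f) (d := g) hp hp ?_ ?_ (adjoin_X_add_C_eq_top h₁ h₂) _ ?_ ?_
  · rw [algebraMap_eq]
    exact Ideal.subset_span (Set.mem_insert _ _)
  · rw [algebraMap_eq]
    exact Ideal.subset_span (Set.mem_insert_of_mem _ rfl)
  · rw [Ideal.span_le, Set.pair_subset_iff]
    simp [RingHom.mem_ker, hw, hu]
  · simpa using hli

theorem map_aeval_idealOfVars (x y : B) :
    (idealOfVars (Fin 2) S).map (aeval ![x, y] : MvPolynomial (Fin 2) S →ₐ[S] B) =
      Ideal.span {x, y} := by
  rw [idealOfVars, Ideal.map_span, ← Set.range_comp]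
  congr 1
  ext z
  simp [Fin.exists_fin_two, eq_comm]

theorem aeval_mem_span_sup_pow_iff (hp : p.Prime) (hpS : ¬IsUnit (p : S))
    (hw : w ^ p = algebraMap S B (h₁ ^ p + a * p)) (hu : u ^ p = algebraMap S B (h₂ ^ p + b * p))
    (hgen : Algebra.adjoin S {w, u} = ⊤)
    (hli : LinearIndependent S fun j : Fin p × Fin p => w ^ (j.1 : ℕ) * u ^ (j.2 : ℕ))
    {n : ℕ} (hn : n ≤ p) (F : MvPolynomial (Fin 2) S) :
    aeval ![w - algebraMap S B h₁, u - algebraMap S B h₂] F ∈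
        Ideal.span {(p : B)} ⊔
          Ideal.span {(p : B), w - algebraMap S B h₁, u - algebraMap S B h₂} ^ n ↔
      map (Ideal.Quotient.mk (Ideal.span {(p : S)})) F ∈
        idealOfVars (Fin 2) (S ⧸ Ideal.span {(p : S)}) ^ n := by
  have hXn (j : Fin 2) : (X j : MvPolynomial (Fin 2) (S ⧸ Ideal.span {(p : S)})) ^ p ∈
      idealOfVars (Fin 2) (S ⧸ Ideal.span {(p : S)}) ^ n :=
    Ideal.pow_le_pow_right hn (Ideal.pow_mem_pow (Ideal.subset_span (Set.mem_range_self j)) p)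
  have hker : RingHom.ker (aeval ![w - algebraMap S B h₁, u - algebraMap S B h₂] :
      MvPolynomial (Fin 2) S →ₐ[S] B) ≤
      (idealOfVars (Fin 2) (S ⧸ Ideal.span {(p : S)}) ^ n).comap
        (map (Ideal.Quotient.mk (Ideal.span {(p : S)}))) := by
    refine (ker_aeval_sub_algebraMap_le hp.ne_zero hw hu hli).trans <|
      Ideal.span_le.2 (Set.pair_subset ?_ ?_)
    · rw [SetLike.mem_coe, Ideal.mem_comap, map_mk_X_add_C_pow_sub hp hpS]
      exact hXn 0
    · rw [SetLike.mem_coe, Ideal.mem_comap, map_mk_X_add_C_pow_sub hp hpS]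
      exact hXn 1
  rw [← mem_map_sup_map_pow_iff _ (aeval_surjective_of_adjoin_eq_top hgen) hker,
    map_aeval_idealOfVars, Ideal.map_span, Set.image_singleton, map_natCast, Ideal.span_insert,
    sup_sup_pow_eq]

theorem mul_mem_span_sup_pow_succ_iff (hp : p.Prime) (hpS : Prime (p : S)) (hh : ¬(p : S) ∣ h₂)
    (hw : w ^ p = algebraMap S B (h₁ ^ p + a * p)) (hu : u ^ p = algebraMap S B (h₂ ^ p + b * p))
    (hgen : Algebra.adjoin S {w, u} = ⊤)
    (hli : LinearIndependent S fun j : Fin p × Fin p => w ^ (j.1 : ℕ) * u ^ (j.2 : ℕ))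
    (i : ℕ) {n : ℕ} (hn : n + 1 ≤ p) (x : B) :
    x * (w * u ^ i - algebraMap S B (h₁ * h₂ ^ i)) ∈ Ideal.span {(p : B)} ⊔
          Ideal.span {(p : B), w - algebraMap S B h₁, u - algebraMap S B h₂} ^ (n + 1) ↔
      x ∈ Ideal.span {(p : B)} ⊔
          Ideal.span {(p : B), w - algebraMap S B h₁, u - algebraMap S B h₂} ^ n := by
  obtain ⟨F, rfl⟩ := aeval_surjective_of_adjoin_eq_top (h₁ := h₁) (h₂ := h₂) hgen x
  have : (Ideal.span {(p : S)}).IsPrime := (Ideal.span_singleton_prime hpS.ne_zero).2 hpS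
  have hh₂ : Ideal.Quotient.mk (Ideal.span {(p : S)}) h₂ ≠ 0 := by
    rwa [Ne, Ideal.Quotient.eq_zero_iff_mem, Ideal.mem_span_singleton]
  rw [← aeval_translatedMonomial, ← map_mul,
    aeval_mem_span_sup_pow_iff hp hpS.not_isUnit hw hu hgen hli hn,
    aeval_mem_span_sup_pow_iff hp hpS.not_isUnit hw hu hgen hli (Nat.le_of_succ_le hn),
    map_mul, map_translatedMonomial]
  exact mul_mem_pow_idealOfVars_add_iff (by simpa using translatedMonomial_mem_idealOfVars _ _ i)
    (translatedMonomial_notMem_idealOfVars_sq (pow_ne_zero i hh₂)) n _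

end

theorem linearIndependent_pow_mul_pow_of_finrank_eq {L K : Type*} [Field L] [CommRing K]
    [Algebra L K] {m n : ℕ} (hm : m ≠ 0) (hn : n ≠ 0) {c d : L} {ω μ : K}
    (hω : ω ^ m = algebraMap L K c) (hμ : μ ^ n = algebraMap L K d)
    (hgen : Algebra.adjoin L {ω, μ} = ⊤) (hdeg : Module.finrank L K = m * n) :
    LinearIndependent L fun j : Fin m × Fin n => ω ^ (j.1 : ℕ) * μ ^ (j.2 : ℕ) := by
  refine linearIndependent_of_top_le_span_of_card_eq_finrank ?_ (by simp [hdeg])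
  rw [span_range_pow_mul_pow_eq_adjoin hm hn hω hμ, hgen, Algebra.top_toSubmodule]

theorem adjoin_omegaA_muA {S K : Type*} [CommRing S] [Field K] [Algebra S K] (ω μ : K) :
    Algebra.adjoin S {omegaA (S := S) ω μ, muA ω μ} = ⊤ := by
  rw [← Algebra.adjoin_adjoin_coe_preimage (R := S) (s := {ω, μ})]
  congr 1
  ext y
  simp only [Set.mem_insert_iff, Set.mem_singleton_iff, Set.mem_preimage,
    Subtype.ext_iff, omegaA, muA]

theorem stmt18_general
    {S : Type*} [CommRing S]
    {L : Type*} [Field L] [Algebra S L] [IsFractionRing S L]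
    {K : Type*} [Field K] [Algebra L K] [Algebra S K] [IsScalarTower S L K]
    {p : ℕ} (hp : p.Prime) (hpS : Prime (p : S))
    {f g h₁ h₂ a b : S} (hf : f = h₁ ^ p + a * p) (hg : g = h₂ ^ p + b * p)
    (hpg : ¬(p : S) ∣ g)
    {ω μ : K} (hω : ω ^ p = algebraMap S K f) (hμ : μ ^ p = algebraMap S K g)
    (hKgen : Algebra.adjoin L {ω, μ} = ⊤) (hdeg : Module.finrank L K = p ^ 2)
    (i : ℕ) {n : ℕ} (hn : 1 ≤ n) (hnp : n ≤ p) :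
    Submodule.colon
        (Ideal.span {(p : Algebra.adjoin S {ω, μ})} + Pid p ω μ h₁ h₂ ^ n)
        (Ideal.span {omegaA ω μ * muA ω μ ^ i -
            algebraMap S (Algebra.adjoin S {ω, μ}) (h₁ * h₂ ^ i)} :
          Set (Algebra.adjoin S {ω, μ})) =
      Ideal.span {(p : Algebra.adjoin S {ω, μ})} + Pid p ω μ h₁ h₂ ^ (n - 1) := by
  subst hf hg
  have hph₂ : ¬(p : S) ∣ h₂ := fun h =>
    hpg (dvd_add (dvd_pow h hp.ne_zero) (Dvd.intro_left _ rfl))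
  have hliK : LinearIndependent S fun j : Fin p × Fin p => ω ^ (j.1 : ℕ) * μ ^ (j.2 : ℕ) :=
    (LinearIndependent.iff_fractionRing S L).2 <|
      linearIndependent_pow_mul_pow_of_finrank_eq hp.ne_zero hp.ne_zero
        (hω.trans (IsScalarTower.algebraMap_apply S L K _))
        (hμ.trans (IsScalarTower.algebraMap_apply S L K _)) hKgen (hdeg.trans (sq p))
  have hliA : LinearIndependent S fun j : Fin p × Fin p =>
      omegaA (S := S) ω μ ^ (j.1 : ℕ) * muA ω μ ^ (j.2 : ℕ) :=
    LinearIndependent.of_comp (Algebra.adjoin S {ω, μ}).val.toLinearMap hliK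
  obtain ⟨k, rfl⟩ := Nat.exists_eq_add_of_le' hn
  ext x
  rw [Ideal.mem_colon_span_singleton]
  exact mul_mem_span_sup_pow_succ_iff hp hpS hph₂ (Subtype.ext hω) (Subtype.ext hμ)
    (adjoin_omegaA_muA ω μ) hliA i hnp x

theorem stmt18
    {S : Type*} [CommRing S] [IsDomain S] [IsNoetherianRing S] [IsLocalRing S]
    [IsIntegrallyClosed S]
    {L : Type*} [Field L] [CharZero L] [Algebra S L] [IsFractionRing S L]
    {K : Type*} [Field K] [Algebra L K] [Algebra S K] [IsScalarTower S L K]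
    {p : ℕ} (hp : p.Prime) (hp3 : 3 ≤ p) (hpS : Prime ((p : ℕ) : S))
    (hSmodp : IsIntegrallyClosed (S ⧸ Ideal.span {((p : ℕ) : S)}))
    (hreg : ∃ s : Finset S, Ideal.span (s : Set S) = IsLocalRing.maximalIdeal S ∧
      (s.card : WithBot ℕ∞) = ringKrullDim S)
    (hmix : ((p : ℕ) : S) ∈ IsLocalRing.maximalIdeal S ∧
      ((p : ℕ) : S) ∉ IsLocalRing.maximalIdeal S ^ 2)
    {f g h₁ h₂ a b : S} (hf : f = h₁ ^ p + a * (p : S)) (hg : g = h₂ ^ p + b * (p : S))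
    (hfg : (¬IsUnit f ∧ ¬IsUnit g ∧ PaperSquarefree f ∧ PaperSquarefree g ∧ SatisfiesA1 f g) ∨
      (IsUnit f ∧ IsUnit g ∧ (∀ x : S, x ^ p ≠ f) ∧ (∀ x : S, x ^ p ≠ g)))
    {ω μ : K} (hω : ω ^ p = algebraMap S K f) (hμ : μ ^ p = algebraMap S K g)
    (hKgen : Algebra.adjoin L ({ω, μ} : Set K) = ⊤)
    (hdeg : Module.finrank L K = p ^ 2)
    (hicω : IsIntegrallyClosed (Algebra.adjoin S ({ω} : Set K)))
    (hicμ : IsIntegrallyClosed (Algebra.adjoin S ({μ} : Set K)))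
    (hh₁ : h₁ ≠ 0) (hh₂ : h₂ ≠ 0)
    (i : ℕ) (hi1 : 1 ≤ i) (hi2 : i ≤ p - 1)
    (hfgi : ∃ x y : S, f * g ^ i = x ^ p + y * (p : S) ^ 2)
    (hgrade : ContainsRegSeq3 S (Ideal.span {((p : ℕ) : S), f, g})) :
    Submodule.colon
        ((Ideal.span {(p : Algebra.adjoin S ({ω, μ} : Set K))} + Pid p ω μ h₁ h₂ ^ p : Ideal (Algebra.adjoin S ({ω, μ} : Set K))) :
          Submodule (Algebra.adjoin S ({ω, μ} : Set K)) (Algebra.adjoin S ({ω, μ} : Set K)))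
        ((Ideal.span {omegaA ω μ * muA ω μ ^ i - algebraMap S _ (h₁ * h₂ ^ i)} : Ideal (Algebra.adjoin S ({ω, μ} : Set K))) :
          Set (Algebra.adjoin S ({ω, μ} : Set K))) =
      Ideal.span {(p : Algebra.adjoin S ({ω, μ} : Set K))} + Pid p ω μ h₁ h₂ ^ (p - 1) :=
  stmt18_general hp hpS hf hg
    (not_dvd_of_containsRegSeq3 hmix.1 (hfg.imp (·.1) (·.2.1)) hgrade)
    hω hμ hKgen hdeg i hp.one_le le_rfl
end
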